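/- Let β > 1 be a countable ordinal and let n, m be positive integers satisfying one of: (a) n = 1 and m ≠ 2; (b) n = 2 and 2 ≤ m and m ≠ 4; (c) n = 4 and m ≠ 2; (d) n = 3 or n > 4 (with m arbitrary). Then there exists a unimodal, locally eventually onto map f : [0,1] → [0,1] with critical point c such that ω(c) ≃ ω²·n + 1 and 𝓘 ≃ ω^{β+1}·m + 1. -/

import Mathlib

open Set Filter

noncomputable section

/-- The unit interval `[0,1]` as a subtype of `ℝ`. -/
abbrev unitI : Type := Set.Icc (0 : ℝ) 1

/-- `f : [0,1] → [0,1]` is unimodal with critical point `c`: continuous, `c ∈ (0,1)`,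
strictly increasing on `[0,c]` and strictly decreasing on `[c,1]`. -/
def Unimodal (f : unitI → unitI) (c : unitI) : Prop :=
  Continuous f ∧ 0 < (c : ℝ) ∧ (c : ℝ) < 1 ∧
    StrictMonoOn f {x : unitI | x ≤ c} ∧ StrictAntiOn f {x : unitI | c ≤ x}

/-- `f` is locally eventually onto: for every `ε > 0` and every `x`, some iterate of `f`
maps the `ε`-ball about `x` (in `[0,1]`) onto all of `[0,1]`. -/
def LEO (f : unitI → unitI) : Prop :=
  ∀ ε : ℝ, 0 < ε → ∀ x : unitI, ∃ N : ℕ, f^[N] '' Metric.ball x ε = Set.univ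

/-- The omega-limit set of `c` under `f`: `⋂ₙ closure {fᵐ(c) : m ≥ n}`. -/
def omegaLimitSet (f : unitI → unitI) (c : unitI) : Set unitI :=
  ⋂ n : ℕ, closure {y : unitI | ∃ m : ℕ, n ≤ m ∧ f^[m] c = y}

/-- The inverse limit of `f`, as a subset of the product `ℕ → [0,1]`
(the subspace topology coincides with the topology induced by the usual metric). -/
def InvLim (f : unitI → unitI) : Set (ℕ → unitI) :=
  {x | ∀ i : ℕ, f (x (i + 1)) = x i}

/-- The set of inhomogeneities: points of the inverse limit all of whose
coordinates lie in the postcritical omega-limit set. -/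
def Inhom (f : unitI → unitI) (c : unitI) : Set (InvLim f) :=
  {x | ∀ n : ℕ, (x : ℕ → unitI) n ∈ omegaLimitSet f c}

/-- The ordinal space `{ξ : ξ ≤ o}` with its order topology. -/
def OrdSpace (o : Ordinal) : Type _ := Set.Iic o

instance (o : Ordinal) : LinearOrder (OrdSpace o) :=
  inferInstanceAs (LinearOrder (Set.Iic o))

instance (o : Ordinal) : TopologicalSpace (OrdSpace o) := Preorder.topology (OrdSpace o)

instance (o : Ordinal) : OrderTopology (OrdSpace o) := ⟨rfl⟩

/-- `X ≃ ω^γ·k + 1` in the sense of the paper: `X` is homeomorphic to the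
ordinal space `{ξ : ξ ≤ o}` with its order topology. -/
def HomeoOrd (X : Type*) [TopologicalSpace X] (o : Ordinal) : Prop :=
  Nonempty (X ≃ₜ OrdSpace o)

/-!
The map is a tent map whose kneading sequence is designed symbolically, with `true` read as `+` and
`false` as `-`.

*Realisation.* If `e` is a sign sequence with a `+` in every window of length four, the sequence
`+ - - - - - +` followed by `e` dominates all admissible sequences by a uniform gap, so by the
intermediate value theorem it is the itinerary of the critical value of some tent map of slope
between `5 / 3` and `2`; such a map is locally eventually onto. The gap keeps `ω(c)` away from the
critical point, so that itineraries identify the set of inhomogeneities with the two-sided shift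
space `J` of the words occurring infinitely often in `e`, and `ω(c)` with the space of right halves
of `J` (`realization`).

*The symbolic space.* A `Sys` consists of two periodic orbits `A` and `X` without `- - -` and of a
tree on `ℕ` with root `0`, whose nodes carry one of the orbits and a rank that decreases away from
the root, the root having rank `β`. A node `v` is represented by a block of length `v * D` of its
orbit; its right end `Q v` consists of the blocks on the path from `v` to the root, separated by
markers `+ - - - +`, followed by `A` forever. The points of `J` are the shifts of `A`, a marker,
`Q v`, together with all limits of these. As the children of a node are arbitrarily long, the point
of `v` is a limit of the points of its children, and its Cantor–Bendixson rank is the rank of `v`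
(`isolate`, `approx`). The shifts of `A` therefore have rank `β + 1`, and those of `X` have rank
`κ + 1`, where `κ` is the supremum of the successors of the ranks of nodes carrying `X`. The rank
criterion `homeoOrd_of_rank` turns this into `J ≃ ω ^ (β + 1) * k + 1`, where `k` is the length of
`A`, plus that of `X` if `κ = β`.

*Right halves.* The right half of a point with at least two markers to the right of the origin is
isolated up to points with the same right half, since the length of a block between two markers
determines the node. Hence the second derived set of the space of right halves
consists of periodic sequences: always those of `A`, and those of `X` exactly when nodes carrying
`X` occur below infinitely many parents (`flag`), in which case `X`, a marker, `A` is also a limit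
of other right halves (`homeo_rightHalf`).

*Counting.* If `n < m`, take `A` of length `n` and `X` of length `m - n`, with `κ = β` and without
`flag`; if `n > m`, take `A` of length `m` and `X` of length `n - m`, with `κ = 1` and `flag`; if
`n = m`, take `κ = 1` without `flag`. Two distinct orbits of the required lengths exist unless both
lengths are `1` or both are `2`, which is what the hypothesis on `n` and `m` excludes.
-/

/-! ### Countable compact spaces from a rank function -/

lemma exists_min_of_exists {P : ℕ → Prop} (h : ∃ n, P n) : ∃ N, P N ∧ ∀ k < N, ¬ P k := by
  classical
  exact ⟨Nat.find h, Nat.find_spec h, fun k hk => Nat.find_min h hk⟩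

section RankCriterion

open Topology Ordinal

variable {X : Type*} [TopologicalSpace X]

/-- `OrdChart U a`: the set `U` is parametrised by the ordinal interval `(0, a]`, through a map
defined on the whole space that is continuous at each point of `U` and injective on `U`. Half-open
intervals are used because they concatenate: `(0, a + b]` is `(0, a]` followed by a copy
of `(0, b]`. -/
def OrdChart (U : Set X) (a : Ordinal) : Prop :=
  ∃ Φ : X → Ordinal, (∀ x ∈ U, ContinuousAt Φ x) ∧ InjOn Φ U ∧ Φ '' U = Ioc 0 a

lemma OrdChart.empty : OrdChart (∅ : Set X) 0 :=
  ⟨fun _ => 0, by simp, by simp, by simp⟩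

lemma OrdChart.union {U V : Set X} (hU : IsClopen U) (hV : IsClopen V) (hUV : Disjoint U V)
    {a b : Ordinal} (h1 : OrdChart U a) (h2 : OrdChart V b) : OrdChart (U ∪ V) (a + b) := by
  classical
  obtain ⟨f, fc, fi, fim⟩ := h1
  obtain ⟨g, gc, gi, gim⟩ := h2
  have hVU : ∀ x ∈ V, x ∉ U := fun x hx hx' => (Set.disjoint_left.1 hUV hx' hx)
  have hf : ∀ x ∈ U, 0 < f x ∧ f x ≤ a := fun x hx => by
    have : f x ∈ f '' U := mem_image_of_mem _ hx
    rw [fim] at this; exact this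
  have hg : ∀ x ∈ V, 0 < g x ∧ g x ≤ b := fun x hx => by
    have : g x ∈ g '' V := mem_image_of_mem _ hx
    rw [gim] at this; exact this
  have hgt : ∀ x ∈ V, a < a + g x := fun x hx => by
    simpa using (add_lt_add_iff_left a).2 (hg x hx).1
  refine ⟨fun x => if x ∈ U then f x else a + g x, ?_, ?_, ?_⟩
  · rintro x (hx | hx)
    · refine (fc x hx).congr ?_
      filter_upwards [hU.isOpen.mem_nhds hx] with y hy
      simp [hy]
    · have hc : ContinuousAt (fun y => a + g y) x :=
        (isNormal_add_right a).continuous.continuousAt.comp (gc x hx)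
      refine hc.congr ?_
      filter_upwards [hV.isOpen.mem_nhds hx] with y hy
      simp [hVU y hy]
  · rintro x (hx | hx) y (hy | hy) hxy
    · simp only [hx, hy, if_true] at hxy; exact fi hx hy hxy
    · simp only [hx, hVU y hy, if_true, if_false] at hxy
      exact absurd (hxy ▸ (hf x hx).2) (not_le.2 (hgt y hy))
    · simp only [hy, hVU x hx, if_true, if_false] at hxy
      exact absurd (hxy ▸ (hf y hy).2) (not_le.2 (hgt x hx))
    · simp only [hVU x hx, hVU y hy, if_false] at hxy
      exact gi hx hy (add_left_cancel hxy)
  · ext o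
    constructor
    · rintro ⟨x, hx | hx, rfl⟩
      · simp only [hx, if_true]
        exact ⟨(hf x hx).1, (hf x hx).2.trans (le_self_add)⟩
      · simp only [hVU x hx, if_false]
        exact ⟨zero_le.trans_lt (hgt x hx), (add_le_add_iff_left a).2 (hg x hx).2⟩
    · rintro ⟨h0, h1⟩
      rcases le_or_gt o a with h | h
      · have : o ∈ f '' U := by rw [fim]; exact ⟨h0, h⟩
        obtain ⟨x, hx, rfl⟩ := this
        exact ⟨x, Or.inl hx, by simp [hx]⟩
      · obtain ⟨d, rfl⟩ := exists_add_of_le h.le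
        have : d ∈ g '' V := by
          rw [gim]
          refine ⟨?_, (add_le_add_iff_left a).1 h1⟩
          rcases eq_zero_or_pos d with rfl | h
          · simp at h
          · exact h
        obtain ⟨x, hx, rfl⟩ := this
        exact ⟨x, Or.inr hx, by simp [hVU x hx]⟩

variable [CompactSpace X]

/-- On a nonempty clopen set the rank attains a maximum, at finitely many points. -/
lemma exists_finite_top {r : X → Ordinal} (h1 : ∀ x, ∃ U ∈ 𝓝 x, ∀ y ∈ U, y ≠ x → r y < r x)
    (V : Set X) (hV : IsClopen V) (hne : V.Nonempty) :
    ∃ δ, ∃ M : Finset X, M.Nonempty ∧ (∀ y ∈ V, r y ≤ δ) ∧ ∀ y, y ∈ M ↔ y ∈ V ∧ r y = δ := by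
  classical
  choose U hU hUr using h1
  obtain ⟨t, htV, ht⟩ := hV.isClosed.isCompact.elim_nhds_subcover U fun x _ => hU x
  have htne : t.Nonempty := by
    obtain ⟨x, hx⟩ := hne
    obtain ⟨y, hy, -⟩ := mem_iUnion₂.1 (ht hx)
    exact ⟨y, hy⟩
  obtain ⟨z, hz, hzmax⟩ := t.exists_max_image r htne
  have key : ∀ y ∈ V, ∃ w ∈ t, y = w ∨ r y < r w := fun y hy => by
    obtain ⟨w, hw, hyw⟩ := mem_iUnion₂.1 (ht hy)
    by_cases h : y = w
    · exact ⟨w, hw, Or.inl h⟩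
    · exact ⟨w, hw, Or.inr (hUr w y hyw h)⟩
  refine ⟨r z, t.filter fun y => r y = r z, ⟨z, by simp [hz]⟩, ?_, ?_⟩
  · intro y hy
    obtain ⟨w, hw, rfl | h⟩ := key y hy
    · exact hzmax _ hw
    · exact h.le.trans (hzmax _ hw)
  · intro y
    simp only [Finset.mem_filter]
    refine ⟨fun h => ⟨htV y h.1, h.2⟩, fun h => ⟨?_, h.2⟩⟩
    obtain ⟨w, hw, rfl | h'⟩ := key y h.1
    · exact hw
    · exact absurd h.2 (h'.trans_le (hzmax _ hw)).ne

variable [T2Space X] [TotallyDisconnectedSpace X]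

/-- A clopen set is charted by `ω ^ δ * k` as soon as its points of maximal rank `δ` are `k` in
number and every clopen set with a single such point is charted by `ω ^ δ`. -/
lemma ordChart_of_finite_top {r : X → Ordinal} (h1 : ∀ x, ∃ U ∈ 𝓝 x, ∀ y ∈ U, y ≠ x → r y < r x)
    (δ : Ordinal)
    (hδ : ∀ x, r x = δ → ∀ U : Set X, IsClopen U → x ∈ U → (∀ y ∈ U, y ≠ x → r y < δ) →
      OrdChart U (ω ^ δ)) :
    ∀ (M : Finset X) (V : Set X), M.Nonempty → IsClopen V → (∀ y ∈ V, r y ≤ δ) →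
      (∀ y, y ∈ M ↔ y ∈ V ∧ r y = δ) → OrdChart V (ω ^ δ * (M.card : Ordinal)) := by
  classical
  intro M
  induction M using Finset.induction_on with
  | empty => intro V h; exact absurd h (by simp)
  | insert x M hx ih =>
    intro V _ hV hle hM
    have hxV : x ∈ V ∧ r x = δ := (hM x).1 (Finset.mem_insert_self _ _)
    rcases M.eq_empty_or_nonempty with rfl | hne
    · simp only [insert_empty_eq, Finset.card_singleton, Nat.cast_one, mul_one]
      refine hδ x hxV.2 V hV hxV.1 fun y hy hyx => lt_of_le_of_ne (hle y hy) fun h => hyx ?_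
      simpa using (hM y).2 ⟨hy, h⟩
    · obtain ⟨U, hU, hU2⟩ := h1 x
      obtain ⟨O, hOU, hO, hxO⟩ := mem_nhds_iff.1 hU
      obtain ⟨W, hW, hxW, hWO⟩ := compact_exists_isClopen_in_isOpen (hO.inter hV.isOpen)
        ⟨hxO, hxV.1⟩
      have hWlt : ∀ y ∈ W, y ≠ x → r y < δ := fun y hy hyx =>
        hxV.2 ▸ hU2 y (hOU (hWO hy).1) hyx
      have e1 : OrdChart W (ω ^ δ) := hδ x hxV.2 W hW hxW hWlt
      have e2 : OrdChart (V \ W) (ω ^ δ * (M.card : Ordinal)) := by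
        refine ih (V \ W) hne (hV.diff hW) (fun y hy => hle y hy.1) fun y => ?_
        constructor
        · intro hy
          have h := (hM y).1 (Finset.mem_insert_of_mem hy)
          refine ⟨⟨h.1, fun hyW => ?_⟩, h.2⟩
          have hyx : y ≠ x := fun h => hx (h ▸ hy)
          exact absurd h.2 (hWlt y hyW hyx).ne
        · rintro ⟨⟨hyV, hyW⟩, hr⟩
          rcases Finset.mem_insert.1 ((hM y).2 ⟨hyV, hr⟩) with rfl | h
          · exact absurd hxW hyW
          · exact h
      have := OrdChart.union (hV.diff hW) hW disjoint_sdiff_left e2 e1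
      rw [Set.sdiff_union_of_subset fun y hy => (hWO hy).2] at this
      rw [Finset.card_insert_of_notMem hx, Nat.cast_add_one, mul_add_one]
      exact this

variable [FirstCountableTopology X]

lemma exists_clopen_antitone (x : X) (U : Set X) (hU : IsClopen U) (hx : x ∈ U) :
    ∃ W : ℕ → Set X, W 0 = U ∧ (∀ n, IsClopen (W n)) ∧ (∀ n, x ∈ W n) ∧
      (∀ n, W (n + 1) ⊆ W n) ∧ ∀ N ∈ 𝓝 x, ∃ n, W n ⊆ N := by
  obtain ⟨B, hB⟩ := (𝓝 x).exists_antitone_basis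
  have step : ∀ (n : ℕ) (A : {A : Set X // IsClopen A ∧ x ∈ A}),
      ∃ A' : {A : Set X // IsClopen A ∧ x ∈ A}, A'.1 ⊆ A.1 ∧ A'.1 ⊆ B n := by
    rintro n ⟨A, hA, hxA⟩
    obtain ⟨O, hOB, hO, hxO⟩ := mem_nhds_iff.1 (hB.toHasBasis.mem_of_mem (i := n) trivial)
    obtain ⟨C, hC, hxC, hCO⟩ := compact_exists_isClopen_in_isOpen (hO.inter hA.isOpen) ⟨hxO, hxA⟩
    exact ⟨⟨C, hC, hxC⟩, fun y hy => (hCO hy).2, fun y hy => hOB (hCO hy).1⟩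
  choose F hF1 hF2 using step
  let W : ℕ → {A : Set X // IsClopen A ∧ x ∈ A} := fun n => Nat.rec ⟨U, hU, hx⟩ (fun n A => F n A) n
  refine ⟨fun n => (W n).1, rfl, fun n => (W n).2.1, fun n => (W n).2.2,
    fun n => hF1 n (W n), fun N hN => ?_⟩
  obtain ⟨n, -, hn⟩ := hB.toHasBasis.mem_iff.1 hN
  exact ⟨n + 1, (hF2 n (W n)).trans hn⟩

/-- A clopen set whose rank is maximal at a single point `x` is charted by `ω ^ r x`: it is cut into
clopen shells accumulating at `x`, and the charts of the shells are concatenated. -/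
lemma ordChart_single {r : X → Ordinal} (h1 : ∀ x, ∃ U ∈ 𝓝 x, ∀ y ∈ U, y ≠ x → r y < r x)
    (h2 : ∀ x, ∀ α < r x, ∀ U ∈ 𝓝 x, ∃ y ∈ U, y ≠ x ∧ α ≤ r y) (γ : Ordinal) :
    ∀ x, r x = γ → ∀ U : Set X, IsClopen U → x ∈ U → (∀ y ∈ U, y ≠ x → r y < γ) →
      OrdChart U (ω ^ γ) := by
  classical
  induction γ using WellFoundedLT.induction with
  | ind γ IH =>
  intro x hxγ U hU hxU hlt
  obtain ⟨W, hW0, hWc, hxW, hWs, hWb⟩ := exists_clopen_antitone x U hU hxU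
  have hWanti : Antitone W := antitone_nat_of_succ_le hWs
  have hshell : ∀ n, ∃ a < ω ^ γ, OrdChart (W n \ W (n + 1)) a ∧
      ∀ y ∈ W n \ W (n + 1), ω ^ r y ≤ a := by
    intro n
    have hVlt : ∀ y ∈ W n \ W (n + 1), r y < γ := fun y hy =>
      hlt y (hW0 ▸ hWanti (Nat.zero_le n) hy.1) fun h => hy.2 (h ▸ hxW _)
    rcases (W n \ W (n + 1)).eq_empty_or_nonempty with h | h
    · rw [h]
      exact ⟨0, opow_pos _ omega0_pos, OrdChart.empty, by simp⟩
    · have hcl : IsClopen (W n \ W (n + 1)) := (hWc n).diff (hWc (n + 1))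
      obtain ⟨δ, M, hMne, hle, hM⟩ := exists_finite_top h1 _ hcl h
      have hδγ : δ < γ := by
        obtain ⟨z, hz⟩ := hMne
        have := (hM z).1 hz
        exact this.2 ▸ hVlt z this.1
      refine ⟨ω ^ δ * (M.card : Ordinal), ?_,
        ordChart_of_finite_top h1 δ (IH δ hδγ) M _ hMne hcl hle hM, ?_⟩
      · exact (lt_omega0_opow (zero_le.trans_lt hδγ).ne').2
          ⟨δ, hδγ, M.card + 1, by
            rw [Nat.cast_add_one, mul_add_one]
            simpa using opow_pos δ omega0_pos⟩
      · intro y hy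
        refine (opow_le_opow_right omega0_pos (hle y hy)).trans ?_
        have : (1 : Ordinal) ≤ M.card := by exact_mod_cast hMne.card_pos
        simpa using mul_le_mul_right this (ω ^ δ)
  choose a ha hchart hrk using hshell
  choose Φ hΦc hΦi hΦim using hchart
  let s : ℕ → Ordinal := fun n => Nat.rec 0 (fun n b => b + a n) n
  have hs : ∀ n, s (n + 1) = s n + a n := fun n => rfl
  have hsmono : Monotone s := monotone_nat_of_le_succ fun n => by rw [hs]; exact le_self_add
  have hslt : ∀ n, s n < ω ^ γ := by
    intro n
    induction n with
    | zero => exact opow_pos _ omega0_pos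
    | succ n ih => rw [hs]; exact isPrincipal_add_omega0_opow γ ih (ha n)
  have hex : ∀ y ∈ U, y ≠ x → ∃ n, y ∈ W n \ W (n + 1) := by
    intro y hy hyx
    have : ∃ n, y ∉ W n := by
      obtain ⟨n, hn⟩ := hWb _ (isOpen_compl_singleton.mem_nhds (Ne.symm hyx))
      exact ⟨n, fun h => hn h rfl⟩
    have h0 : Nat.find this ≠ 0 := fun h => by
      have := Nat.find_spec this
      rw [h, hW0] at this
      exact this hy
    obtain ⟨k, hk⟩ := Nat.exists_eq_succ_of_ne_zero h0
    refine ⟨k, ?_, ?_⟩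
    · have := Nat.find_min this (m := k) (by omega)
      simpa using this
    · have := Nat.find_spec this
      rw [hk] at this
      exact this
  have huniq : ∀ y m n, y ∈ W m \ W (m + 1) → y ∈ W n \ W (n + 1) → m = n := by
    intro y m n hm hn
    rcases lt_trichotomy m n with h | h | h
    · exact absurd (hWanti h hn.1) hm.2
    · exact h
    · exact absurd (hWanti h hm.1) hn.2
  have hcof : ∀ o < ω ^ γ, ∃ n, o ≤ s n := by
    intro o ho
    rcases eq_or_ne γ 0 with rfl | hγ
    · refine ⟨0, ?_⟩
      simp only [opow_zero, Order.lt_one_iff] at ho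
      simp [ho]
    · obtain ⟨c, hc, j, hj⟩ := (lt_omega0_opow hγ).1 ho
      suffices ∀ j : ℕ, ∃ n, ω ^ c * (j : Ordinal) ≤ s n by
        obtain ⟨n, hn⟩ := this j
        exact ⟨n, hj.le.trans hn⟩
      intro j
      induction j with
      | zero => exact ⟨0, by simp⟩
      | succ j ih =>
        obtain ⟨n, hn⟩ := ih
        obtain ⟨y, hy, hyx, hcy⟩ := h2 x c (hxγ ▸ hc) (W n) ((hWc n).isOpen.mem_nhds (hxW n))
        obtain ⟨m, hm⟩ := hex y (hW0 ▸ hWanti (Nat.zero_le n) hy) hyx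
        have hnm : n ≤ m := by
          by_contra h
          exact hm.2 (hWanti (by omega) hy)
        refine ⟨m + 1, ?_⟩
        rw [hs, Nat.cast_add_one, mul_add_one]
        exact add_le_add (hn.trans (hsmono hnm))
          ((opow_le_opow_right omega0_pos hcy).trans (hrk m y hm))
  let Ψ : X → Ordinal := fun y =>
    if h : ∃ n, y ∈ W n \ W (n + 1) then s h.choose + Φ h.choose y else ω ^ γ
  have hΨx : Ψ x = ω ^ γ := by
    have : ¬ ∃ n, x ∈ W n \ W (n + 1) := fun ⟨n, hn⟩ => hn.2 (hxW _)
    simp only [Ψ, dif_neg this]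
  have hΨ : ∀ n, ∀ y ∈ W n \ W (n + 1), Ψ y = s n + Φ n y := by
    intro n y hy
    have h : ∃ n, y ∈ W n \ W (n + 1) := ⟨n, hy⟩
    have e : h.choose = n := huniq y _ _ h.choose_spec hy
    simp only [Ψ, dif_pos h, e]
  have hΦr : ∀ n, ∀ y ∈ W n \ W (n + 1), 0 < Φ n y ∧ Φ n y ≤ a n := fun n y hy => by
    have : Φ n y ∈ Φ n '' (W n \ W (n + 1)) := mem_image_of_mem _ hy
    rw [hΦim] at this
    exact this
  have hΨr : ∀ n, ∀ y ∈ W n \ W (n + 1), s n < Ψ y ∧ Ψ y ≤ s (n + 1) := fun n y hy => by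
    rw [hΨ n y hy, hs]
    exact ⟨by simpa using (add_lt_add_iff_left (s n)).2 (hΦr n y hy).1,
      (add_le_add_iff_left (s n)).2 (hΦr n y hy).2⟩
  refine ⟨Ψ, ?_, ?_, ?_⟩
  · intro y hy
    by_cases hyx : y = x
    · subst hyx
      rw [ContinuousAt, hΨx]
      refine tendsto_order.2 ⟨fun o ho => ?_, fun o ho => ?_⟩
      · obtain ⟨n, hn⟩ := hcof o ho
        filter_upwards [(hWc n).isOpen.mem_nhds (hxW n)] with z hz
        by_cases hzy : z = y
        · rw [hzy, hΨx]; exact ho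
        · obtain ⟨m, hm⟩ := hex z (hW0 ▸ hWanti (Nat.zero_le n) hz) hzy
          have hnm : n ≤ m := by
            by_contra h
            exact hm.2 (hWanti (by omega) hz)
          exact (hn.trans (hsmono hnm)).trans_lt (hΨr m z hm).1
      · filter_upwards [hU.isOpen.mem_nhds hy] with z hz
        by_cases hzy : z = y
        · rw [hzy, hΨx]; exact ho
        · obtain ⟨m, hm⟩ := hex z hz hzy
          exact (hΨr m z hm).2.trans_lt ((hslt (m + 1)).trans ho)
    · obtain ⟨n, hn⟩ := hex y hy hyx
      have hc : ContinuousAt (fun z => s n + Φ n z) y :=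
        (isNormal_add_right (s n)).continuous.continuousAt.comp (hΦc n y hn)
      refine hc.congr ?_
      filter_upwards [((hWc n).diff (hWc (n + 1))).isOpen.mem_nhds hn] with z hz
      exact (hΨ n z hz).symm
  · intro y hy z hz hyz
    have hne : ∀ w ∈ U, w ≠ x → Ψ w ≠ ω ^ γ := fun w hw hwx => by
      obtain ⟨m, hm⟩ := hex w hw hwx
      exact ((hΨr m w hm).2.trans_lt (hslt (m + 1))).ne
    by_cases hyx : y = x
    · by_contra h
      subst hyx
      exact hne z hz (Ne.symm h) (hyz ▸ hΨx)
    by_cases hzx : z = x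
    · subst hzx
      exact absurd (hyz.trans hΨx) (hne y hy hyx)
    obtain ⟨m, hm⟩ := hex y hy hyx
    obtain ⟨n, hn⟩ := hex z hz hzx
    have hmn : m = n := by
      rcases lt_trichotomy m n with h | h | h
      · exact absurd hyz (((hΨr m y hm).2.trans (hsmono h)).trans_lt (hΨr n z hn).1).ne
      · exact h
      · exact absurd hyz.symm (((hΨr n z hn).2.trans (hsmono h)).trans_lt (hΨr m y hm).1).ne
    subst hmn
    rw [hΨ m y hm, hΨ m z hn] at hyz
    exact hΦi m hm hn (add_left_cancel hyz)
  · ext o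
    constructor
    · rintro ⟨y, hy, rfl⟩
      by_cases hyx : y = x
      · rw [hyx, hΨx]; exact ⟨opow_pos _ omega0_pos, le_rfl⟩
      · obtain ⟨m, hm⟩ := hex y hy hyx
        exact ⟨zero_le.trans_lt (hΨr m y hm).1, (hΨr m y hm).2.trans (hslt (m + 1)).le⟩
    · rintro ⟨h0, h1⟩
      rcases h1.eq_or_lt with rfl | h1
      · exact ⟨x, hxU, hΨx⟩
      · obtain ⟨N, hN, hmin⟩ : ∃ N, o ≤ s N ∧ ∀ k < N, ¬ o ≤ s k :=
          exists_min_of_exists (hcof o h1)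
        have hz : N ≠ 0 := by
          rintro rfl
          exact absurd h0 (not_lt.2 hN)
        obtain ⟨k, rfl⟩ := Nat.exists_eq_succ_of_ne_zero hz
        have hk1 : s k < o := not_le.1 (hmin k (Nat.lt_succ_self k))
        have hk2 : o ≤ s k + a k := hN
        obtain ⟨d, rfl⟩ := exists_add_of_le hk1.le
        have : d ∈ Φ k '' (W k \ W (k + 1)) := by
          rw [hΦim]
          refine ⟨?_, (add_le_add_iff_left _).1 hk2⟩
          rcases eq_zero_or_pos d with rfl | h
          · simp at hk1
          · exact h
        obtain ⟨y, hy, rfl⟩ := this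
        exact ⟨y, hW0 ▸ hWanti (Nat.zero_le k) hy.1, hΨ k y hy⟩

lemma one_add_opow_mul {γ : Ordinal} (hγ : 0 < γ) {k : ℕ} (hk : 0 < k) :
    1 + ω ^ γ * (k : Ordinal) = ω ^ γ * (k : Ordinal) := by
  obtain ⟨j, rfl⟩ := Nat.exists_eq_succ_of_ne_zero hk.ne'
  have h : (1 : Ordinal) + ω ^ γ = ω ^ γ :=
    (isPrincipal_add_omega0_opow γ).add_eq_right (by
      simpa using (opow_lt_opow_iff_right one_lt_omega0).2 hγ)
  have : ((j.succ : ℕ) : Ordinal) = 1 + (j : Ordinal) := by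
    rw [← Nat.cast_one, ← Nat.cast_add, Nat.add_comm]
  rw [this, mul_one_add, ← add_assoc, h]

/-- If `1 + o = o`, the interval `(0, o]` is order isomorphic to `[0, o]`
through `ξ ↦ 1 + ξ`. -/
lemma exists_homeo_Ioc (o : Ordinal) (ho : 1 + o = o) :
    Nonempty ((Ioc 0 o : Set Ordinal) ≃ₜ OrdSpace o) := by
  let F : OrdSpace o → (Ioc 0 o : Set Ordinal) := fun ξ =>
    ⟨1 + ξ.1, zero_lt_one.trans_le (le_self_add), by
      conv_rhs => rw [← ho]
      exact (add_le_add_iff_left 1).2 ξ.2⟩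
  have hF : StrictMono F := fun a b hab => by
    change (1 : Ordinal) + a.1 < 1 + b.1
    exact (add_lt_add_iff_left 1).2 hab
  have hs : Function.Surjective F := by
    rintro ⟨η, h0, h1⟩
    obtain ⟨d, rfl⟩ := exists_add_of_le (Order.one_le_iff_pos.2 h0)
    rw [← ho] at h1
    exact ⟨⟨d, (add_le_add_iff_left 1).1 h1⟩, rfl⟩
  exact ⟨(hF.orderIsoOfSurjective F hs).toHomeomorph.symm⟩

/-- **Rank criterion.** Let `r` be an ordinal valued function on a compact totally disconnected
space such that `r` is strictly smaller than `r x` near `x` and such that `r x` is the least value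
with that property (so that `r` is the Cantor–Bendixson rank). If the maximum `γ > 0` of `r` is
attained exactly `k` times, the space is `ω ^ γ * k + 1`. -/
theorem homeoOrd_of_rank {r : X → Ordinal}
    (h1 : ∀ x, ∃ U ∈ 𝓝 x, ∀ y ∈ U, y ≠ x → r y < r x)
    (h2 : ∀ x, ∀ α < r x, ∀ U ∈ 𝓝 x, ∃ y ∈ U, y ≠ x ∧ α ≤ r y)
    (γ : Ordinal) (hγ : 0 < γ) (M : Finset X) (hM0 : M.Nonempty) (hle : ∀ y, r y ≤ γ)
    (hM : ∀ y, y ∈ M ↔ r y = γ) : HomeoOrd X (ω ^ γ * (M.card : Ordinal)) := by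
  obtain ⟨Φ, hc, hi, him⟩ := ordChart_of_finite_top h1 γ (ordChart_single h1 h2 γ) M univ hM0
    isClopen_univ (fun y _ => hle y) (fun y => by simp [hM])
  have hmem : ∀ x, Φ x ∈ Ioc 0 (ω ^ γ * (M.card : Ordinal)) := fun x => by
    rw [← him]; exact mem_image_of_mem _ (mem_univ x)
  let F : X → (Ioc 0 (ω ^ γ * (M.card : Ordinal)) : Set Ordinal) := fun x => ⟨Φ x, hmem x⟩
  have hFc : Continuous F :=
    (continuous_iff_continuousAt.2 fun x => hc x (mem_univ x)).subtype_mk _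
  have hFb : Function.Bijective F := by
    constructor
    · intro x y hxy
      exact hi (mem_univ x) (mem_univ y) (congrArg Subtype.val hxy)
    · rintro ⟨o, ho⟩
      rw [← him] at ho
      obtain ⟨x, -, rfl⟩ := ho
      exact ⟨x, rfl⟩
  obtain ⟨e⟩ := exists_homeo_Ioc (ω ^ γ * (M.card : Ordinal)) (one_add_opow_mul hγ hM0.card_pos)
  exact ⟨(hFc.homeoOfEquivCompactToT2 (f := Equiv.ofBijective F hFb)).trans e⟩

end RankCriterion

/-! ### Kneading series of tent maps -/

section Kneading

open Topology

/-- The shift on one-sided sequences. -/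
def shiftR {A : Type*} (z : ℕ → A) : ℕ → A := fun i => z (i + 1)

/-- The sign `±1` coded by a letter (`true` is `+`). -/
def sg (b : Bool) : ℝ := if b then 1 else -1

lemma abs_sg (b : Bool) : |sg b| = 1 := by cases b <;> simp [sg]

/-- The `j`-th term `(-1) ^ j * t ^ (j + 1) * z₀ * ⋯ * z_j` of the kneading series. -/
def kterm (t : ℝ) : ℕ → (ℕ → Bool) → ℝ
  | 0, z => t * sg (z 0)
  | j + 1, z => -(t * sg (z 0)) * kterm t j (shiftR z)

/-- The kneading series `∑ (-1) ^ j * t ^ (j + 1) * z₀ * ⋯ * z_j` of a sign sequence. The point of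
the tent map of slope `1 / t` with critical point `1 - t` whose itinerary is `z` is
`1 - t + t * kY t z`. -/
def kY (t : ℝ) (z : ℕ → Bool) : ℝ := ∑' j, kterm t j z

lemma abs_kterm {t : ℝ} (ht : 0 ≤ t) (j : ℕ) (z : ℕ → Bool) : |kterm t j z| = t ^ (j + 1) := by
  induction j generalizing z with
  | zero => simp [kterm, abs_mul, abs_sg, abs_of_nonneg ht]
  | succ j ih => rw [kterm, abs_mul, ih, abs_neg, abs_mul, abs_sg, abs_of_nonneg ht]; ring

lemma hasSum_geom {t : ℝ} (ht : 0 ≤ t) (h1 : t < 1) :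
    HasSum (fun j : ℕ => t ^ (j + 1)) (t / (1 - t)) := by
  have := (hasSum_geometric_of_lt_one ht h1).mul_left t
  simpa [pow_succ', div_eq_mul_inv] using this

lemma summable_kterm {t : ℝ} (ht : 0 ≤ t) (h1 : t < 1) (z : ℕ → Bool) :
    Summable fun j => kterm t j z :=
  Summable.of_norm_bounded (hasSum_geom ht h1).summable fun j => by
    rw [Real.norm_eq_abs, abs_kterm ht]

lemma kY_rec {t : ℝ} (ht : 0 ≤ t) (h1 : t < 1) (z : ℕ → Bool) :
    kY t z = t * sg (z 0) * (1 - kY t (shiftR z)) := by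
  rw [kY, (summable_kterm ht h1 z).tsum_eq_zero_add]
  simp only [kterm]
  rw [tsum_mul_left, ← kY]
  ring

lemma abs_kY_le {t : ℝ} (ht : 0 ≤ t) (h1 : t < 1) (z : ℕ → Bool) : |kY t z| ≤ t / (1 - t) := by
  rw [← Real.norm_eq_abs]
  exact tsum_of_norm_bounded (hasSum_geom ht h1) fun j => by
    rw [Real.norm_eq_abs, abs_kterm ht]

lemma abs_kY_le' {t : ℝ} (ht : 0 ≤ t) (h1 : t ≤ 3 / 5) (z : ℕ → Bool) : |kY t z| ≤ 3 / 2 := by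
  refine (abs_kY_le ht (by linarith) z).trans ?_
  rw [div_le_iff₀ (by linarith)]
  linarith

/-- Sequences sharing their first `N` letters have exponentially close kneading series. -/
lemma abs_kY_sub_le {t : ℝ} (ht : 0 ≤ t) (h1 : t ≤ 3 / 5) (N : ℕ) (z z' : ℕ → Bool)
    (h : ∀ i < N, z i = z' i) : |kY t z - kY t z'| ≤ 3 * t ^ N := by
  induction N generalizing z z' with
  | zero =>
    have := abs_le.1 (abs_kY_le' ht h1 z)
    have := abs_le.1 (abs_kY_le' ht h1 z')
    rw [abs_le]; constructor <;> simp <;> linarith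
  | succ N ih =>
    have e := ih (shiftR z) (shiftR z') fun i hi => h (i + 1) (by omega)
    have : kY t z - kY t z' = -(t * sg (z 0)) * (kY t (shiftR z) - kY t (shiftR z')) := by
      rw [kY_rec ht (by linarith) z, kY_rec ht (by linarith) z', h 0 (by omega)]
      ring
    rw [this, abs_mul, abs_neg, abs_mul, abs_sg, abs_of_nonneg ht, mul_one, pow_succ]
    nlinarith

lemma continuousOn_kY (z : ℕ → Bool) : ContinuousOn (fun t => kY t z) (Icc (1 / 2) (3 / 5)) := by
  unfold kY
  refine continuousOn_tsum (u := fun j : ℕ => (3 / 5 : ℝ) ^ (j + 1)) ?_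
    (hasSum_geom (by norm_num) (by norm_num)).summable ?_
  · intro j
    refine Continuous.continuousOn ?_
    induction j generalizing z with
    | zero => simp only [kterm]; fun_prop
    | succ j ih =>
      simp only [kterm]
      have := ih (shiftR z)
      fun_prop
  · intro j t ht
    have h0 : (0 : ℝ) ≤ t := by linarith [ht.1]
    rw [Real.norm_eq_abs, abs_kterm h0]
    exact pow_le_pow_left₀ h0 ht.2 _

/-- Every four consecutive letters contain a `+`. -/
def FourPlus (z : ℕ → Bool) : Prop := ∀ n, ∃ i < 4, z (n + i) = true

lemma FourPlus.shiftR {z : ℕ → Bool} (h : FourPlus z) : FourPlus (shiftR z) := fun n => by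
  obtain ⟨i, hi, e⟩ := h (n + 1)
  exact ⟨i, hi, by rw [← e]; simp only [_root_.shiftR]; congr 1; omega⟩

/-- The kneading sequence `+ - - - - - +` followed by `e`. -/
def knead (e : ℕ → Bool) : ℕ → Bool
  | 0 => true
  | 1 => false
  | 2 => false
  | 3 => false
  | 4 => false
  | 5 => false
  | 6 => true
  | n + 7 => e n

lemma kY_plus {t : ℝ} (ht : 0 ≤ t) (h1 : t < 1) {z : ℕ → Bool} (h : z 0 = true) :
    kY t z = t - t * kY t (shiftR z) := by
  rw [kY_rec ht h1, h]; simp [sg]; ring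

lemma kY_minus {t : ℝ} (ht : 0 ≤ t) (h1 : t < 1) {z : ℕ → Bool} (h : z 0 = false) :
    kY t z = -t + t * kY t (shiftR z) := by
  rw [kY_rec ht h1, h]; simp [sg]; ring

lemma kY_knead {t : ℝ} (ht : 0 ≤ t) (h1 : t < 1) (e : ℕ → Bool) :
    ∃ z : ℕ → Bool, kY t (knead e) =
      t + t ^ 2 + t ^ 3 + t ^ 4 + t ^ 5 + t ^ 6 - t ^ 6 * (t * (1 - kY t z)) := by
  have e0 := kY_plus ht h1 (z := knead e) rfl
  have e1 := kY_minus ht h1 (z := shiftR (knead e)) rfl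
  have e2 := kY_minus ht h1 (z := shiftR (shiftR (knead e))) rfl
  have e3 := kY_minus ht h1 (z := shiftR (shiftR (shiftR (knead e)))) rfl
  have e4 := kY_minus ht h1 (z := shiftR (shiftR (shiftR (shiftR (knead e))))) rfl
  have e5 := kY_minus ht h1 (z := shiftR (shiftR (shiftR (shiftR (shiftR (knead e)))))) rfl
  have e6 := kY_plus ht h1 (z := shiftR (shiftR (shiftR (shiftR (shiftR (shiftR (knead e))))))) rfl
  refine ⟨shiftR (shiftR (shiftR (shiftR (shiftR (shiftR (shiftR (knead e))))))), ?_⟩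
  rw [e0, e1, e2, e3, e4, e5, e6]
  ring

/-- The slope of the tent map is found by the intermediate value theorem. -/
lemma exists_slope (e : ℕ → Bool) : ∃ t ∈ Icc (1 / 2 : ℝ) (3 / 5), kY t (knead e) = 1 := by
  have hc := continuousOn_kY (knead e)
  have h0 : kY (1 / 2) (knead e) ≤ 1 :=
    (le_abs_self _).trans ((abs_kY_le (by norm_num) (by norm_num) _).trans (by norm_num))
  have h1 : 1 ≤ kY (3 / 5) (knead e) := by
    obtain ⟨z, hz⟩ := kY_knead (t := 3 / 5) (by norm_num) (by norm_num) e
    have := abs_le.1 (abs_kY_le' (t := 3 / 5) (by norm_num) (by norm_num) z)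
    rw [hz]
    norm_num
    linarith
  exact intermediate_value_Icc (by norm_num) hc ⟨h0, h1⟩

lemma kY_le_of_minus {t : ℝ} (ht : t ∈ Icc (1 / 2 : ℝ) (3 / 5)) {z : ℕ → Bool} (h : z 0 = false) :
    kY t z ≤ 1 - 1 / 200 := by
  have h0 : (0 : ℝ) ≤ t := by linarith [ht.1]
  rw [kY_minus h0 (by linarith [ht.2]) h]
  have := abs_le.1 (abs_kY_le' h0 ht.2 (shiftR z))
  nlinarith [ht.1, ht.2]

/-- A sequence with a `+` in every window of length four stays below the kneading sequence, whose
initial `+` is followed by five `-`; the gap is uniform. -/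
lemma kY_le_of_fourPlus {t : ℝ} (ht : t ∈ Icc (1 / 2 : ℝ) (3 / 5)) {e : ℕ → Bool}
    (hE : kY t (knead e) = 1) {z : ℕ → Bool} (hz : FourPlus z) : kY t z ≤ 1 - 1 / 200 := by
  have h0 : (0 : ℝ) ≤ t := by linarith [ht.1]
  have h1 : t < 1 := by linarith [ht.2]
  have ha := ht.1
  have hb := ht.2
  cases hz0 : z 0
  · exact kY_le_of_minus ht hz0
  obtain ⟨w, hw⟩ := kY_knead h0 h1 e
  have hwb := abs_le.1 (abs_kY_le' h0 ht.2 w)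
  have hplus : ∀ y : ℕ → Bool, y 0 = true → -(t / 2) ≤ kY t y := fun y hy => by
    rw [kY_plus h0 h1 hy]
    have := abs_le.1 (abs_kY_le' h0 ht.2 (shiftR y))
    nlinarith
  have ht2 : 0 ≤ t ^ 2 := by positivity
  have ht3 : 0 ≤ t ^ 3 := by positivity
  have ht4 : 1 / 16 ≤ t ^ 4 := by
    have := pow_le_pow_left₀ (by norm_num : (0 : ℝ) ≤ 1 / 2) ha 4
    norm_num at this ⊢; exact this
  have ht5 : 1 / 32 ≤ t ^ 5 := by
    have := pow_le_pow_left₀ (by norm_num : (0 : ℝ) ≤ 1 / 2) ha 5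
    norm_num at this ⊢; exact this
  have ht6 : 0 ≤ t ^ 6 := by positivity
  have hdom : t ^ 6 * (t * (1 - kY t w)) ≤ t ^ 6 * (3 / 2) :=
    mul_le_mul_of_nonneg_left (by nlinarith) ht6
  have e21 : t ^ 2 = t * t := by ring
  have e32 : t ^ 3 = t * t ^ 2 := by ring
  have e43 : t ^ 4 = t * t ^ 3 := by ring
  have e54 : t ^ 5 = t * t ^ 4 := by ring
  have e65 : t ^ 6 = t * t ^ 5 := by ring
  have b2 : t ^ 2 ≤ 3 / 5 * t := by nlinarith
  have b3 : t ^ 3 ≤ 3 / 5 * t ^ 2 := by nlinarith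
  have b4 : t ^ 4 ≤ 3 / 5 * t ^ 3 := by nlinarith
  have b5 : t ^ 5 ≤ 3 / 5 * t ^ 4 := by nlinarith
  have b6 : t ^ 6 ≤ 3 / 5 * t ^ 5 := by nlinarith
  -- the worst case is three letters `-` followed by `+`
  have key : -(t + t ^ 2 + t ^ 3 + t ^ 4 / 2) ≤ kY t (shiftR z) := by
    cases hz1 : z 1
    · rw [kY_minus h0 h1 (z := shiftR z) hz1]
      suffices -(t + t ^ 2 + t ^ 3 / 2) ≤ kY t (shiftR (shiftR z)) by
        have := mul_le_mul_of_nonneg_left this h0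
        nlinarith
      cases hz2 : z 2
      · rw [kY_minus h0 h1 (z := shiftR (shiftR z)) hz2]
        suffices -(t + t ^ 2 / 2) ≤ kY t (shiftR (shiftR (shiftR z))) by
          have := mul_le_mul_of_nonneg_left this h0
          nlinarith
        cases hz3 : z 3
        · rw [kY_minus h0 h1 (z := shiftR (shiftR (shiftR z))) hz3]
          have hz4 : z 4 = true := by
            obtain ⟨i, hi, hi'⟩ := hz 1
            interval_cases i <;> simp_all
          have := hplus (shiftR (shiftR (shiftR (shiftR z)))) hz4
          have := mul_le_mul_of_nonneg_left this h0
          nlinarith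
        · have := hplus (shiftR (shiftR (shiftR z))) hz3
          linarith
      · have := hplus (shiftR (shiftR z)) hz2
        linarith
    · have := hplus (shiftR z) hz1
      linarith
  rw [kY_plus h0 h1 hz0]
  have := mul_le_mul_of_nonneg_left key h0
  have e : t * -(t + t ^ 2 + t ^ 3 + t ^ 4 / 2) = -(t ^ 2 + t ^ 3 + t ^ 4 + t ^ 5 / 2) := by ring
  rw [e] at this
  linarith

end Kneading

/-! ### Tent maps -/

section Tent

open Topology

/-- The tent map of slope `1 / t` with critical point `1 - t` and critical value `1`. -/
def tent (t u : ℝ) : ℝ := 1 - |u - (1 - t)| / t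

lemma tent_left {t u : ℝ} (h : u ≤ 1 - t) : tent t u = 1 - (1 - t - u) / t := by
  rw [tent, abs_of_nonpos (by linarith)]; ring

lemma tent_right {t u : ℝ} (h : 1 - t ≤ u) : tent t u = 1 - (u - (1 - t)) / t := by
  rw [tent, abs_of_nonneg (by linarith)]

lemma tent_mem {t : ℝ} (ht : t ∈ Icc (1 / 2 : ℝ) (3 / 5)) {u : ℝ} (hu : u ∈ Icc (0 : ℝ) 1) :
    tent t u ∈ Icc (0 : ℝ) 1 := by
  have h0 : 0 < t := by linarith [ht.1]
  refine ⟨?_, ?_⟩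
  · rw [tent, sub_nonneg, div_le_one h0, abs_le]
    constructor <;> linarith [hu.1, hu.2, ht.1]
  · have : 0 ≤ |u - (1 - t)| / t := by positivity
    rw [tent]; linarith

/-- Every nondegenerate interval is mapped onto `[0, 1]` by some iterate of the tent map: its length
grows by a factor `1 / t`, or `1 / (2 * t ^ 2)` over two steps when it contains the critical point,
until the image contains `[1 - t, 1]`. -/
lemma tent_onto {t : ℝ} (ht : t ∈ Icc (1 / 2 : ℝ) (3 / 5)) (n : ℕ) :
    ∀ a b : ℝ, 0 ≤ a → b ≤ 1 → a < b → 1 < (b - a) * (25 / 18) ^ n →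
      ∃ N : ℕ, ∀ y ∈ Icc (0 : ℝ) 1, ∃ x ∈ Icc a b, (tent t)^[N] x = y := by
  have h0 : 0 < t := by linarith [ht.1]
  have ht2 := ht.2
  have ht1 := ht.1
  have hL : ∀ {y : ℝ}, y ≤ 1 → tent t (1 - t - t * (1 - y)) = y := fun {y} hy => by
    rw [tent_left (by nlinarith)]; field_simp; ring
  have hR : ∀ {y : ℝ}, y ≤ 1 → tent t (1 - t + t * (1 - y)) = y := fun {y} hy => by
    rw [tent_right (by nlinarith)]; field_simp; ring
  induction n with
  | zero => intro a b ha hb _ h; simp at h; linarith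
  | succ n ih =>
    intro a b ha hb hab h
    have hpow : (0 : ℝ) < (25 / 18) ^ n := by positivity
    -- a longer interval inside the `k`-th image allows the induction hypothesis to be used
    have step : ∀ (k : ℕ) (v w : ℝ), 0 ≤ v → w ≤ 1 → (b - a) * (25 / 18) ≤ w - v →
        (∀ y ∈ Icc v w, ∃ x ∈ Icc a b, (tent t)^[k] x = y) →
        ∃ N : ℕ, ∀ y ∈ Icc (0 : ℝ) 1, ∃ x ∈ Icc a b, (tent t)^[N] x = y := by
      intro k v w hv hw hl hcov
      obtain ⟨N, hN⟩ := ih v w hv hw (by linarith) (by rw [pow_succ] at h; nlinarith)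
      refine ⟨N + k, fun y hy => ?_⟩
      obtain ⟨x, hx, rfl⟩ := hN y hy
      obtain ⟨x', hx', rfl⟩ := hcov x hx
      exact ⟨x', hx', Function.iterate_add_apply _ _ _ _⟩
    have hdiv : ∀ l : ℝ, 0 ≤ l → l * (5 / 3) ≤ l / t := fun l hl => by
      rw [le_div_iff₀ h0]; nlinarith
    rcases le_or_gt b (1 - t) with hbc | hbc
    · have ea := tent_left (t := t) (u := a) (by linarith)
      have eb := tent_left hbc
      refine step 1 (tent t a) (tent t b) (tent_mem ht ⟨ha, by linarith⟩).1
        (tent_mem ht ⟨by linarith, hb⟩).2 ?_ fun y hy => ?_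
      · have : tent t b - tent t a = (b - a) / t := by rw [ea, eb]; ring
        rw [this]
        linarith [hdiv (b - a) (by linarith)]
      · refine ⟨1 - t - t * (1 - y), ⟨?_, ?_⟩, hL (hy.2.trans (tent_mem ht ⟨by linarith, hb⟩).2)⟩
        · have := hy.1
          rw [ea, sub_le_comm, le_div_iff₀ h0] at this
          linarith
        · have := hy.2
          rw [eb, le_sub_comm, div_le_iff₀ h0] at this
          linarith
    rcases le_or_gt (1 - t) a with hac | hac
    · have ea := tent_right hac
      have eb := tent_right (t := t) (u := b) (by linarith)
      refine step 1 (tent t b) (tent t a) (tent_mem ht ⟨by linarith, hb⟩).1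
        (tent_mem ht ⟨ha, by linarith⟩).2 ?_ fun y hy => ?_
      · have : tent t a - tent t b = (b - a) / t := by rw [ea, eb]; ring
        rw [this]
        linarith [hdiv (b - a) (by linarith)]
      · refine ⟨1 - t + t * (1 - y), ⟨?_, ?_⟩, hR (hy.2.trans (tent_mem ht ⟨ha, by linarith⟩).2)⟩
        · have := hy.2
          rw [ea, le_sub_comm, div_le_iff₀ h0] at this
          linarith
        · have := hy.1
          rw [eb, sub_le_comm, le_div_iff₀ h0] at this
          linarith
    · obtain ⟨v, hv0, hvl, hv⟩ : ∃ v, 0 ≤ v ∧ (b - a) / 2 * (5 / 3) ≤ 1 - v ∧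
          ∀ y ∈ Icc v 1, ∃ x ∈ Icc a b, tent t x = y := by
        rcases le_or_gt (1 - t - a) (b - (1 - t)) with hm | hm
        · have eb := tent_right hbc.le
          refine ⟨tent t b, (tent_mem ht ⟨by linarith, hb⟩).1, ?_, fun y hy => ?_⟩
          · have := hdiv (b - (1 - t)) (by linarith)
            rw [eb]; linarith
          · refine ⟨1 - t + t * (1 - y), ⟨by nlinarith [hy.2], ?_⟩, hR hy.2⟩
            have := hy.1
            rw [eb, sub_le_comm, le_div_iff₀ h0] at this
            linarith
        · have ea := tent_left hac.le
          refine ⟨tent t a, (tent_mem ht ⟨ha, by linarith⟩).1, ?_, fun y hy => ?_⟩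
          · have := hdiv (1 - t - a) (by linarith)
            rw [ea]; linarith
          · refine ⟨1 - t - t * (1 - y), ⟨?_, by nlinarith [hy.2]⟩, hL hy.2⟩
            have := hy.1
            rw [ea, sub_le_comm, le_div_iff₀ h0] at this
            linarith
      rcases le_or_gt v (1 - t) with hvc | hvc
      · refine ⟨2, fun y hy => ?_⟩
        obtain ⟨x, hx, hxy⟩ := hv (1 - t + t * (1 - y)) ⟨by nlinarith [hy.2], by nlinarith [hy.1]⟩
        refine ⟨x, hx, ?_⟩
        change tent t (tent t x) = y
        rw [hxy, hR hy.2]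
      · have ev := tent_right hvc.le
        have hv1 : v ≤ 1 := by linarith
        refine step 2 0 (tent t v) le_rfl (tent_mem ht ⟨hv0, hv1⟩).2 ?_ fun y hy => ?_
        · have e : tent t v = (1 - v) / t := by rw [ev]; field_simp; ring
          have := hdiv (1 - v) (by linarith)
          rw [e]; linarith
        · have hy1 : y ≤ 1 := hy.2.trans (tent_mem ht ⟨hv0, hv1⟩).2
          have hvy : v ≤ 1 - t + t * (1 - y) := by
            have := hy.2
            rw [ev, le_sub_comm, div_le_iff₀ h0] at this
            linarith
          obtain ⟨x, hx, hxy⟩ := hv (1 - t + t * (1 - y)) ⟨hvy, by nlinarith [hy.1]⟩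
          refine ⟨x, hx, ?_⟩
          change tent t (tent t x) = y
          rw [hxy, hR hy1]

/-- The tent map as a self-map of the unit interval. -/
def tentI (t : ℝ) (ht : t ∈ Icc (1 / 2 : ℝ) (3 / 5)) (u : unitI) : unitI :=
  ⟨tent t u, tent_mem ht u.2⟩

lemma tentI_iterate (t : ℝ) (ht : t ∈ Icc (1 / 2 : ℝ) (3 / 5)) (N : ℕ) (u : unitI) :
    (((tentI t ht)^[N] u : unitI) : ℝ) = (tent t)^[N] u := by
  induction N generalizing u with
  | zero => rfl
  | succ N ih => rw [Function.iterate_succ_apply, Function.iterate_succ_apply, ih]; rfl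

lemma tentI_unimodal (t : ℝ) (ht : t ∈ Icc (1 / 2 : ℝ) (3 / 5)) (c : unitI) (hc : (c : ℝ) = 1 - t) :
    Unimodal (tentI t ht) c := by
  have h0 : 0 < t := by linarith [ht.1]
  refine ⟨?_, by rw [hc]; linarith [ht.2], by rw [hc]; linarith, ?_, ?_⟩
  · refine Continuous.subtype_mk ?_ _
    unfold tent
    fun_prop
  · intro x hx y hy hxy
    have hx' : (x : ℝ) ≤ 1 - t := hc ▸ hx
    have hy' : (y : ℝ) ≤ 1 - t := hc ▸ hy
    have hxy' : (x : ℝ) < y := hxy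
    change tent t x < tent t y
    rw [tent_left hx', tent_left hy']
    have := div_lt_div_of_pos_right (show 1 - t - (y : ℝ) < 1 - t - x by linarith) h0
    linarith
  · intro x hx y hy hxy
    have hx' : 1 - t ≤ (x : ℝ) := hc ▸ hx
    have hy' : 1 - t ≤ (y : ℝ) := hc ▸ hy
    have hxy' : (x : ℝ) < y := hxy
    change tent t y < tent t x
    rw [tent_right hx', tent_right hy']
    have := div_lt_div_of_pos_right (show (x : ℝ) - (1 - t) < y - (1 - t) by linarith) h0
    linarith

lemma tentI_leo (t : ℝ) (ht : t ∈ Icc (1 / 2 : ℝ) (3 / 5)) : LEO (tentI t ht) := by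
  intro ε hε x
  obtain ⟨a, b, ha, hb, hab, hsub⟩ : ∃ a b : ℝ, 0 ≤ a ∧ b ≤ 1 ∧ a < b ∧
      ∀ y ∈ Icc a b, |y - x| < ε := by
    have hx0 := x.2.1
    have hx1 := x.2.2
    rcases le_or_gt (x : ℝ) (1 / 2) with h | h
    · refine ⟨x, x + min (ε / 2) (1 / 2), hx0, by linarith [min_le_right (ε / 2) (1 / 2)], ?_, ?_⟩
      · have : 0 < min (ε / 2) (1 / 2) := by positivity
        linarith
      · intro y hy
        rw [abs_of_nonneg (by linarith [hy.1])]
        linarith [hy.2, min_le_left (ε / 2) (1 / 2)]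
    · refine ⟨x - min (ε / 2) (1 / 2), x, by linarith [min_le_right (ε / 2) (1 / 2)], hx1, ?_, ?_⟩
      · have : 0 < min (ε / 2) (1 / 2) := by positivity
        linarith
      · intro y hy
        rw [abs_of_nonpos (by linarith [hy.2])]
        linarith [hy.1, min_le_left (ε / 2) (1 / 2)]
  obtain ⟨n, hn⟩ := pow_unbounded_of_one_lt (1 / (b - a)) (by norm_num : (1 : ℝ) < 25 / 18)
  obtain ⟨N, hN⟩ := tent_onto ht n a b ha hb hab (by
    rw [div_lt_iff₀ (by linarith)] at hn; linarith)
  refine ⟨N, eq_univ_of_forall fun y => ?_⟩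
  obtain ⟨u, hu, huy⟩ := hN y y.2
  refine ⟨⟨u, ha.trans hu.1, hu.2.trans hb⟩, ?_, Subtype.ext ?_⟩
  · rw [Metric.mem_ball, Subtype.dist_eq, Real.dist_eq]
    exact hsub u hu
  · rw [tentI_iterate]; exact huy

end Tent

/-! ### Realising a shift space as a set of inhomogeneities -/

section Realization

open Topology

lemma eventually_agree {ι A : Type*} [TopologicalSpace A] [DiscreteTopology A] (z : ι → A)
    (s : Finset ι) : ∀ᶠ z' in 𝓝 z, ∀ i ∈ s, z' i = z i := by
  rw [Filter.eventually_all_finset]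
  intro i _
  have : ContinuousAt (fun z' : ι → A => z' i) z := (continuous_apply i).continuousAt
  exact this (by simp : ({z i} : Set A) ∈ 𝓝 (z i))

lemma exists_agree_subset {ι A : Type*} [TopologicalSpace A] [DiscreteTopology A] (z : ι → A)
    {U : Set (ι → A)} (hU : U ∈ 𝓝 z) : ∃ s : Finset ι, ∀ z', (∀ i ∈ s, z' i = z i) → z' ∈ U := by
  rw [nhds_pi, Filter.mem_pi] at hU
  obtain ⟨I, hI, t, ht, hsub⟩ := hU
  refine ⟨hI.toFinset, fun z' h => hsub fun i hi => ?_⟩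
  rw [h i (hI.mem_toFinset.2 hi)]
  exact mem_of_mem_nhds (ht i)

lemma continuous_kY {t : ℝ} (ht : t ∈ Icc (1 / 2 : ℝ) (3 / 5)) : Continuous (kY t) := by
  have h0 : 0 ≤ t := by linarith [ht.1]
  rw [continuous_iff_continuousAt]
  intro z
  rw [ContinuousAt, Metric.tendsto_nhds]
  intro ε hε
  obtain ⟨N, hN⟩ := exists_pow_lt_of_lt_one (by positivity : 0 < ε / 3)
    (by linarith [ht.2] : t < 1)
  filter_upwards [eventually_agree z (Finset.range N)] with z' hz'
  rw [Real.dist_eq]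
  refine (abs_kY_sub_le h0 ht.2 N z' z fun i hi => hz' i (Finset.mem_range.2 hi)).trans_lt ?_
  linarith

/-- The point of the unit interval with itinerary `z` (projected to `[0, 1]`, which only matters for
sequences that are not itineraries). -/
def itinPt (t : ℝ) (z : ℕ → Bool) : unitI :=
  Set.projIcc 0 1 zero_le_one (1 - t + t * kY t z)

lemma continuous_itinPt {t : ℝ} (ht : t ∈ Icc (1 / 2 : ℝ) (3 / 5)) : Continuous (itinPt t) :=
  continuous_projIcc.comp (continuous_const.add (continuous_const.mul (continuous_kY ht)))

lemma dist_itinPt_le {t : ℝ} (ht : t ∈ Icc (1 / 2 : ℝ) (3 / 5)) (N : ℕ) (z z' : ℕ → Bool)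
    (h : ∀ i < N, z i = z' i) : dist (itinPt t z) (itinPt t z') ≤ 3 * t ^ N := by
  have h0 : 0 ≤ t := by linarith [ht.1]
  rw [Subtype.dist_eq, Real.dist_eq]
  refine (abs_projIcc_sub_projIcc zero_le_one).trans ?_
  have e := abs_kY_sub_le h0 ht.2 N z z' h
  have : 1 - t + t * kY t z - (1 - t + t * kY t z') = t * (kY t z - kY t z') := by ring
  rw [this, abs_mul, abs_of_nonneg h0]
  nlinarith [abs_nonneg (kY t z - kY t z'), ht.2]

lemma coe_itinPt {t : ℝ} (ht : t ∈ Icc (1 / 2 : ℝ) (3 / 5)) {e : ℕ → Bool}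
    (hE : kY t (knead e) = 1) {z : ℕ → Bool} (hz : FourPlus z) : (itinPt t z : ℝ) = 1 - t + t * kY t z := by
  have h0 : 0 < t := by linarith [ht.1]
  -- putting a `+` in front gives another admissible sequence, whence the lower bound
  let y : ℕ → Bool := fun n => Nat.casesOn n true z
  have hy : FourPlus y := by
    intro n
    cases n with
    | zero => exact ⟨0, by omega, rfl⟩
    | succ n =>
      obtain ⟨i, hi, h⟩ := hz n
      refine ⟨i, hi, ?_⟩
      rw [show n + 1 + i = (n + i) + 1 by omega]
      exact h
  have e1 := kY_plus h0.le (by linarith [ht.2]) (z := y) rfl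
  have e2 : shiftR y = z := rfl
  have b1 := kY_le_of_fourPlus ht hE hy
  have b2 := kY_le_of_fourPlus ht hE hz
  rw [e2] at e1
  rw [itinPt, Set.projIcc_of_mem zero_le_one ⟨by linarith, by nlinarith⟩]

lemma tent_itin {t : ℝ} (ht : t ∈ Icc (1 / 2 : ℝ) (3 / 5)) {z : ℕ → Bool} (h : kY t (shiftR z) ≤ 1) :
    tent t (1 - t + t * kY t z) = 1 - t + t * kY t (shiftR z) := by
  have h0 : 0 < t := by linarith [ht.1]
  rw [tent, show 1 - t + t * kY t z - (1 - t) = t * kY t z by ring, abs_mul, abs_of_pos h0,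
    mul_div_cancel_left₀ _ h0.ne', kY_rec h0.le (by linarith [ht.2]) z, abs_mul, abs_mul, abs_sg,
    abs_of_pos h0, abs_of_nonneg (by linarith)]
  ring

lemma tentI_itinPt {t : ℝ} (ht : t ∈ Icc (1 / 2 : ℝ) (3 / 5)) {e : ℕ → Bool}
    (hE : kY t (knead e) = 1) {z : ℕ → Bool} (hz : FourPlus z) :
    tentI t ht (itinPt t z) = itinPt t (shiftR z) := by
  apply Subtype.ext
  rw [coe_itinPt ht hE hz.shiftR, ← tent_itin ht (by linarith [kY_le_of_fourPlus ht hE hz.shiftR]),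
    ← coe_itinPt ht hE hz]
  rfl

/-- Admissible sequences are determined by the corresponding points: the uniform gap keeps these
points away from the critical point, so the letters are read off from the signs. -/
lemma itinPt_injective {t : ℝ} (ht : t ∈ Icc (1 / 2 : ℝ) (3 / 5)) {e : ℕ → Bool}
    (hE : kY t (knead e) = 1) {z z' : ℕ → Bool} (hz : FourPlus z) (hz' : FourPlus z')
    (h : itinPt t z = itinPt t z') : z = z' := by
  have h0 : 0 < t := by linarith [ht.1]
  have hY : kY t z = kY t z' := by
    have := congrArg Subtype.val h
    rw [coe_itinPt ht hE hz, coe_itinPt ht hE hz'] at this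
    nlinarith
  have main : ∀ n, ∀ z z' : ℕ → Bool, FourPlus z → FourPlus z' → kY t z = kY t z' → z n = z' n := by
    intro n
    induction n with
    | zero =>
      intro z z' hz hz' hY
      have b1 := kY_le_of_fourPlus ht hE hz.shiftR
      have b2 := kY_le_of_fourPlus ht hE hz'.shiftR
      rw [kY_rec h0.le (by linarith [ht.2]) z, kY_rec h0.le (by linarith [ht.2]) z'] at hY
      cases h1 : z 0 <;> cases h2 : z' 0 <;> simp only [h1, h2, sg] at hY ⊢ <;>
        simp at hY <;> nlinarith
    | succ n ih =>
      intro z z' hz hz' hY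
      have e0 : z 0 = z' 0 := by
        have b1 := kY_le_of_fourPlus ht hE hz.shiftR
        have b2 := kY_le_of_fourPlus ht hE hz'.shiftR
        rw [kY_rec h0.le (by linarith [ht.2]) z, kY_rec h0.le (by linarith [ht.2]) z'] at hY
        cases h1 : z 0 <;> cases h2 : z' 0 <;> simp only [h1, h2, sg] at hY ⊢ <;>
          simp at hY <;> nlinarith
      refine ih (shiftR z) (shiftR z') hz.shiftR hz'.shiftR ?_
      rw [kY_rec h0.le (by linarith [ht.2]) z, kY_rec h0.le (by linarith [ht.2]) z', e0] at hY
      have hne : t * sg (z' 0) ≠ 0 := by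
        refine mul_ne_zero h0.ne' fun h => ?_
        have := abs_sg (z' 0)
        rw [h] at this; simp at this
      have := mul_left_cancel₀ hne hY
      linarith
  exact funext fun n => main n z z' hz hz' hY

lemma tentI_orbit {t : ℝ} (ht : t ∈ Icc (1 / 2 : ℝ) (3 / 5)) {e : ℕ → Bool}
    (hE : kY t (knead e) = 1) (he : FourPlus e) (c : unitI) (hc : (c : ℝ) = 1 - t) (k : ℕ) :
    (tentI t ht)^[k + 8] c = itinPt t (fun i => e (k + i)) := by
  have h0 : 0 < t := by linarith [ht.1]
  have hs : ∀ k, FourPlus fun i => e (k + i) := fun k n => by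
    obtain ⟨i, hi, h⟩ := he (k + n)
    exact ⟨i, hi, by change e (k + (n + i)) = true; rw [← add_assoc]; exact h⟩
  have hle : ∀ k, kY t (shiftR^[k] (knead e)) ≤ 1 := by
    intro k
    have hm : ∀ z : ℕ → Bool, z 0 = false → kY t z ≤ 1 := fun z hz => by
      linarith [kY_le_of_minus ht hz]
    match k with
    | 0 => exact hE.le
    | 1 => exact hm _ rfl
    | 2 => exact hm _ rfl
    | 3 => exact hm _ rfl
    | 4 => exact hm _ rfl
    | 5 => exact hm _ rfl
    | k + 6 =>
      have h6 : FourPlus (shiftR^[6] (knead e)) := by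
        intro n
        cases n with
        | zero => exact ⟨0, by omega, rfl⟩
        | succ n =>
          obtain ⟨i, hi, h⟩ := he n
          refine ⟨i, hi, ?_⟩
          rw [show n + 1 + i = (n + i) + 1 by omega]
          exact h
      have : FourPlus (shiftR^[k + 6] (knead e)) := by
        rw [Function.iterate_add_apply]
        generalize shiftR^[6] (knead e) = w at h6
        induction k with
        | zero => exact h6
        | succ k ih => rw [Function.iterate_succ_apply']; exact ih.shiftR
      linarith [kY_le_of_fourPlus ht hE this]
  have key : ∀ k, (tent t)^[k + 1] (c : ℝ) = 1 - t + t * kY t (shiftR^[k] (knead e)) := by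
    intro k
    induction k with
    | zero =>
      change tent t c = 1 - t + t * kY t (knead e)
      rw [hE, hc, tent]
      simp
    | succ k ih =>
      rw [Function.iterate_succ_apply', ih, Function.iterate_succ_apply',
        tent_itin ht (by simpa [Function.iterate_succ_apply'] using hle (k + 1))]
  apply Subtype.ext
  rw [tentI_iterate, show k + 8 = (k + 7) + 1 by omega, key, coe_itinPt ht hE (hs k)]
  congr 3
  have : ∀ k, shiftR^[k + 7] (knead e) = fun i => e (k + i) := by
    intro k
    induction k with
    | zero => funext i; simp only [Nat.zero_add]; rfl
    | succ k ih =>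
      rw [show k + 1 + 7 = (k + 7) + 1 by omega, Function.iterate_succ_apply', ih]
      funext i
      simp only [shiftR]
      congr 1; omega
  exact this k

/-- The right half of a two-sided sequence. -/
def rightHalf {A : Type*} (x : ℤ → A) : ℕ → A := fun i => x i

lemma continuous_rightHalf {A : Type*} [TopologicalSpace A] :
    Continuous (rightHalf : (ℤ → A) → ℕ → A) :=
  continuous_pi fun i => continuous_apply (i : ℤ)

/-- **Realisation.** Let `J` be a two-sided shift space whose words are exactly the words occurring
infinitely often in a sequence `e` with a `+` in every window of length four. Then some unimodal
locally eventually onto map has inhomogeneity set homeomorphic to `J` and critical omega-limit set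
homeomorphic to the one-sided space of right halves of `J`. -/
theorem realization (e : ℕ → Bool) (he : FourPlus e) (J : Set (ℤ → Bool)) (hJc : IsClosed J)
    (hJs : ∀ x ∈ J, ∀ k : ℤ, (fun i => x (i + k)) ∈ J)
    (hE1 : ∀ N : ℕ, ∃ n0 : ℕ, ∀ n ≥ n0, ∃ x ∈ J, ∀ i : ℕ, i < N → e (n + i) = x i)
    (hE2 : ∀ x ∈ J, ∀ N n0 : ℕ, ∃ n ≥ n0, ∀ i : ℕ, i < N → e (n + i) = x i) :
    ∃ (f : unitI → unitI) (c : unitI), Unimodal f c ∧ LEO f ∧ Nonempty (J ≃ₜ Inhom f c) ∧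
      Nonempty ((rightHalf '' J : Set (ℕ → Bool)) ≃ₜ omegaLimitSet f c) := by
  obtain ⟨t, ht, hE⟩ := exists_slope e
  have h0 : 0 < t := by linarith [ht.1]
  have hc01 : (1 - t) ∈ Icc (0 : ℝ) 1 := ⟨by linarith [ht.2], by linarith⟩
  let c : unitI := ⟨1 - t, hc01⟩
  have horb := tentI_orbit ht hE he c rfl
  have hfour : ∀ x ∈ J, FourPlus (rightHalf x) := by
    intro x hx n
    obtain ⟨m, -, hm⟩ := hE2 x hx (n + 4) 0
    obtain ⟨i, hi, h⟩ := he (m + n)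
    exact ⟨i, hi, by rw [← h, add_assoc, hm (n + i) (by omega)]; rfl⟩
  have hJcomp : IsCompact J := hJc.isCompact
  have hRcomp : IsCompact (rightHalf '' J) := hJcomp.image continuous_rightHalf
  have hpow : ∀ ε > 0, ∃ N : ℕ, 3 * t ^ N < ε := fun ε hε => by
    obtain ⟨N, hN⟩ := exists_pow_lt_of_lt_one (by positivity : 0 < ε / 3)
      (by linarith [ht.2] : t < 1)
    exact ⟨N, by linarith⟩
  have homega : omegaLimitSet (tentI t ht) c = itinPt t '' (rightHalf '' J) := by
    apply Subset.antisymm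
    · intro y hy
      have hcl : IsClosed (itinPt t '' (rightHalf '' J)) :=
        (hRcomp.image (continuous_itinPt ht)).isClosed
      rw [← hcl.closure_eq, Metric.mem_closure_iff]
      intro ε hε
      obtain ⟨N, hN⟩ := hpow (ε / 2) (by positivity)
      obtain ⟨n0, hn0⟩ := hE1 N
      obtain ⟨b, ⟨m, hm, rfl⟩, hb⟩ :=
        Metric.mem_closure_iff.1 (mem_iInter.1 hy (n0 + 8)) (ε / 2) (by positivity)
      obtain ⟨k, rfl⟩ : ∃ k, m = k + 8 := ⟨m - 8, by omega⟩
      obtain ⟨x, hx, hxe⟩ := hn0 k (by omega)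
      refine ⟨_, mem_image_of_mem _ (mem_image_of_mem _ hx), ?_⟩
      rw [horb] at hb
      have := dist_itinPt_le ht N (fun i => e (k + i)) (rightHalf x) hxe
      linarith [dist_triangle y (itinPt t fun i => e (k + i)) (itinPt t (rightHalf x))]
    · rintro _ ⟨_, ⟨x, hx, rfl⟩, rfl⟩
      refine mem_iInter.2 fun n => Metric.mem_closure_iff.2 fun ε hε => ?_
      obtain ⟨N, hN⟩ := hpow ε hε
      obtain ⟨m, hm, hme⟩ := hE2 x hx N n
      refine ⟨_, ⟨m + 8, by omega, rfl⟩, ?_⟩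
      rw [horb]
      exact (dist_itinPt_le ht N _ _ fun i hi => (hme i hi).symm).trans_lt hN
  have hmemω : ∀ x ∈ J, itinPt t (rightHalf x) ∈ omegaLimitSet (tentI t ht) c := fun x hx => by
    rw [homega]; exact mem_image_of_mem _ (mem_image_of_mem _ hx)
  refine ⟨tentI t ht, c, tentI_unimodal t ht c rfl, tentI_leo t ht, ?_, ?_⟩
  · -- the point of the inverse limit whose `n`-th coordinate has itinerary `x₋ₙ x₋ₙ₊₁ ⋯`
    have hshift : ∀ (x : ℤ → Bool) (n : ℕ), shiftR (rightHalf fun i => x (i + -((n + 1 : ℕ) : ℤ))) =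
        rightHalf fun i => x (i + -(n : ℤ)) := fun x n => by
      funext i
      simp only [shiftR, rightHalf]
      congr 1; push_cast; ring
    let Gm : J → Inhom (tentI t ht) c := fun x =>
      ⟨⟨fun n => itinPt t (rightHalf fun i => x.1 (i + -(n : ℤ))), fun n => by
        rw [tentI_itinPt ht hE (hfour _ (hJs _ x.2 _)), hshift]⟩, fun n => hmemω _ (hJs _ x.2 _)⟩
    have hGmc : Continuous Gm := by
      refine Continuous.subtype_mk (Continuous.subtype_mk ?_ _) _
      refine continuous_pi fun n => (continuous_itinPt ht).comp (continuous_rightHalf.comp ?_)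
      exact continuous_pi fun i => (continuous_apply _).comp continuous_subtype_val
    have hGmb : Function.Bijective Gm := by
      constructor
      · intro x y hxy
        apply Subtype.ext
        have h : ∀ n : ℕ, (rightHalf fun i => x.1 (i + -(n : ℤ))) =
            rightHalf fun i => y.1 (i + -(n : ℤ)) := fun n =>
          itinPt_injective ht hE (hfour _ (hJs _ x.2 _)) (hfour _ (hJs _ y.2 _))
            (congrFun (congrArg (fun p : Inhom (tentI t ht) c => p.1.1) hxy) n)
        funext i
        have := congrFun (h i.natAbs) (i + i.natAbs).toNat
        simp only [rightHalf] at this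
        have e : (((i + i.natAbs).toNat : ℕ) : ℤ) + -(i.natAbs : ℤ) = i := by omega
        rwa [e] at this
      · rintro ⟨⟨u, hu⟩, hmem⟩
        have hex : ∀ n, ∃ x ∈ J, itinPt t (rightHalf x) = u n := fun n => by
          have := hmem n
          rw [homega] at this
          obtain ⟨_, ⟨x, hx, rfl⟩, h⟩ := this
          exact ⟨x, hx, h⟩
        choose y hyJ hyu using hex
        have hstep : ∀ (n i : ℕ), y (n + 1) (i + 1 : ℕ) = y n i := by
          intro n i
          have h1 : itinPt t (shiftR (rightHalf (y (n + 1)))) = itinPt t (rightHalf (y n)) := by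
            rw [← tentI_itinPt ht hE (hfour _ (hyJ _)), hyu, hyu]
            exact hu n
          exact congrFun (itinPt_injective ht hE (hfour _ (hyJ _)).shiftR (hfour _ (hyJ _)) h1) i
        have hsteps : ∀ (k n i : ℕ), y (n + k) (i + k : ℕ) = y n i := by
          intro k
          induction k with
          | zero => intro n i; rfl
          | succ k ih => intro n i; rw [← ih n i]; exact hstep (n + k) (i + k)
        let x : ℤ → Bool := fun i => y i.natAbs (i + i.natAbs)
        have hx : ∀ (n : ℕ) (i : ℤ), -(n : ℤ) ≤ i → x i = y n (i + n) := by
          intro n i hi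
          obtain ⟨j, hj⟩ : ∃ j : ℕ, (j : ℤ) = i + n := ⟨(i + n).toNat, by omega⟩
          obtain ⟨l, hl⟩ : ∃ l : ℕ, (l : ℤ) = i + i.natAbs := ⟨(i + i.natAbs).toNat, by omega⟩
          have e1 := hsteps i.natAbs n j
          have e2 := hsteps n i.natAbs l
          change y i.natAbs (i + i.natAbs) = _
          rw [← hj, ← hl, ← e1, ← e2, Nat.add_comm n, show j + i.natAbs = l + n by omega]
        have hxJ : x ∈ J := by
          rw [← hJc.closure_eq, mem_closure_iff_nhds]
          intro U hU
          obtain ⟨s, hs⟩ := exists_agree_subset x hU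
          let n : ℕ := s.sup Int.natAbs
          refine ⟨fun i => y n (i + n), hs _ fun i hi => (hx n i ?_).symm, hJs _ (hyJ n) n⟩
          have : i.natAbs ≤ n := Finset.le_sup (f := Int.natAbs) hi
          omega
        refine ⟨⟨x, hxJ⟩, Subtype.ext (Subtype.ext (funext fun n => ?_))⟩
        change itinPt t (rightHalf fun i => x (i + -(n : ℤ))) = u n
        rw [← hyu n]
        congr 1
        funext i
        simp only [rightHalf]
        rw [hx n _ (by omega)]
        congr 1; omega
    have : CompactSpace J := isCompact_iff_compactSpace.1 hJcomp
    exact ⟨hGmc.homeoOfEquivCompactToT2 (f := Equiv.ofBijective Gm hGmb)⟩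
  · let Gm : (rightHalf '' J : Set (ℕ → Bool)) → omegaLimitSet (tentI t ht) c := fun z =>
      ⟨itinPt t z.1, by rw [homega]; exact mem_image_of_mem _ z.2⟩
    have hGmc : Continuous Gm :=
      ((continuous_itinPt ht).comp continuous_subtype_val).subtype_mk _
    have hGmb : Function.Bijective Gm := by
      constructor
      · rintro ⟨_, x, hx, rfl⟩ ⟨_, y, hy, rfl⟩ hxy
        exact Subtype.ext (itinPt_injective ht hE (hfour x hx) (hfour y hy)
          (congrArg Subtype.val hxy))
      · rintro ⟨u, hu⟩
        have hu' := hu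
        rw [homega] at hu'
        obtain ⟨z, hz, rfl⟩ := hu'
        exact ⟨⟨z, hz⟩, rfl⟩
    have : CompactSpace (rightHalf '' J : Set (ℕ → Bool)) := isCompact_iff_compactSpace.1 hRcomp
    exact ⟨hGmc.homeoOfEquivCompactToT2 (f := Equiv.ofBijective Gm hGmb)⟩

end Realization

/-! ### Symbolic systems: markers, blocks and right ends -/

section Symbolic

/-- `Mk x i`: the sequence `x` reads `- - -` around position `i`. Such triples occur exactly at the
centres of the markers `+ - - - +`. -/
def Mk (x : ℤ → Bool) (i : ℤ) : Prop := x (i - 1) = false ∧ x i = false ∧ x (i + 1) = false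

lemma Mk.congr {x y : ℤ → Bool} {i j : ℤ} (h : Mk x i) (h1 : x (i - 1) = y (j - 1))
    (h2 : x i = y j) (h3 : x (i + 1) = y (j + 1)) : Mk y j :=
  ⟨h1 ▸ h.1, h2 ▸ h.2.1, h3 ▸ h.2.2⟩

lemma mk_shift (x : ℤ → Bool) (k i : ℤ) : Mk (fun i => x (i + k)) i ↔ Mk x (i + k) := by
  simp only [Mk]
  rw [show i - 1 + k = i + k - 1 by ring, show i + 1 + k = i + k + 1 by ring]

/-- The left half of `L`, a marker `+ - - - +` on the positions `0, …, 4`, and `R`. -/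
def joinMk (L R : ℤ → Bool) (i : ℤ) : Bool :=
  if i < 0 then L i else if i < 5 then decide (i = 0 ∨ i = 4) else R (i - 5)

lemma joinMk_left {L R : ℤ → Bool} {i : ℤ} (h : i < 0) : joinMk L R i = L i := by
  simp [joinMk, h]

lemma joinMk_mid (L R : ℤ → Bool) {i : ℤ} (h0 : 0 ≤ i) (h : i < 5) :
    joinMk L R i = decide (i = 0 ∨ i = 4) := by
  simp [joinMk, h, not_lt.2 h0]

lemma joinMk_right {L R : ℤ → Bool} {i : ℤ} (h : 5 ≤ i) : joinMk L R i = R (i - 5) := by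
  simp [joinMk, not_lt.2 h, show ¬ i < 0 by omega]

lemma mk_joinMk {L R : ℤ → Bool} (hL : ∀ i, ¬ Mk L i) (i : ℤ) :
    Mk (joinMk L R) i ↔ i = 2 ∨ (6 ≤ i ∧ Mk R (i - 5)) := by
  have h0 : joinMk L R 0 = true := by simp [joinMk]
  have h4 : joinMk L R 4 = true := by simp [joinMk]
  constructor
  · intro h
    rcases lt_or_ge i (-1) with hi | hi
    · exfalso
      exact hL i (h.congr (joinMk_left (by omega)) (joinMk_left (by omega))
        (joinMk_left (by omega)))
    rcases lt_or_ge 5 i with hi' | hi'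
    · refine Or.inr ⟨by omega, h.congr ?_ ?_ ?_⟩
      · rw [joinMk_right (by omega)]; congr 1; ring
      · rw [joinMk_right (by omega)]
      · rw [joinMk_right (by omega)]; congr 1; ring
    obtain ⟨ha, hb, hc⟩ := h
    left
    have : i = -1 ∨ i = 0 ∨ i = 1 ∨ i = 2 ∨ i = 3 ∨ i = 4 ∨ i = 5 := by omega
    rcases this with rfl | rfl | rfl | rfl | rfl | rfl | rfl <;> simp_all
  · rintro (rfl | ⟨hi, h⟩)
    · exact ⟨by simp [joinMk], by simp [joinMk], by simp [joinMk]⟩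
    · refine h.congr ?_ ?_ ?_
      · rw [joinMk_right (by omega)]; congr 1; ring
      · rw [joinMk_right (by omega)]
      · rw [joinMk_right (by omega)]; congr 1; ring

/-- The combinatorial data of the construction: two periodic sequences `P false` and `P true` (the
orbits called `A` and `X` in the comments) with common period `D`, and a tree on `ℕ` with root `0`,
every node `v` carrying an orbit `ty v` and a rank `ρ v` that decreases away from the root. -/
structure Sys.{u} where
  /-- a common period -/
  D : ℕ
  D_pos : 0 < D
  /-- the two periodic sequences -/
  P : Bool → ℤ → Bool
  P_per : ∀ U i, P U (i + D) = P U i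
  P_mk : ∀ U i, ¬ Mk (P U) i
  P_ne : ∀ k, ∃ i, P false (i + k) ≠ P true i
  /-- the rank of the root -/
  β : Ordinal.{u}
  /-- a strict bound for the ranks of the nodes carrying `X` -/
  κ : Ordinal.{u}
  κ_le : κ ≤ β
  κ_pos : 0 < κ
  /-- the parent of a node -/
  par : ℕ → ℕ
  /-- the orbit carried by a node -/
  ty : ℕ → Bool
  /-- the rank of a node -/
  ρ : ℕ → Ordinal.{u}
  par_lt : ∀ v, 0 < v → par v < v
  ρ_lt : ∀ v, 0 < v → ρ v < ρ (par v)
  ρ_zero : ρ 0 = β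
  ty_zero : ty 0 = false
  child : ∀ v α, α < ρ v → ∀ K, ∃ w > K, par w = v ∧ ty w = false ∧ ρ w = α
  ty_par : ∀ v, ty v = true → ty (par v) = false
  fin_child : ∀ v, 0 < v → ∃ K, ∀ w, par w = v → ty w = true → w ≤ K
  ρ_ty : ∀ v, ty v = true → ρ v < κ
  /-- whether `X` survives in the second derived set of the space of right halves -/
  flag : Prop
  x_node : ∀ α < κ, ∀ K, ∃ v > K, ty v = true ∧ ρ v = α ∧ (flag → K < par v) ∧ (¬ flag → par v = 0)
  no_flag : ¬ flag → ∀ v, ty v = true → par v = 0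

namespace Sys

variable (T : Sys)

/-- The length `v * D` of the block representing the node `v`. -/
def bl (v : ℕ) : ℤ := v * T.D

lemma bl_zero : T.bl 0 = 0 := by simp [bl]

lemma bl_mono {v w : ℕ} (h : v ≤ w) : T.bl v ≤ T.bl w := by
  unfold bl; exact mul_le_mul_of_nonneg_right (by exact_mod_cast h) (by positivity)

lemma bl_lt {v w : ℕ} (h : v < w) : T.bl v < T.bl w := by
  unfold bl; exact mul_lt_mul_of_pos_right (by exact_mod_cast h) (by exact_mod_cast T.D_pos)

lemma bl_nonneg (v : ℕ) : 0 ≤ T.bl v := by unfold bl; positivity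

lemma le_bl (v : ℕ) : (v : ℤ) ≤ T.bl v := by
  have : (1 : ℤ) ≤ T.D := by exact_mod_cast T.D_pos
  unfold bl; nlinarith [Int.natCast_nonneg v]

lemma D_le_bl {v : ℕ} (h : 0 < v) : (T.D : ℤ) ≤ T.bl v := by
  have : T.bl 1 = T.D := by simp [bl]
  rw [← this]; exact T.bl_mono h

lemma P_bl (U : Bool) (v : ℕ) (i : ℤ) : T.P U (i + T.bl v) = T.P U i := by
  induction v with
  | zero => simp [bl]
  | succ v ih =>
    rw [← ih, ← T.P_per U (i + T.bl v)]
    congr 1; simp only [bl]; push_cast; ring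

lemma P_mod (U : Bool) (i : ℤ) : T.P U (i % T.D) = T.P U i := by
  have hk : ∀ (k : ℕ) (j : ℤ), T.P U (j + k * T.D) = T.P U j := fun k j => T.P_bl U k j
  have e := Int.emod_add_mul_ediv i T.D
  rcases le_total 0 (i / T.D) with h | h
  · obtain ⟨k, hk'⟩ := Int.eq_ofNat_of_zero_le h
    rw [← hk k (i % T.D)]
    congr 1; rw [hk'] at e; linarith
  · obtain ⟨k, hk'⟩ := Int.eq_ofNat_of_zero_le (show 0 ≤ -(i / T.D) by omega)
    rw [← hk k i]
    congr 1
    have : i / T.D = -(k : ℤ) := by omega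
    rw [this] at e; linarith

/-- Two shifted periodic sequences that agree on a window of length `D` carry the same orbit and
are equal. -/
lemma P_window {U V : Bool} {k l a : ℤ}
    (h : ∀ i, a ≤ i → i < a + T.D → T.P U (i + k) = T.P V (i + l)) :
    U = V ∧ ∀ i, T.P U (i + k) = T.P V (i + l) := by
  have hD : (0 : ℤ) < T.D := by exact_mod_cast T.D_pos
  have hall : ∀ i, T.P U (i + k) = T.P V (i + l) := by
    intro i
    have h1 := Int.emod_nonneg (i - a) hD.ne'
    have h2 := Int.emod_lt_of_pos (i - a) hD
    have := h (a + (i - a) % T.D) (by omega) (by omega)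
    rw [← T.P_mod U (i + k), ← T.P_mod V (i + l)]
    rw [← T.P_mod U, ← T.P_mod V] at this
    have e : ∀ m : ℤ, (a + (i - a) % T.D + m) % T.D = (i + m) % T.D := fun m => by
      rw [show a + (i - a) % T.D + m = (i - a) % T.D + (a + m) by ring, Int.emod_add_emod]
      congr 1; ring
    rwa [e, e] at this
  refine ⟨?_, hall⟩
  cases U <;> cases V
  · rfl
  · obtain ⟨i, hi⟩ := T.P_ne (k - l)
    refine absurd ?_ hi
    have := hall (i - l)
    rw [show i - l + k = i + (k - l) by ring, show i - l + l = i by ring] at this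
    exact this
  · obtain ⟨i, hi⟩ := T.P_ne (l - k)
    refine absurd ?_ hi
    have := hall (i - k)
    rw [show i - k + l = i + (l - k) by ring, show i - k + k = i by ring] at this
    exact this.symm
  · rfl

lemma P_window0 {U V : Bool} {a : ℤ} (h : ∀ i, a ≤ i → i < a + T.D → T.P U i = T.P V i) : U = V :=
  (T.P_window (k := 0) (l := 0) (a := a) fun i h1 h2 => by simpa using h i h1 h2).1

/-- The right end attached to a node: `A` periodic for the root, and otherwise the block of the
node, a marker and the right end of the parent. On negative positions the periodic sequence of the
block is continued. -/
def Q : ℕ → ℤ → Bool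
  | 0 => T.P false
  | v + 1 => fun i => joinMk (T.P (T.ty (v + 1))) (Q (T.par (v + 1))) (i - T.bl (v + 1))
termination_by v => v
decreasing_by exact T.par_lt _ (Nat.succ_pos _)

lemma Q_zero : T.Q 0 = T.P false := by rw [Q]

lemma Q_pos {v : ℕ} (h : 0 < v) (i : ℤ) :
    T.Q v i = joinMk (T.P (T.ty v)) (T.Q (T.par v)) (i - T.bl v) := by
  obtain ⟨u, rfl⟩ := Nat.exists_eq_succ_of_ne_zero h.ne'
  rw [Nat.succ_eq_add_one, Q]

lemma Q_left {v : ℕ} {i : ℤ} (h : 0 < v) (hi : i < T.bl v) : T.Q v i = T.P (T.ty v) i := by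
  rw [T.Q_pos h, joinMk_left (by omega), ← T.P_bl _ v]
  congr 1; ring

lemma Q_right {v : ℕ} {i : ℤ} (h : 0 < v) (hi : T.bl v + 5 ≤ i) :
    T.Q v i = T.Q (T.par v) (i - T.bl v - 5) := by
  rw [T.Q_pos h, joinMk_right (by omega)]

lemma mk_Q {v : ℕ} (h : 0 < v) (i : ℤ) :
    Mk (T.Q v) i ↔ i = T.bl v + 2 ∨ (T.bl v + 6 ≤ i ∧ Mk (T.Q (T.par v)) (i - T.bl v - 5)) := by
  have : Mk (T.Q v) i ↔ Mk (joinMk (T.P (T.ty v)) (T.Q (T.par v))) (i - T.bl v) := by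
    unfold Mk
    rw [T.Q_pos h, T.Q_pos h, T.Q_pos h, show i - 1 - T.bl v = i - T.bl v - 1 by ring,
      show i + 1 - T.bl v = i - T.bl v + 1 by ring]
  rw [this, mk_joinMk (T.P_mk _)]
  constructor
  · rintro (h | ⟨h, h'⟩)
    · exact Or.inl (by omega)
    · exact Or.inr ⟨by omega, h'⟩
  · rintro (h | ⟨h, h'⟩)
    · exact Or.inl (by omega)
    · exact Or.inr ⟨by omega, h'⟩

lemma mk_Q_ge {v : ℕ} {i : ℤ} (h : Mk (T.Q v) i) : 0 < v ∧ T.bl v + 2 ≤ i := by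
  rcases Nat.eq_zero_or_pos v with rfl | hv
  · rw [Q_zero] at h; exact absurd h (T.P_mk _ _)
  · refine ⟨hv, ?_⟩
    rcases (T.mk_Q hv i).1 h with h | h <;> omega

/-- The marker of `Q v` centred at `i` ends the block of a node `w` between `v` and the root. -/
lemma Q_struct (v : ℕ) (i : ℤ) (h : Mk (T.Q v) i) :
    ∃ w, 0 < w ∧ T.ρ v ≤ T.ρ w ∧ T.bl w + 2 ≤ i ∧
      ((w = v ∧ i = T.bl v + 2) ∨ (T.bl w + 6 ≤ i ∧ Mk (T.Q v) (i - T.bl w - 5))) ∧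
      ∀ l, -T.bl w ≤ l → T.Q v (i - 2 + l) = joinMk (T.P (T.ty w)) (T.Q (T.par w)) l := by
  induction v using Nat.strong_induction_on generalizing i with
  | _ v ih =>
  obtain ⟨hv, hi⟩ := T.mk_Q_ge h
  rcases (T.mk_Q hv i).1 h with h1 | ⟨h1, h2⟩
  · refine ⟨v, hv, le_rfl, by omega, Or.inl ⟨rfl, h1⟩, fun l _ => ?_⟩
    rw [T.Q_pos hv]; congr 1; omega
  · obtain ⟨w, hw, hρ, hge, hor, hl⟩ := ih _ (T.par_lt v hv) _ h2
    refine ⟨w, hw, (T.ρ_lt v hv).le.trans hρ, by have := T.bl_nonneg v; omega, Or.inr ?_,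
      fun l hl' => ?_⟩
    · rcases hor with ⟨hwv, hiw⟩ | ⟨hiw, hm⟩
      · subst hwv
        refine ⟨by have := T.bl_nonneg v; omega, (T.mk_Q hv _).2 (Or.inl (by omega))⟩
      · have hb := T.bl_nonneg v
        have := (T.mk_Q_ge hm).2
        have hb' := T.bl_nonneg (T.par v)
        refine ⟨by omega, (T.mk_Q hv _).2 (Or.inr ⟨by omega, ?_⟩)⟩
        rwa [show i - T.bl w - 5 - T.bl v - 5 = i - T.bl v - 5 - T.bl w - 5 by ring]
    · rw [← hl l hl', T.Q_right hv (by omega)]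
      congr 1; ring

/-- The possible right ends: `some v` stands for `Q v`, and `none` for the periodic sequence `X`. -/
def RE : Option ℕ → ℤ → Bool
  | some v => T.Q v
  | none => T.P true

/-- A right end is recognised by its initial segment up to its first marker. -/
lemma RE_eq_some {r : Option ℕ} {v : ℕ} (hv : 0 < v)
    (h : ∀ i, 0 ≤ i → i < T.bl v + 4 → T.RE r i = T.Q v i) : r = some v := by
  have hb := T.bl_nonneg v
  have hm : Mk (T.Q v) (T.bl v + 2) := (T.mk_Q hv _).2 (Or.inl rfl)
  have hm' : Mk (T.RE r) (T.bl v + 2) :=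
    hm.congr (h _ (by omega) (by omega)).symm (h _ (by omega) (by omega)).symm
      (h _ (by omega) (by omega)).symm
  cases r with
  | none => exact absurd hm' (T.P_mk _ _)
  | some u =>
    obtain ⟨hu, hu'⟩ := T.mk_Q_ge hm'
    have hbu := T.bl_nonneg u
    have hle : T.bl u ≤ T.bl v := by omega
    have hmu : Mk (T.Q u) (T.bl u + 2) := (T.mk_Q hu _).2 (Or.inl rfl)
    have hmv : Mk (T.Q v) (T.bl u + 2) :=
      hmu.congr (h _ (by omega) (by omega)) (h _ (by omega) (by omega)) (h _ (by omega) (by omega))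
    have hge := (T.mk_Q_ge hmv).2
    rcases lt_trichotomy u v with hlt | rfl | hlt
    · have := T.bl_lt hlt; omega
    · rfl
    · have := T.bl_lt hlt; omega

/-- The index of the periodic right end carrying `U`. -/
def perRE (U : Bool) : Option ℕ := if U then none else some 0

lemma RE_perRE (U : Bool) : T.RE (perRE U) = T.P U := by
  cases U
  · exact T.Q_zero
  · rfl

/-- A right end starting with a long word of the orbit `U` is periodic or starts with a long
block. -/
lemma RE_of_agree {r : Option ℕ} {U : Bool} {N : ℤ} (hN : T.D ≤ N)
    (h : ∀ i, 0 ≤ i → i < N → T.RE r i = T.P U i) :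
    r = perRE U ∨ ∃ w, 0 < w ∧ r = some w ∧ T.ty w = U ∧ N ≤ T.bl w + 3 := by
  have hper : ∀ V, r = perRE V → r = perRE U := fun V hV => by
    rw [hV, T.RE_perRE] at h
    have : V = U := T.P_window0 (a := 0) fun i h1 h2 => h i h1 (by omega)
    rw [hV, this]
  cases r with
  | none => exact Or.inl (hper true rfl)
  | some w =>
    rcases Nat.eq_zero_or_pos w with rfl | hw
    · exact Or.inl (hper false rfl)
    · refine Or.inr ⟨w, hw, rfl, ?_, ?_⟩
      · refine T.P_window0 (a := 0) fun i h1 h2 => ?_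
        rw [← h i h1 (by omega)]
        exact (T.Q_left hw (by have := T.D_le_bl hw; omega)).symm
      · by_contra hlt
        have hb := T.bl_nonneg w
        have hm : Mk (T.Q w) (T.bl w + 2) := (T.mk_Q hw _).2 (Or.inl rfl)
        exact T.P_mk U _ (hm.congr (h _ (by omega) (by omega)) (h _ (by omega) (by omega))
          (h _ (by omega) (by omega)))

lemma RE_injective {r r' : Option ℕ} (h : ∀ i, 0 ≤ i → T.RE r i = T.RE r' i) : r = r' := by
  have main : ∀ U r, (∀ i, 0 ≤ i → T.RE r i = T.P U i) → r = perRE U := by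
    intro U r h
    rcases T.RE_of_agree le_rfl (fun i h1 _ => h i h1) with h' | ⟨w, hw, rfl, -⟩
    · exact h'
    · exfalso
      have hb := T.bl_nonneg w
      have hm : Mk (T.Q w) (T.bl w + 2) := (T.mk_Q hw _).2 (Or.inl rfl)
      exact T.P_mk U _ (hm.congr (h _ (by omega)) (h _ (by omega)) (h _ (by omega)))
  cases r' with
  | none => exact main true r h
  | some v =>
    rcases Nat.eq_zero_or_pos v with rfl | hv
    · exact main false r fun i hi => by rw [h i hi]; exact congrFun T.Q_zero i
    · exact T.RE_eq_some hv fun i h1 _ => h i h1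

/-- The points of the symbolic space. -/
inductive Idx : Type
  /-- the shifts of the periodic sequences -/
  | per (U : Bool) (k : ℤ) : Idx
  /-- the shifts of: `A`, a marker, `Q v` -/
  | nd (v : ℕ) (k : ℤ) : Idx
  /-- the shifts of: `A`, a marker, `X` -/
  | ax (k : ℤ) : Idx
  /-- the shifts of: `X`, a marker, `A` -/
  | xa (k : ℤ) : Idx

/-- The two-sided sequence represented by an index. -/
def pt : Idx → ℤ → Bool
  | .per U k => fun i => T.P U (i + k)
  | .nd v k => fun i => joinMk (T.P false) (T.Q v) (i + k)
  | .ax k => fun i => joinMk (T.P false) (T.P true) (i + k)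
  | .xa k => fun i => joinMk (T.P true) (T.P false) (i + k)

/-- The rank of a point, which will turn out to be its Cantor–Bendixson rank. -/
def rk : Idx → Ordinal
  | .per U _ => (if U then T.κ else T.β) + 1
  | .nd v _ => T.ρ v
  | .ax _ => T.κ
  | .xa _ => T.κ

/-- `Ends a U r`: the point `a` has left end `U` and right end `r` after its first marker. -/
inductive Ends : Idx → Bool → Option ℕ → Prop
  | nd (v : ℕ) (k : ℤ) : Ends (.nd v k) false (some v)
  | ax (k : ℤ) : Ends (.ax k) false none
  | xa (k : ℤ) : Ends (.xa k) true (some 0)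

/-- At a marker centred at `j`, a point looks like a left end `U` followed by a right end (if the
marker is the first one), or like the block of a node `w` followed by `Q (par w)`. -/
lemma marker_struct (a : Idx) (j : ℤ) (h : Mk (T.pt a) j) :
    (∃ U r, Ends a U r ∧ ∀ i, T.pt a (j - 2 + i) = joinMk (T.P U) (T.RE r) i) ∨
    (∃ w, 0 < w ∧ T.rk a ≤ T.ρ w ∧ Mk (T.pt a) (j - T.bl w - 5) ∧
      ∀ i, -T.bl w ≤ i → T.pt a (j - 2 + i) = joinMk (T.P (T.ty w)) (T.RE (some (T.par w))) i) := by
  cases a with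
  | per U k => exact absurd ((mk_shift _ _ _).1 h) (T.P_mk _ _)
  | nd v k =>
    rcases (mk_joinMk (T.P_mk _) _).1 ((mk_shift _ _ _).1 h) with h1 | ⟨h1, h2⟩
    · refine Or.inl ⟨false, some v, .nd v k, fun i => ?_⟩
      change joinMk (T.P false) (T.Q v) (j - 2 + i + k) = _
      rw [show j - 2 + i + k = i by omega]; rfl
    · obtain ⟨w, hw, hρ, hge, hor, hl⟩ := T.Q_struct v _ h2
      refine Or.inr ⟨w, hw, hρ, (mk_shift _ _ _).2 ((mk_joinMk (T.P_mk _) _).2 ?_), fun i hi => ?_⟩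
      · rcases hor with ⟨rfl, h'⟩ | ⟨h', hm⟩
        · exact Or.inl (by omega)
        · have := T.bl_nonneg v
          have := (T.mk_Q_ge hm).2
          refine Or.inr ⟨by omega, ?_⟩
          rwa [show j - T.bl w - 5 + k - 5 = j + k - 5 - T.bl w - 5 by ring]
      · rw [RE, ← hl i hi]
        change joinMk (T.P false) (T.Q v) (j - 2 + i + k) = _
        rw [joinMk_right (by omega)]
        congr 1; ring
  | ax k =>
    rcases (mk_joinMk (T.P_mk _) _).1 ((mk_shift _ _ _).1 h) with h1 | ⟨h1, h2⟩
    · refine Or.inl ⟨false, none, .ax k, fun i => ?_⟩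
      change joinMk (T.P false) (T.P true) (j - 2 + i + k) = _
      rw [show j - 2 + i + k = i by omega]; rfl
    · exact absurd h2 (T.P_mk _ _)
  | xa k =>
    rcases (mk_joinMk (T.P_mk _) _).1 ((mk_shift _ _ _).1 h) with h1 | ⟨h1, h2⟩
    · refine Or.inl ⟨true, some 0, .xa k, fun i => ?_⟩
      change joinMk (T.P true) (T.P false) (j - 2 + i + k) = _
      rw [show j - 2 + i + k = i by omega, RE, Q_zero]
    · exact absurd h2 (T.P_mk _ _)

/-- The block before a marker, if it continues a long word of `U`, carries `U` and is long. -/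
lemma left_of_agree {x : ℤ → Bool} {j : ℤ} {w : ℕ} {U : Bool} {N : ℤ} (hw : 0 < w)
    (hN : T.D ≤ N) (hm : Mk x (j - T.bl w - 5))
    (hl : ∀ i, -T.bl w ≤ i → x (j - 2 + i) = joinMk (T.P (T.ty w)) (T.RE (some (T.par w))) i)
    (h : ∀ i, -N ≤ i → i < 0 → x (j - 2 + i) = T.P U i) : T.ty w = U ∧ N ≤ T.bl w + 3 := by
  constructor
  · refine T.P_window0 (a := -T.D) fun i h1 h2 => ?_
    rw [← h i (by omega) (by omega), hl i (by have := T.D_le_bl hw; omega),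
      joinMk_left (by omega)]
  · by_contra hlt
    have hb := T.bl_nonneg w
    have e : ∀ i, -N ≤ i → i < 0 → x (j - 2 + i) = T.P U i := h
    refine T.P_mk U (-T.bl w - 3) (hm.congr ?_ ?_ ?_)
    · rw [← e _ (by omega) (by omega)]; congr 1; ring
    · rw [← e _ (by omega) (by omega)]; congr 1; ring
    · rw [← e _ (by omega) (by omega)]; congr 1; ring

/-- Away from its markers, `Q v` is periodic. -/
lemma Q_window (v : ℕ) (s t : ℤ) (h : ∀ j, s - 5 ≤ j → j ≤ t + 5 → ¬ Mk (T.Q v) j) :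
    ∃ U k, (∀ i, s ≤ i → i ≤ t → T.Q v i = T.P U (i + k)) ∧ (U = true → T.ρ v < T.κ) := by
  induction v using Nat.strong_induction_on generalizing s t with
  | _ v ih =>
  rcases Nat.eq_zero_or_pos v with rfl | hv
  · exact ⟨false, 0, fun i _ _ => by rw [Q_zero, add_zero], by simp⟩
  rcases lt_or_ge t (T.bl v) with ht | ht
  · exact ⟨T.ty v, 0, fun i _ h2 => by rw [T.Q_left hv (by omega), add_zero], T.ρ_ty v⟩
  rcases lt_or_ge s (T.bl v + 5) with hs | hs
  · exact absurd ((T.mk_Q hv _).2 (Or.inl rfl)) (h (T.bl v + 2) (by omega) (by omega))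
  · obtain ⟨U, k, h1, h2⟩ := ih _ (T.par_lt v hv) (s - T.bl v - 5) (t - T.bl v - 5)
      (fun j hj1 hj2 hm => h (j + T.bl v + 5) (by omega) (by omega) ((T.mk_Q hv _).2 (Or.inr
        ⟨by have := T.mk_Q_ge hm; have := T.bl_nonneg (T.par v); omega, by
          rwa [show j + T.bl v + 5 - T.bl v - 5 = j by ring]⟩)))
    refine ⟨U, k - T.bl v - 5, fun i hi1 hi2 => ?_, fun hU => (T.ρ_lt v hv).trans (h2 hU)⟩
    rw [T.Q_right hv (by omega), h1 _ (by omega) (by omega)]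
    congr 1; ring

/-- Away from markers, every point is periodic, and the points other than the shifts of `X` itself
that show a long word of `X` have rank at most `κ`. -/
lemma pt_window (a : Idx) (N : ℤ) (h : ∀ j, -N - 5 ≤ j → j ≤ N + 5 → ¬ Mk (T.pt a) j) :
    ∃ U k, (∀ i, -N ≤ i → i ≤ N → T.pt a i = T.P U (i + k)) ∧
      (U = true → (∃ l, a = .per true l) ∨ T.rk a ≤ T.κ) := by
  have main : ∀ (V : Bool) (r : Option ℕ) (k : ℤ),
      (∀ j, -N - 5 ≤ j → j ≤ N + 5 → ¬ Mk (fun i => joinMk (T.P V) (T.RE r) (i + k)) j) →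
      ∃ U l, (∀ i, -N ≤ i → i ≤ N → joinMk (T.P V) (T.RE r) (i + k) = T.P U (i + l)) ∧
        (U = true → (V = true ∨ r = none ∨ ∃ v, r = some v ∧ T.ρ v < T.κ)) := by
    intro V r k h
    have h' : ∀ j, -N - 5 + k ≤ j → j ≤ N + 5 + k → ¬ Mk (joinMk (T.P V) (T.RE r)) j :=
      fun j h1 h2 hm => h (j - k) (by omega) (by omega)
        ((mk_shift _ _ _).2 (by rwa [show j - k + k = j by ring]))
    rcases lt_or_ge (N + k) 0 with ht | ht
    · exact ⟨V, k, fun i _ h2 => by rw [joinMk_left (by omega)], fun hV => Or.inl hV⟩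
    rcases lt_or_ge (-N + k) 5 with hs | hs
    · exact absurd ((mk_joinMk (T.P_mk _) 2).2 (Or.inl rfl)) (h' 2 (by omega) (by omega))
    cases r with
    | none =>
      refine ⟨true, k - 5, fun i h1 _ => ?_, fun _ => Or.inr (Or.inl rfl)⟩
      rw [joinMk_right (by omega), RE]
      congr 1; ring
    | some v =>
      obtain ⟨U, l, h1, h2⟩ := T.Q_window v (-N + k - 5) (N + k - 5)
        (fun j hj1 hj2 hm => by
          have := T.mk_Q_ge hm
          have hb := T.bl_nonneg v
          exact h' (j + 5) (by omega) (by omega) ((mk_joinMk (T.P_mk _) _).2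
            (Or.inr ⟨by omega, by rwa [show j + 5 - 5 = j by ring]⟩)))
      refine ⟨U, l + k - 5, fun i hi1 hi2 => ?_, fun hU => Or.inr (Or.inr ⟨v, rfl, h2 hU⟩)⟩
      rw [joinMk_right (by omega), RE, h1 _ (by omega) (by omega)]
      congr 1; ring
  cases a with
  | per U k => exact ⟨U, k, fun i _ _ => rfl, fun hU => Or.inl ⟨k, by rw [hU]⟩⟩
  | nd v k =>
    obtain ⟨U, l, h1, h2⟩ := main false (some v) k h
    refine ⟨U, l, h1, fun hU => Or.inr ?_⟩
    rcases h2 hU with h | h | ⟨u, hu, h⟩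
    · simp at h
    · simp at h
    · rw [Option.some_inj] at hu; rw [← hu] at h; exact h.le
  | ax k =>
    obtain ⟨U, l, h1, -⟩ := main false none k h
    exact ⟨U, l, h1, fun _ => Or.inr le_rfl⟩
  | xa k =>
    have e : T.RE (some 0) = T.P false := T.Q_zero
    obtain ⟨U, l, h1, -⟩ := main true (some 0) k (by rw [e]; exact h)
    rw [e] at h1
    exact ⟨U, l, h1, fun _ => Or.inr le_rfl⟩

end Sys

end Symbolic

/-! ### Approximation of points by points of smaller rank -/

namespace Sys

variable (T : Sys)

/-- Agreement of two sequences on the window `[-N, N]`. -/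
def Agree (N : ℤ) (x y : ℤ → Bool) : Prop := ∀ i, -N ≤ i → i ≤ N → x i = y i

lemma Agree.symm {N : ℤ} {x y : ℤ → Bool} (h : Agree N x y) : Agree N y x :=
  fun i h1 h2 => (h i h1 h2).symm

lemma Agree.trans {N : ℤ} {x y z : ℤ → Bool} (h : Agree N x y) (h' : Agree N y z) : Agree N x z :=
  fun i h1 h2 => (h i h1 h2).trans (h' i h1 h2)

lemma Agree.mono {N M : ℤ} {x y : ℤ → Bool} (h : Agree N x y) (hM : M ≤ N) : Agree M x y :=
  fun i h1 h2 => h i (by omega) (by omega)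

lemma ρ_lt_β {v : ℕ} (h : 0 < v) : T.ρ v < T.β := by
  induction v using Nat.strong_induction_on with
  | _ v ih =>
  have h1 := T.ρ_lt v h
  rcases Nat.eq_zero_or_pos (T.par v) with h0 | h0
  · rwa [h0, T.ρ_zero] at h1
  · exact h1.trans (ih _ (T.par_lt v h) h0)

lemma ρ_le_β (v : ℕ) : T.ρ v ≤ T.β := by
  rcases Nat.eq_zero_or_pos v with rfl | h
  · exact T.ρ_zero.le
  · exact (T.ρ_lt_β h).le

lemma ty_pos {v : ℕ} (h : T.ty v = true) : 0 < v := by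
  rcases Nat.eq_zero_or_pos v with rfl | h0
  · rw [T.ty_zero] at h; cases h
  · exact h0

lemma Ends.rk_eq {a b : Idx} {U : Bool} {r : Option ℕ} (ha : Ends a U r) (hb : Ends b U r) :
    T.rk a = T.rk b := by
  cases ha <;> cases hb <;> rfl

/-- Every point is periodic or has a first marker. -/
lemma per_or_ends (a : Idx) : (∃ U k, a = .per U k) ∨
    ∃ U r j, Ends a U r ∧ ∀ i, T.pt a (j - 2 + i) = joinMk (T.P U) (T.RE r) i := by
  cases a with
  | per U k => exact Or.inl ⟨U, k, rfl⟩
  | nd v k =>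
    refine Or.inr ⟨false, some v, 2 - k, .nd v k, fun i => ?_⟩
    simp only [pt, RE]; congr 1; ring
  | ax k =>
    refine Or.inr ⟨false, none, 2 - k, .ax k, fun i => ?_⟩
    simp only [pt, RE]; congr 1; ring
  | xa k =>
    refine Or.inr ⟨true, some 0, 2 - k, .xa k, fun i => ?_⟩
    simp only [pt, RE, Q_zero]; congr 1; ring

/-- What a point looks like if it agrees with `joinMk (P U) (RE r)` on a long window around the
marker. -/
lemma compare (b : Idx) {U : Bool} {r : Option ℕ} {j M : ℤ} (hM : T.D ≤ M)
    (h : ∀ i, -M ≤ i → i < M + 5 → T.pt b (j - 2 + i) = joinMk (T.P U) (T.RE r) i) :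
    (∃ r', Ends b U r' ∧ (∀ i, T.pt b (j - 2 + i) = joinMk (T.P U) (T.RE r') i) ∧
      ∀ i, 0 ≤ i → i < M → T.RE r' i = T.RE r i) ∨
    ∃ w, 0 < w ∧ T.rk b ≤ T.ρ w ∧ T.ty w = U ∧ M ≤ T.bl w + 3 ∧
      (∀ i, -T.bl w ≤ i → T.pt b (j - 2 + i) = joinMk (T.P U) (T.RE (some (T.par w))) i) ∧
      ∀ i, 0 ≤ i → i < M → T.RE (some (T.par w)) i = T.RE r i := by
  have hD : (0 : ℤ) < T.D := by exact_mod_cast T.D_pos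
  have hm0 : Mk (joinMk (T.P U) (T.RE r)) 2 := (mk_joinMk (T.P_mk _) _).2 (Or.inl rfl)
  have hm : Mk (T.pt b) j := by
    refine hm0.congr ?_ ?_ ?_
    · rw [← h _ (by omega) (by omega)]; congr 1; ring
    · rw [← h _ (by omega) (by omega)]; congr 1; ring
    · rw [← h _ (by omega) (by omega)]; congr 1; ring
  have hR : ∀ r' : Option ℕ, (∀ V, (∀ i, 0 ≤ i → T.pt b (j - 2 + i) = joinMk (T.P V) (T.RE r') i) →
      ∀ i, 0 ≤ i → i < M → T.RE r' i = T.RE r i) := by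
    intro r' V h' i h1 h2
    have e1 := h' (i + 5) (by omega)
    have e2 := h (i + 5) (by omega) (by omega)
    rw [e1, joinMk_right (by omega), joinMk_right (by omega)] at e2
    simpa using e2
  rcases T.marker_struct b j hm with ⟨V, r', hE, hj⟩ | ⟨w, hw, hρ, hmw, hl⟩
  · have hV : V = U := T.P_window0 (a := -T.D) fun i h1 h2 => by
      have e1 := hj i
      rw [h i (by omega) (by omega), joinMk_left (by omega), joinMk_left (by omega)] at e1
      exact e1.symm
    subst hV
    exact Or.inl ⟨r', hE, hj, hR r' V fun i _ => hj i⟩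
  · obtain ⟨h1, h2⟩ := T.left_of_agree hw hM hmw hl (U := U) fun i h1 h2 => by
      rw [h i h1 (by omega), joinMk_left h2]
    exact Or.inr ⟨w, hw, hρ, h1, h2, h1 ▸ hl,
      hR _ (T.ty w) fun i hi => hl i (by have := T.bl_nonneg w; omega)⟩

/-- Every point has a neighbourhood in which all other points have smaller rank. -/
lemma isolate (a : Idx) : ∃ N, ∀ b, Agree N (T.pt b) (T.pt a) →
    (T.pt b = T.pt a ∧ T.rk b = T.rk a) ∨ T.rk b < T.rk a := by
  have hD : (0 : ℤ) < T.D := by exact_mod_cast T.D_pos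
  rcases T.per_or_ends a with ⟨U, k, rfl⟩ | ⟨U, r, j, hE, hj⟩
  · refine ⟨T.D + 10, fun b hb => ?_⟩
    have hno : ∀ j, -(T.D : ℤ) - 5 ≤ j → j ≤ T.D + 5 → ¬ Mk (T.pt b) j := fun j h1 h2 hm =>
      T.P_mk U (j + k) ((mk_shift _ _ _).1 (hm.congr (hb _ (by omega) (by omega))
        (hb _ (by omega) (by omega)) (hb _ (by omega) (by omega))))
    obtain ⟨V, l, h1, h2⟩ := T.pt_window b T.D hno
    have hVU := T.P_window (U := V) (V := U) (k := l) (l := k) (a := 0) fun i h3 h4 => by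
      rw [← h1 i (by omega) (by omega)]; exact hb i (by omega) (by omega)
    have hper : ∀ W m, b = .per W m → T.pt b = T.pt (.per U k) ∧ T.rk b = T.rk (.per U k) := by
      rintro W m rfl
      have := T.P_window (U := W) (V := U) (k := m) (l := k) (a := 0) fun i h3 h4 =>
        hb i (by omega) (by omega)
      obtain ⟨rfl, h⟩ := this
      exact ⟨funext h, rfl⟩
    cases U with
    | true =>
      rcases h2 hVU.1 with ⟨m, hm⟩ | h
      · exact Or.inl (hper _ _ hm)
      · exact Or.inr (by simpa [rk, Order.lt_add_one_iff] using h)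
    | false =>
      cases b with
      | per W m => exact Or.inl (hper _ _ rfl)
      | nd v m => exact Or.inr (by simpa [rk, Order.lt_add_one_iff] using T.ρ_le_β v)
      | ax m => exact Or.inr (by simpa [rk, Order.lt_add_one_iff] using T.κ_le)
      | xa m => exact Or.inr (by simpa [rk, Order.lt_add_one_iff] using T.κ_le)
  · -- the window reaches beyond the first marker of `RE r`
    obtain ⟨M, hM, hM'⟩ : ∃ M : ℤ, T.D ≤ M ∧ ∀ v, r = some v → T.bl v + 4 ≤ M := by
      cases r with
      | none => exact ⟨T.D, le_rfl, by simp⟩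
      | some v =>
        refine ⟨T.D + T.bl v + 4, by have := T.bl_nonneg v; omega, ?_⟩
        intro u hu; rw [Option.some_inj] at hu; subst hu; omega
    refine ⟨|j| + M + 5, fun b hb => ?_⟩
    have hj1 := le_abs_self j
    have hj2 := neg_abs_le j
    have hcmp := T.compare b (U := U) (r := r) (j := j) hM fun i h1 h2 => by
      rw [← hj]; exact hb _ (by omega) (by omega)
    have heq : ∀ r', r' = r → Ends b U r' →
        (∀ i, T.pt b (j - 2 + i) = joinMk (T.P U) (T.RE r') i) →
        T.pt b = T.pt a ∧ T.rk b = T.rk a := by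
      rintro r' rfl hE' hj'
      refine ⟨funext fun i => ?_, Ends.rk_eq T hE' hE⟩
      have := (hj' (i - j + 2)).trans (hj (i - j + 2)).symm
      rwa [show j - 2 + (i - j + 2) = i by ring] at this
    cases hE with
    | nd v k =>
      have hs : ∀ r', (∀ i, 0 ≤ i → i < M → T.RE r' i = T.RE (some v) i) → 0 < v → r' = some v :=
        fun r' h hv => T.RE_eq_some hv fun i h1 h2 => h i h1 (by have := hM' v rfl; omega)
      rcases hcmp with ⟨r', hE', hj', hr⟩ | ⟨w, hw, hρ, hty, hlen, -, hr⟩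
      · rcases Nat.eq_zero_or_pos v with rfl | hv
        · cases hE' with
          | nd u l =>
            rcases Nat.eq_zero_or_pos u with rfl | hu
            · exact Or.inl (heq _ rfl (.nd _ _) hj')
            · right; simp only [rk]; rw [T.ρ_zero]; exact T.ρ_lt_β hu
          | ax l =>
            exfalso
            have : true = false := T.P_window0 (a := 0) fun i h1 h2 => by
              have := hr i h1 (by omega)
              rwa [RE, RE, T.Q_zero] at this
            cases this
        · exact Or.inl (heq r' (hs r' hr hv) hE' hj')
      · right
        refine hρ.trans_lt ?_
        rcases Nat.eq_zero_or_pos v with rfl | hv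
        · simp only [rk]; rw [T.ρ_zero]; exact T.ρ_lt_β hw
        · have := hs _ hr hv
          rw [Option.some_inj] at this
          simp only [rk]; rw [← this]; exact T.ρ_lt w hw
    | ax k =>
      rcases hcmp with ⟨r', hE', hj', hr⟩ | ⟨w, hw, hρ, hty, hlen, -, hr⟩
      · rcases T.RE_of_agree (U := true) hM hr with h | ⟨u, hu, rfl, hty, -⟩
        · exact Or.inl (heq _ h hE' hj')
        · cases hE'; exact Or.inr (T.ρ_ty u hty)
      · rcases T.RE_of_agree (U := true) hM hr with h | ⟨u, hu, h, hty, -⟩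
        · simp [perRE] at h
        · rw [Option.some_inj] at h
          right
          exact hρ.trans_lt ((T.ρ_lt w hw).trans (h ▸ T.ρ_ty u hty))
    | xa k =>
      rcases hcmp with ⟨r', hE', hj', hr⟩ | ⟨w, hw, hρ, hty, hlen, -, hr⟩
      · cases hE'; exact Or.inl (heq _ rfl (.xa _) hj')
      · exact Or.inr (hρ.trans_lt (T.ρ_ty w hty))

lemma rk_congr {a b : Idx} (h : T.pt a = T.pt b) : T.rk a = T.rk b := by
  obtain ⟨N, hN⟩ := T.isolate a
  obtain ⟨N', hN'⟩ := T.isolate b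
  rcases hN b (fun i _ _ => by rw [h]) with h1 | h1
  · exact h1.2.symm
  · rcases hN' a (fun i _ _ => by rw [h]) with h2 | h2
    · exact h2.2
    · exact absurd h1 h2.asymm

/-- Seen from the marker after the block of `w`, the point `nd w` looks like the orbit of `w`
followed by the right end of the parent. -/
lemma nd_shift {w : ℕ} (hw : 0 < w) {i : ℤ} (hi : -T.bl w ≤ i) :
    joinMk (T.P false) (T.Q w) (i + T.bl w + 5) = joinMk (T.P (T.ty w)) (T.Q (T.par w)) i := by
  rw [joinMk_right (by omega), T.Q_pos hw]; congr 1; ring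

lemma joinMk_congr {L L' R R' : ℤ → Bool} {i : ℤ} (hL : i < 0 → L i = L' i)
    (hR : 5 ≤ i → R (i - 5) = R' (i - 5)) : joinMk L R i = joinMk L' R' i := by
  rcases lt_or_ge i 0 with h | h
  · rw [joinMk_left h, joinMk_left h, hL h]
  rcases lt_or_ge i 5 with h' | h'
  · rw [joinMk_mid _ _ h h', joinMk_mid _ _ h h']
  · rw [joinMk_right h', joinMk_right h', hR h']

lemma Q_eq_P {w : ℕ} {i : ℤ} (h : i < T.bl w) : T.Q w i = T.P (T.ty w) i := by
  rcases Nat.eq_zero_or_pos w with rfl | hw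
  · rw [T.Q_zero, T.ty_zero]
  · exact T.Q_left hw h

/-- With the marker far to the left, `joinMk L (P U)` agrees with a shift of `P U` on any prescribed
right half-line. -/
lemma agree_far_left (L : ℤ → Bool) (U : Bool) (k N : ℤ) :
    ∃ l, ∀ i, -N ≤ i → joinMk L (T.P U) (i + l) = T.P U (i + k) := by
  refine ⟨k + 5 + T.bl (N.natAbs + k.natAbs), fun i hi => ?_⟩
  have := T.le_bl (N.natAbs + k.natAbs)
  push_cast at this
  have h1 := neg_abs_le N
  have h2 := le_abs_self N
  have h3 := neg_abs_le k
  rw [joinMk_right (by omega), ← T.P_bl U (N.natAbs + k.natAbs) (i + k)]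
  congr 1; ring

lemma agree_far_right (R : ℤ → Bool) (U : Bool) (k N : ℤ) :
    ∃ l, ∀ i, i ≤ N → joinMk (T.P U) R (i + l) = T.P U (i + k) := by
  refine ⟨k - T.bl (N.natAbs + k.natAbs + 1), fun i hi => ?_⟩
  have := T.le_bl (N.natAbs + k.natAbs + 1)
  push_cast at this
  have h2 := le_abs_self N
  have h3 := le_abs_self k
  rw [joinMk_left (by omega), ← T.P_bl U (N.natAbs + k.natAbs + 1)]
  congr 1; ring

lemma agree_nd {v w : ℕ} (hw : 0 < w) (hty : T.ty w = false) (hp : T.par w = v) (k N : ℤ)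
    (hlen : N.natAbs + k.natAbs ≤ w) :
    Agree N (T.pt (.nd w (k + T.bl w + 5))) (T.pt (.nd v k)) := by
  intro i h1 h2
  have := T.le_bl w
  have h3 := neg_abs_le N
  have h4 := le_abs_self N
  have h5 := neg_abs_le k
  simp only [pt]
  rw [show i + (k + T.bl w + 5) = i + k + T.bl w + 5 by ring, T.nd_shift hw (by omega), hty, hp]

lemma agree_ax {v : ℕ} (hty : T.ty v = true) (k N : ℤ) (hlen : N.natAbs + k.natAbs ≤ v) :
    Agree N (T.pt (.nd v k)) (T.pt (.ax k)) := by
  intro i h1 h2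
  have := T.le_bl v
  have h4 := le_abs_self N
  have h5 := le_abs_self k
  refine joinMk_congr (fun _ => rfl) fun h => ?_
  rw [T.Q_eq_P (by omega), hty]

lemma agree_xa {w : ℕ} (hty : T.ty w = true) (k N : ℤ) (hlen : N.natAbs + k.natAbs ≤ w)
    (hp : T.par w = 0 ∨ N.natAbs + k.natAbs ≤ T.par w) :
    Agree N (T.pt (.nd w (k + T.bl w + 5))) (T.pt (.xa k)) := by
  intro i h1 h2
  have := T.le_bl w
  have hw := T.ty_pos hty
  have h3 := neg_abs_le N
  have h4 := le_abs_self N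
  have h5 := neg_abs_le k
  have h6 := le_abs_self k
  simp only [pt]
  rw [show i + (k + T.bl w + 5) = i + k + T.bl w + 5 by ring, T.nd_shift hw (by omega), hty]
  refine joinMk_congr (fun _ => rfl) fun h => ?_
  rcases hp with hp | hp
  · rw [hp, T.Q_zero]
  · have := T.le_bl (T.par w)
    rw [T.Q_eq_P (by omega), T.ty_par _ hty]

lemma x_node' (α : Ordinal) (hα : α < T.κ) (K : ℕ) :
    ∃ v > K, T.ty v = true ∧ T.ρ v = α ∧ (T.par v = 0 ∨ K ≤ T.par v) := by
  obtain ⟨v, hv, hty, hρ, h1, h2⟩ := T.x_node α hα K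
  refine ⟨v, hv, hty, hρ, ?_⟩
  by_cases hf : T.flag
  · exact Or.inr (h1 hf).le
  · exact Or.inl (h2 hf)

/-- Every point is a limit of points of arbitrarily large smaller rank. -/
lemma approx (a : Idx) (α : Ordinal) (hα : α < T.rk a) (N : ℤ) :
    ∃ b, Agree N (T.pt b) (T.pt a) ∧ α ≤ T.rk b ∧ T.rk b < T.rk a := by
  cases a with
  | per U k =>
    cases U with
    | false =>
      obtain ⟨l, hl⟩ := T.agree_far_left (T.P false) false k N
      refine ⟨.nd 0 l, fun i h1 _ => ?_, ?_, ?_⟩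
      · simp only [pt, Q_zero]; exact hl i h1
      · simpa [rk, T.ρ_zero, Order.lt_add_one_iff] using hα
      · simp [rk, T.ρ_zero]
    | true =>
      obtain ⟨l, hl⟩ := T.agree_far_left (T.P false) true k N
      refine ⟨.ax l, fun i h1 _ => hl i h1, ?_, ?_⟩
      · simpa [rk, Order.lt_add_one_iff] using hα
      · simp [rk]
  | nd v k =>
    obtain ⟨w, hw, hp, hty, hρ⟩ := T.child v α hα (N.natAbs + k.natAbs)
    refine ⟨_, T.agree_nd (by omega) hty hp k N hw.le, hρ.ge, ?_⟩
    change T.ρ w < T.ρ v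
    rwa [hρ]
  | ax k =>
    obtain ⟨v, hv, hty, hρ, -⟩ := T.x_node' α hα (N.natAbs + k.natAbs)
    refine ⟨_, T.agree_ax hty k N hv.le, hρ.ge, ?_⟩
    change T.ρ v < T.κ
    rwa [hρ]
  | xa k =>
    obtain ⟨v, hv, hty, hρ, hp⟩ := T.x_node' α hα (N.natAbs + k.natAbs)
    refine ⟨_, T.agree_xa hty k N hv.le hp, hρ.ge, ?_⟩
    change T.ρ v < T.κ
    rwa [hρ]

/-- The points `nd v k` are dense. -/
lemma dense_nd (a : Idx) (N : ℤ) : ∃ v k, Agree N (T.pt (.nd v k)) (T.pt a) := by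
  induction h : T.rk a using WellFoundedLT.induction generalizing a with
  | _ o ih =>
  subst h
  have main : 0 < T.rk a → ∃ v k, Agree N (T.pt (.nd v k)) (T.pt a) := fun h0 => by
    obtain ⟨b, hb, -, hlt⟩ := T.approx a 0 h0 N
    obtain ⟨v, k, h⟩ := ih _ hlt b rfl
    exact ⟨v, k, h.trans hb⟩
  cases a with
  | nd v k => exact ⟨v, k, fun _ _ _ => rfl⟩
  | per U k => exact main (by simp [rk])
  | ax k => exact main T.κ_pos
  | xa k => exact main T.κ_pos

end Sys

/-! ### The set of points is closed -/

namespace Sys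

variable (T : Sys)

lemma RE_closed {y : ℤ → Bool} (h : ∀ M : ℤ, ∃ r, ∀ i, 0 ≤ i → i < M → T.RE r i = y i) :
    ∃ r, ∀ i, 0 ≤ i → T.RE r i = y i := by
  by_cases hm : ∃ i, 1 ≤ i ∧ Mk y i
  · obtain ⟨i, hi, hm⟩ := hm
    obtain ⟨r, hr⟩ := h (i + 2)
    have hmr : Mk (T.RE r) i := hm.congr (hr _ (by omega) (by omega)).symm
      (hr _ (by omega) (by omega)).symm (hr _ (by omega) (by omega)).symm
    cases r with
    | none => exact absurd hmr (T.P_mk _ _)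
    | some v =>
      obtain ⟨hv, hle⟩ := T.mk_Q_ge hmr
      refine ⟨some v, fun l hl => ?_⟩
      obtain ⟨r', hr'⟩ := h (max (l + 1) (i + 2))
      have : r' = some v := T.RE_eq_some hv fun m h1 h2 => by
        rw [hr' m h1 (by omega), ← hr m h1 (by omega), RE]
      subst this
      exact hr' l hl (by omega)
  · push Not at hm
    have key : ∀ M : ℤ, ∃ U, ∀ i, 0 ≤ i → i < M → T.P U i = y i := by
      intro M
      obtain ⟨r, hr⟩ := h (|M| + 10)
      have hM := le_abs_self M
      have hM' := abs_nonneg M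
      have hper : ∀ U, r = perRE U → ∃ U, ∀ i, 0 ≤ i → i < M → T.P U i = y i := by
        rintro U rfl
        rw [T.RE_perRE] at hr
        exact ⟨U, fun i h1 h2 => hr i h1 (by omega)⟩
      cases r with
      | none => exact hper true rfl
      | some w =>
        rcases Nat.eq_zero_or_pos w with rfl | hw
        · exact hper false rfl
        refine ⟨T.ty w, fun i h1 h2 => ?_⟩
        rw [← hr i h1 (by omega), RE, T.Q_left hw]
        by_contra hlt
        have hb := T.bl_nonneg w
        have hmw : Mk (T.Q w) (T.bl w + 2) := (T.mk_Q hw _).2 (Or.inl rfl)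
        exact hm _ (by omega) (hmw.congr (hr _ (by omega) (by omega)) (hr _ (by omega) (by omega))
          (hr _ (by omega) (by omega)))
    obtain ⟨U, hU⟩ := key T.D
    refine ⟨perRE U, fun i hi => ?_⟩
    rw [T.RE_perRE]
    obtain ⟨V, hV⟩ := key (max T.D (i + 1))
    have : U = V := T.P_window0 (a := 0) fun l h1 h2 => by
      rw [hU l h1 (by omega), hV l h1 (by omega)]
    rw [this]
    exact hV i hi (by omega)

/-- The right part of a limit point at a marker is a right end. -/
lemma right_part {x : ℤ → Bool} (hx : ∀ N, ∃ a, Agree N (T.pt a) x) {j : ℤ} (hj : Mk x j) :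
    ∃ r, ∀ i, 0 ≤ i → x (j - 2 + i) = joinMk (T.P false) (T.RE r) i := by
  have key : ∀ M : ℤ, 0 ≤ M → ∃ r, ∀ i, 0 ≤ i → i < M →
      x (j - 2 + i) = joinMk (T.P false) (T.RE r) i := by
    intro M hM
    obtain ⟨a, ha⟩ := hx (|j| + M + 5)
    have h1 := le_abs_self j
    have h2 := neg_abs_le j
    have hm : Mk (T.pt a) j := hj.congr (ha _ (by omega) (by omega)).symm
      (ha _ (by omega) (by omega)).symm (ha _ (by omega) (by omega)).symm
    rcases T.marker_struct a j hm with ⟨V, r', -, hj'⟩ | ⟨w, hw, -, hmw, hl⟩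
    · refine ⟨r', fun i h3 h4 => ?_⟩
      rw [← ha _ (by omega) (by omega), hj']
      exact joinMk_congr (fun h => by omega) fun _ => rfl
    · refine ⟨some (T.par w), fun i h3 h4 => ?_⟩
      have hb := T.bl_nonneg w
      rw [← ha _ (by omega) (by omega), hl i (by omega)]
      exact joinMk_congr (fun h => by omega) fun _ => rfl
  obtain ⟨r, hr⟩ := T.RE_closed (y := fun i => x (j + 3 + i)) fun M => by
    obtain ⟨r, hr⟩ := key (|M| + 5) (by positivity)
    refine ⟨r, fun i h1 h2 => ?_⟩
    have hM := le_abs_self M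
    have := hr (i + 5) (by omega) (by omega)
    rw [joinMk_right (by omega)] at this
    rw [show j + 3 + i = j - 2 + (i + 5) by ring, this]
    congr 1; ring
  refine ⟨r, fun i hi => ?_⟩
  rcases lt_or_ge i 5 with h5 | h5
  · obtain ⟨r', hr'⟩ := key 5 (by omega)
    rw [hr' i hi h5, joinMk_mid _ _ hi h5, joinMk_mid _ _ hi h5]
  · rw [joinMk_right h5, hr _ (by omega)]; congr 1; ring

/-- A limit point with a marker has a first marker, because the ranks of the nodes read off at
its markers strictly decrease to the left. -/
lemma exists_first_marker {x : ℤ → Bool} (hx : ∀ N, ∃ a, Agree N (T.pt a) x) {j : ℤ} (hj : Mk x j) :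
    ∃ j, Mk x j ∧ ∀ j' < j, ¬ Mk x j' := by
  by_contra! hcon
  have main : ∀ (o : Ordinal) (j : ℤ) (v : ℕ), T.ρ v = o → Mk x j →
      (∀ i, 0 ≤ i → x (j - 2 + i) = joinMk (T.P false) (T.Q v) i) → False := by
    intro o
    induction o using WellFoundedLT.induction with
    | _ o ih =>
    rintro j v rfl hj hr
    obtain ⟨j', hlt, hj'⟩ := hcon j hj
    obtain ⟨a, ha⟩ := hx (|j| + |j'| + 10)
    have h1 := le_abs_self j
    have h2 := neg_abs_le j
    have h1' := le_abs_self j'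
    have h2' := neg_abs_le j'
    have hm : Mk (T.pt a) j := hj.congr (ha _ (by omega) (by omega)).symm
      (ha _ (by omega) (by omega)).symm (ha _ (by omega) (by omega)).symm
    have hm' : Mk (T.pt a) j' := hj'.congr (ha _ (by omega) (by omega)).symm
      (ha _ (by omega) (by omega)).symm (ha _ (by omega) (by omega)).symm
    -- a point that looks like `joinMk` on both markers is impossible
    have hno : ∀ (V : Bool) (r : Option ℕ),
        (∀ i, j' - j + 1 ≤ i → T.pt a (j - 2 + i) = joinMk (T.P V) (T.RE r) i) → False := by
      intro V r hf
      have : Mk (joinMk (T.P V) (T.RE r)) (j' - j + 2) := by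
        refine hm'.congr ?_ ?_ ?_
        · rw [← hf _ (by omega)]; congr 1; ring
        · rw [← hf _ (by omega)]; congr 1; ring
        · rw [← hf _ (by omega)]; congr 1; ring
      rcases (mk_joinMk (T.P_mk _) _).1 this with h | h <;> omega
    rcases T.marker_struct a j hm with ⟨V, r', -, hf⟩ | ⟨w, hw, -, hmw, hl⟩
    · exact hno V r' fun i _ => hf i
    have hb := T.bl_nonneg w
    have hbw : T.bl w < j - j' - 1 := by
      by_contra hge
      exact hno _ _ fun i hi => hl i (by omega)
    have hm1 : Mk x (j - T.bl w - 5) := hmw.congr (ha _ (by omega) (by omega))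
      (ha _ (by omega) (by omega)) (ha _ (by omega) (by omega))
    obtain ⟨r1, hr1⟩ := T.right_part hx hm1
    have hr1w : r1 = some w := T.RE_eq_some hw fun i h3 h4 => by
      have := hr1 (i + 5) (by omega)
      rw [joinMk_right (by omega), show i + 5 - 5 = i by ring] at this
      rw [← this, ← ha _ (by omega) (by omega),
        show j - T.bl w - 5 - 2 + (i + 5) = j - 2 + (i - T.bl w) by ring, hl _ (by omega),
        T.Q_pos hw, RE]
    subst hr1w
    have hpar : some (T.par w) = some v := T.RE_injective fun i hi => by
      have e1 := hr1 (i + T.bl w + 10) (by omega)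
      have e2 := hr (i + 5) (by omega)
      rw [show j - T.bl w - 5 - 2 + (i + T.bl w + 10) = j - 2 + (i + 5) by ring, e2,
        joinMk_right (by omega), joinMk_right (by omega), RE, T.Q_right hw (by omega)] at e1
      rw [RE, RE]
      rw [show i + 5 - 5 = i by ring,
        show i + T.bl w + 10 - 5 - T.bl w - 5 = i by ring] at e1
      exact e1.symm
    rw [Option.some_inj] at hpar
    exact ih (T.ρ w) (hpar ▸ T.ρ_lt w hw) _ w rfl hm1 hr1
  obtain ⟨j', hlt, hj'⟩ := hcon j hj
  obtain ⟨r, hr⟩ := T.right_part hx hj'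
  cases r with
  | some v => exact main _ j' v rfl hj' hr
  | none =>
    have : Mk (joinMk (T.P false) (T.P true)) (j - j' + 2) := by
      refine hj.congr ?_ ?_ ?_
      · rw [← RE, ← hr _ (by omega)]; congr 1; ring
      · rw [← RE, ← hr _ (by omega)]; congr 1; ring
      · rw [← RE, ← hr _ (by omega)]; congr 1; ring
    rcases (mk_joinMk (T.P_mk _) _).1 this with h | h
    · omega
    · exact T.P_mk _ _ h.2

lemma closed {x : ℤ → Bool} (hx : ∀ N, ∃ a, Agree N (T.pt a) x) : ∃ a, T.pt a = x := by
  have hD : (0 : ℤ) < T.D := by exact_mod_cast T.D_pos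
  by_cases hm : ∃ j, Mk x j
  swap
  · push Not at hm
    have key : ∀ N : ℤ, ∃ U k, ∀ i, -N ≤ i → i ≤ N → T.P U (i + k) = x i := by
      intro N
      obtain ⟨a, ha⟩ := hx (N + 10)
      obtain ⟨U, k, h1, -⟩ := T.pt_window a N fun j h1 h2 hj => hm j
        (hj.congr (ha _ (by omega) (by omega)) (ha _ (by omega) (by omega))
          (ha _ (by omega) (by omega)))
      exact ⟨U, k, fun i h2 h3 => by rw [← h1 i h2 h3]; exact ha i (by omega) (by omega)⟩
    obtain ⟨U, k, hU⟩ := key T.D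
    refine ⟨.per U k, funext fun i => ?_⟩
    have hi1 := le_abs_self i
    have hi2 := neg_abs_le i
    obtain ⟨V, l, hV⟩ := key (T.D + |i|)
    have := (T.P_window (U := U) (V := V) (k := k) (l := l) (a := 0) fun m h1 h2 => by
      rw [hU m (by omega) (by omega), hV m (by omega) (by omega)]).2 i
    exact this.trans (hV i (by omega) (by omega))
  obtain ⟨j0, hj0⟩ := hm
  obtain ⟨j, hj, hfirst⟩ := T.exists_first_marker hx hj0
  obtain ⟨r, hr⟩ := T.right_part hx hj
  have hj1 := le_abs_self j
  have hj2 := neg_abs_le j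
  have key : ∀ M : ℤ, 0 ≤ M → ∃ U, ∀ i, -M ≤ i → i < 0 → T.P U i = x (j - 2 + i) := by
    intro M hM
    obtain ⟨a, ha⟩ := hx (|j| + M + 10)
    have hm : Mk (T.pt a) j := hj.congr (ha _ (by omega) (by omega)).symm
      (ha _ (by omega) (by omega)).symm (ha _ (by omega) (by omega)).symm
    rcases T.marker_struct a j hm with ⟨V, r', -, hf⟩ | ⟨w, hw, -, hmw, hl⟩
    · refine ⟨V, fun i h1 h2 => ?_⟩
      rw [← ha _ (by omega) (by omega), hf, joinMk_left h2]
    · refine ⟨T.ty w, fun i h1 h2 => ?_⟩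
      have hb := T.bl_nonneg w
      rw [← ha _ (by omega) (by omega), hl, joinMk_left h2]
      by_contra hge
      exact hfirst (j - T.bl w - 5) (by omega) (hmw.congr (ha _ (by omega) (by omega))
        (ha _ (by omega) (by omega)) (ha _ (by omega) (by omega)))
  obtain ⟨U, hU⟩ := key T.D hD.le
  have hx' : ∀ i, x (j - 2 + i) = joinMk (T.P U) (T.RE r) i := by
    intro i
    rcases lt_or_ge i 0 with hi | hi
    · obtain ⟨V, hV⟩ := key (max T.D (-i)) (by omega)
      have : U = V := T.P_window0 (a := -T.D) fun l h1 h2 => by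
        rw [hU l (by omega) (by omega), hV l (by omega) (by omega)]
      rw [joinMk_left hi, this]
      exact (hV i (by omega) hi).symm
    · rw [hr i hi]
      exact joinMk_congr (fun h => by omega) fun _ => rfl
  have hdone : ∀ a, (∀ i, T.pt a (j - 2 + i) = joinMk (T.P U) (T.RE r) i) → T.pt a = x := by
    intro a ha
    funext i
    have := (ha (i - j + 2)).trans (hx' (i - j + 2)).symm
    rwa [show j - 2 + (i - j + 2) = i by ring] at this
  have hcmp : ∀ M : ℤ, T.D ≤ M → ∃ b : Idx,
      (∃ r', Ends b U r' ∧ (∀ i, T.pt b (j - 2 + i) = joinMk (T.P U) (T.RE r') i) ∧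
        ∀ i, 0 ≤ i → i < M → T.RE r' i = T.RE r i) ∨
      ∃ w, 0 < w ∧ T.rk b ≤ T.ρ w ∧ T.ty w = U ∧ M ≤ T.bl w + 3 ∧
        (∀ i, -T.bl w ≤ i → T.pt b (j - 2 + i) = joinMk (T.P U) (T.RE (some (T.par w))) i) ∧
        ∀ i, 0 ≤ i → i < M → T.RE (some (T.par w)) i = T.RE r i := by
    intro M hM
    obtain ⟨b, hb⟩ := hx (|j| + M + 10)
    exact ⟨b, T.compare b hM fun i h1 h2 => by rw [hb _ (by omega) (by omega), hx']⟩
  cases U with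
  | false =>
    cases r with
    | none =>
      refine ⟨.ax (2 - j), hdone _ fun i => ?_⟩
      simp only [pt, RE]; congr 1; ring
    | some v =>
      refine ⟨.nd v (2 - j), hdone _ fun i => ?_⟩
      simp only [pt, RE]; congr 1; ring
  | true =>
    cases r with
    | none =>
      exfalso
      obtain ⟨b, ⟨r', hE, -, h⟩ | ⟨w, hw, -, hty, -, -, h⟩⟩ := hcmp T.D le_rfl
      · cases hE
        have : false = true := T.P_window0 (a := 0) fun i h1 h2 => by
          have := h i h1 (by omega)
          rwa [RE, RE, T.Q_zero] at this
        cases this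
      · rcases T.RE_of_agree (U := true) le_rfl h with h' | ⟨u, -, hu, hty', -⟩
        · simp [perRE] at h'
        · rw [Option.some_inj] at hu
          rw [← hu, T.ty_par _ hty] at hty'
          cases hty'
    | some v =>
      rcases Nat.eq_zero_or_pos v with rfl | hv
      · refine ⟨.xa (2 - j), hdone _ fun i => ?_⟩
        simp only [pt, RE, T.Q_zero]; congr 1; ring
      exfalso
      obtain ⟨K, hK⟩ := T.fin_child v hv
      have hb := T.bl_nonneg v
      have hbK := T.bl_nonneg K
      obtain ⟨b, ⟨r', hE, -, h⟩ | ⟨w, hw, -, hty, hlen, -, h⟩⟩ :=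
        hcmp (T.D + T.bl v + 4 + T.bl K) (by omega)
      · have := T.RE_eq_some hv fun i h1 h2 => h i h1 (by omega)
        subst this
        cases hE
        omega
      · have := T.RE_eq_some hv fun i h1 h2 => h i h1 (by omega)
        rw [Option.some_inj] at this
        have := T.bl_mono (hK w this hty)
        omega

end Sys

/-! ### Recognising ordinals among closed sets of sequences -/

section Recognise

variable {ι : Type*} [Countable ι]

/-- `homeoOrd_of_rank` for closed sets of binary sequences. -/
lemma homeoOrd_of_set {S : Set (ι → Bool)} (hS : IsClosed S) (r : (ι → Bool) → Ordinal)
    (h1 : ∀ x ∈ S, ∃ s : Finset ι, ∀ y ∈ S, (∀ i ∈ s, y i = x i) → y ≠ x → r y < r x)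
    (h2 : ∀ x ∈ S, ∀ α < r x, ∀ s : Finset ι, ∃ y ∈ S, (∀ i ∈ s, y i = x i) ∧ y ≠ x ∧ α ≤ r y)
    (γ : Ordinal) (hγ : 0 < γ) {M : Set (ι → Bool)} (hMf : M.Finite) (hM0 : M.Nonempty)
    (hle : ∀ y ∈ S, r y ≤ γ) (hM : ∀ y, y ∈ M ↔ y ∈ S ∧ r y = γ) :
    HomeoOrd S (Ordinal.omega0 ^ γ * (M.ncard : Ordinal)) := by
  classical
  have : CompactSpace S := isCompact_iff_compactSpace.1 hS.isCompact
  have hsub : M ⊆ S := fun y hy => ((hM y).1 hy).1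
  let F : Finset S := (hMf.preimage Subtype.val_injective.injOn : (Subtype.val ⁻¹' M : Set S).Finite).toFinset
  have hF : ∀ y : S, y ∈ F ↔ r y = γ := fun y => by
    simp [F, hM]
  have hcard : F.card = M.ncard := by
    rw [← Set.ncard_coe_finset, ← Set.ncard_image_of_injective _ Subtype.val_injective]
    congr 1
    ext y
    simp only [F, Set.Finite.coe_toFinset, Set.mem_image, Set.mem_preimage, Subtype.exists,
      exists_and_left, exists_prop, exists_eq_right_right]
    exact ⟨fun h => h.1, fun h => ⟨h, hsub h⟩⟩
  rw [← hcard]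
  refine homeoOrd_of_rank (X := S) (r := fun x => r x) ?_ ?_ γ hγ F ?_ (fun y => hle y y.2) hF
  · rintro ⟨x, hx⟩
    obtain ⟨s, hs⟩ := h1 x hx
    refine ⟨Subtype.val ⁻¹' {y | ∀ i ∈ s, y i = x i},
      continuous_subtype_val.continuousAt (eventually_agree x s), ?_⟩
    rintro ⟨y, hy⟩ hys hne
    exact hs y hy hys fun h => hne (Subtype.ext h)
  · rintro ⟨x, hx⟩ α hα U hU
    obtain ⟨V, hV, hVU⟩ := (mem_nhds_subtype S ⟨x, hx⟩ U).1 hU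
    obtain ⟨s, hs⟩ := exists_agree_subset x hV
    obtain ⟨y, hy, hys, hne, hle⟩ := h2 x hx α hα s
    exact ⟨⟨y, hy⟩, hVU (hs y hys), fun h => hne (congrArg Subtype.val h), hle⟩
  · obtain ⟨y, hy⟩ := hM0
    exact ⟨⟨y, hsub hy⟩, (hF _).2 ((hM y).1 hy).2⟩

/-- A closed set of sequences whose second derived set is the finite set `F`. -/
lemma homeoOrd_two {S F : Set (ι → Bool)} (hS : IsClosed S) (hFS : F ⊆ S) (hFf : F.Finite)
    (hF0 : F.Nonempty)
    (hA : ∀ x ∈ S, x ∉ F → ∃ s : Finset ι, ∀ y ∈ S, (∀ i ∈ s, y i = x i) → y ≠ x →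
      ∃ s' : Finset ι, ∀ z ∈ S, (∀ i ∈ s', z i = y i) → z = y)
    (hB : ∀ x ∈ F, ∀ s : Finset ι, ∃ y ∈ S, (∀ i ∈ s, y i = x i) ∧ y ≠ x ∧
      ∀ s' : Finset ι, ∃ z ∈ S, (∀ i ∈ s', z i = y i) ∧ z ≠ y) :
    HomeoOrd S (Ordinal.omega0 ^ (2 : Ordinal) * (F.ncard : Ordinal)) := by
  classical
  let NI : (ι → Bool) → Prop := fun y => ∀ s' : Finset ι, ∃ z ∈ S, (∀ i ∈ s', z i = y i) ∧ z ≠ y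
  have hFNI : ∀ x ∈ F, NI x := fun x hx s => by
    obtain ⟨y, h1, h2, h3, -⟩ := hB x hx s
    exact ⟨y, h1, h2, h3⟩
  let r : (ι → Bool) → Ordinal := fun y => if y ∈ F then 2 else if NI y then 1 else 0
  have r2 : ∀ y, y ∈ F → r y = 2 := fun y hy => if_pos hy
  have r1 : ∀ y, y ∉ F → NI y → r y = 1 := fun y hy h => by simp only [r]; rw [if_neg hy, if_pos h]
  have r0 : ∀ y, ¬ NI y → r y = 0 := fun y h => by
    simp only [r]; rw [if_neg (fun hy => h (hFNI y hy)), if_neg h]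
  have h12 : (1 : Ordinal) < 2 := by exact_mod_cast Nat.one_lt_two
  have rle : ∀ y, r y ≤ 2 := fun y => by
    by_cases hy : y ∈ F
    · exact (r2 y hy).le
    by_cases h : NI y
    · rw [r1 y hy h]; exact h12.le
    · rw [r0 y h]; exact zero_le
  have hiff : ∀ y, y ∈ F ↔ y ∈ S ∧ r y = 2 := fun y => by
    refine ⟨fun h => ⟨hFS h, r2 y h⟩, fun h => ?_⟩
    by_contra hy
    by_cases hn : NI y
    · rw [r1 y hy hn] at h; exact h12.ne h.2
    · rw [r0 y hn] at h; exact (zero_lt_one.trans h12).ne h.2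
  refine homeoOrd_of_set hS r ?_ ?_ 2 (zero_lt_one.trans h12) hFf hF0 (fun y _ => rle y) hiff
  · intro x hx
    by_cases hxF : x ∈ F
    · have hop : (F \ {x})ᶜ ∈ nhds x :=
        (hFf.subset sdiff_subset).isClosed.isOpen_compl.mem_nhds (by simp)
      obtain ⟨s, hs⟩ := exists_agree_subset x hop
      refine ⟨s, fun y hy hys hne => ?_⟩
      have hyF : y ∉ F := fun h => hs y hys ⟨h, hne⟩
      rw [r2 x hxF]
      exact lt_of_le_of_ne (rle y) fun h => hyF ((hiff y).2 ⟨hy, h⟩)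
    by_cases hn : NI x
    · obtain ⟨s, hs⟩ := hA x hx hxF
      refine ⟨s, fun y hy hys hne => ?_⟩
      obtain ⟨s', hs'⟩ := hs y hy hys hne
      have : ¬ NI y := fun h => by
        obtain ⟨z, hz, h1, h2⟩ := h s'
        exact h2 (hs' z hz h1)
      rw [r0 y this, r1 x hxF hn]
      exact zero_lt_one
    · simp only [NI] at hn
      push Not at hn
      obtain ⟨s, hs⟩ := hn
      exact ⟨s, fun y hy hys hne => absurd (hs y hy hys) hne⟩
  · intro x hx α hα s
    by_cases hxF : x ∈ F
    · obtain ⟨y, hy, hys, hne, hn⟩ := hB x hxF s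
      refine ⟨y, hy, hys, hne, ?_⟩
      have h1 : (1 : Ordinal) ≤ r y := by
        by_cases hyF : y ∈ F
        · rw [r2 y hyF]; exact h12.le
        · exact (r1 y hyF hn).ge
      rw [r2 x hxF, ← one_add_one_eq_two, Order.lt_add_one_iff] at hα
      exact hα.trans h1
    by_cases hn : NI x
    · rw [r1 x hxF hn, Order.lt_one_iff] at hα
      obtain ⟨y, hy, hys, hne⟩ := hn s
      exact ⟨y, hy, hys, hne, by rw [hα]; exact zero_le⟩
    · rw [r0 x hn] at hα
      exact absurd hα not_lt_zero

end Recognise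

/-! ### The symbolic space and its right halves -/

namespace Sys

variable (T : Sys)

/-- The symbolic space. -/
def J : Set (ℤ → Bool) := range T.pt

/-- The shifts of `P false` and, if `c` holds, of `P true`. -/
def orb (c : Prop) : Set (ℤ → Bool) := {x | ∃ U k, (U = true → c) ∧ T.pt (.per U k) = x}

lemma agree_Icc {x y : ℤ → Bool} {N : ℤ} (h : ∀ i ∈ Finset.Icc (-N) N, x i = y i) : Agree N x y :=
  fun i h1 h2 => h i (Finset.mem_Icc.2 ⟨h1, h2⟩)

lemma J_closed : IsClosed T.J := by
  refine isClosed_of_closure_subset fun x hx => T.closed fun N => ?_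
  obtain ⟨y, hy, a, rfl⟩ := mem_closure_iff_nhds.1 hx _ (eventually_agree x (Finset.Icc (-N) N))
  exact ⟨a, agree_Icc hy⟩

lemma J_shift : ∀ x ∈ T.J, ∀ k : ℤ, (fun i => x (i + k)) ∈ T.J := by
  rintro _ ⟨a, rfl⟩ k
  cases a with
  | per U l => exact ⟨.per U (k + l), funext fun i => by simp only [pt, add_assoc]⟩
  | nd v l => exact ⟨.nd v (k + l), funext fun i => by simp only [pt, add_assoc]⟩
  | ax l => exact ⟨.ax (k + l), funext fun i => by simp only [pt, add_assoc]⟩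
  | xa l => exact ⟨.xa (k + l), funext fun i => by simp only [pt, add_assoc]⟩

lemma orb_finite (c : Prop) : (T.orb c).Finite := by
  have hD : (0 : ℤ) < T.D := by exact_mod_cast T.D_pos
  refine ((Set.finite_univ.prod (Set.finite_Ico (0 : ℤ) T.D)).image
    fun q : Bool × ℤ => T.pt (.per q.1 q.2)).subset ?_
  rintro _ ⟨U, k, -, rfl⟩
  refine ⟨(U, k % T.D), ⟨mem_univ _, Int.emod_nonneg _ hD.ne', Int.emod_lt_of_pos _ hD⟩, ?_⟩
  funext i
  simp only [pt]
  rw [← T.P_mod U (i + k % T.D), ← T.P_mod U (i + k), Int.add_emod_emod]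

lemma orb_nonempty (c : Prop) : (T.orb c).Nonempty := ⟨_, false, 0, by simp, rfl⟩

lemma homeo_J : HomeoOrd T.J (Ordinal.omega0 ^ (T.β + 1) * ((T.orb (T.κ = T.β)).ncard : Ordinal)) := by
  classical
  let r : (ℤ → Bool) → Ordinal := fun x => if h : ∃ a, T.pt a = x then T.rk h.choose else 0
  have hr : ∀ a, r (T.pt a) = T.rk a := fun a => by
    have h : ∃ b, T.pt b = T.pt a := ⟨a, rfl⟩
    simp only [r]; rw [dif_pos h]
    exact T.rk_congr h.choose_spec
  have hκ := T.κ_le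
  have htop : ∀ a, T.rk a ≤ T.β + 1 := by
    have h1 := Order.lt_succ T.β
    intro a
    cases a with
    | per U k =>
      cases U
      · exact le_rfl
      · simpa [rk] using hκ
    | nd v k => exact (T.ρ_le_β v).trans (by simp)
    | ax k => exact hκ.trans (by simp)
    | xa k => exact hκ.trans (by simp)
  refine homeoOrd_of_set T.J_closed r ?_ ?_ _ (by simp) (T.orb_finite _) (T.orb_nonempty _) ?_ ?_
  · rintro _ ⟨a, rfl⟩
    obtain ⟨N, hN⟩ := T.isolate a
    refine ⟨Finset.Icc (-N) N, ?_⟩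
    rintro _ ⟨b, rfl⟩ hb hne
    rw [hr, hr]
    exact (hN b (agree_Icc hb)).resolve_left fun h => hne h.1
  · rintro _ ⟨a, rfl⟩ α hα s
    rw [hr] at hα
    obtain ⟨N, -, hN⟩ : ∃ N : ℤ, 0 ≤ N ∧ ∀ b, Agree N (T.pt b) (T.pt a) →
        ∀ i ∈ s, T.pt b i = T.pt a i := by
      refine ⟨∑ i ∈ s, |i|, Finset.sum_nonneg fun i _ => abs_nonneg i, fun b h i hi => ?_⟩
      have hle : |i| ≤ ∑ i ∈ s, |i| := Finset.single_le_sum (f := fun i => |i|)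
        (fun i _ => abs_nonneg i) hi
      exact h i (by have := neg_abs_le i; omega) (by have := le_abs_self i; omega)
    obtain ⟨b, hb, h1, h2⟩ := T.approx a α hα N
    refine ⟨_, ⟨b, rfl⟩, hN b hb, fun h => h2.ne (T.rk_congr h), by rwa [hr]⟩
  · rintro _ ⟨a, rfl⟩
    rw [hr]; exact htop a
  · intro x
    constructor
    · rintro ⟨U, k, hU, rfl⟩
      refine ⟨⟨_, rfl⟩, ?_⟩
      rw [hr]
      cases U
      · rfl
      · simp [rk, hU rfl]
    · rintro ⟨⟨a, rfl⟩, ha⟩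
      rw [hr] at ha
      have hlt : ∀ o ≤ T.β, o ≠ T.β + 1 := fun o ho =>
        (Order.lt_add_one_iff.2 ho).ne
      cases a with
      | per U k =>
        refine ⟨U, k, fun hU => ?_, rfl⟩
        subst hU
        simpa [rk] using ha
      | nd v k => exact absurd ha (hlt _ (T.ρ_le_β v))
      | ax k => exact absurd ha (hlt _ hκ)
      | xa k => exact absurd ha (hlt _ hκ)

end Sys

/-! ### The right halves of the points -/

namespace Sys

variable (T : Sys)

/-- `NI a`: the point `a` is a limit of points with a different right half. -/
def NI (a : Idx) : Prop :=
  ∀ N, ∃ b, Agree N (T.pt b) (T.pt a) ∧ rightHalf (T.pt b) ≠ rightHalf (T.pt a)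

lemma mk_of_rightHalf {x y : ℤ → Bool} (h : rightHalf x = rightHalf y) {j : ℤ} (hj : 1 ≤ j)
    (hm : Mk x j) : Mk y j := by
  have e : ∀ i : ℤ, 0 ≤ i → x i = y i := fun i hi => by
    obtain ⟨n, rfl⟩ := Int.eq_ofNat_of_zero_le hi
    exact congrFun h n
  exact hm.congr (e _ (by omega)) (e _ (by omega)) (e _ (by omega))

lemma not_NI {a : Idx} {U : Bool} {r : Option ℕ} {j M : ℤ} (hM : T.D ≤ M)
    (hj : ∀ i, T.pt a (j - 2 + i) = joinMk (T.P U) (T.RE r) i)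
    (hf : ∀ b r', Ends b U r' → (∀ i, 0 ≤ i → i < M → T.RE r' i = T.RE r i) → r' = r)
    (hw : ∀ w, 0 < w → T.ty w = U →
      (∀ i, 0 ≤ i → i < M → T.RE (some (T.par w)) i = T.RE r i) → some (T.par w) = r) :
    ¬ T.NI a := by
  intro h
  obtain ⟨b, hb, hne⟩ := h (|j| + (M + |j|) + 10)
  have hj1 := le_abs_self j
  have hj2 := neg_abs_le j
  refine hne ?_
  have key : ∀ i, -(M + |j|) + 3 ≤ i → T.pt b (j - 2 + i) = joinMk (T.P U) (T.RE r) i := by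
    rcases T.compare b (U := U) (r := r) (j := j) (M := M + |j|) (by omega) fun i h1 h2 => by
      rw [← hj]; exact hb _ (by omega) (by omega) with
      ⟨r', hE, h1, h2⟩ | ⟨w, hw0, -, hty, hlen, h1, h2⟩
    · rw [hf b r' hE fun i h3 h4 => h2 i h3 (by omega)] at h1
      exact fun i _ => h1 i
    · rw [hw w hw0 hty fun i h3 h4 => h2 i h3 (by omega)] at h1
      exact fun i hi => h1 i (by omega)
  funext n
  have hD : (0 : ℤ) < T.D := by exact_mod_cast T.D_pos
  by_cases hn : (n : ℤ) ≤ |j| + (M + |j|) + 10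
  · exact hb n (by omega) hn
  · have := key (n - j + 2) (by omega)
    rw [← hj, show j - 2 + ((n : ℤ) - j + 2) = n by ring] at this
    exact this

lemma not_NI_nd {v : ℕ} (hv : 0 < v) (k : ℤ) : ¬ T.NI (.nd v k) := by
  have hb := T.bl_nonneg v
  have hs : ∀ r', (∀ i, 0 ≤ i → i < T.D + T.bl v + 4 → T.RE r' i = T.RE (some v) i) → r' = some v :=
    fun r' h => T.RE_eq_some hv fun i h1 h2 => h i h1 (by omega)
  refine T.not_NI (U := false) (r := some v) (j := 2 - k) (M := T.D + T.bl v + 4) (by omega)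
    (fun i => ?_) (fun b r' _ => hs r') fun w _ _ => hs _
  simp only [pt, RE]; congr 1; ring

lemma not_NI_xa (hflag : ¬ T.flag) (k : ℤ) : ¬ T.NI (.xa k) := by
  refine T.not_NI (U := true) (r := some 0) (j := 2 - k) (M := T.D) le_rfl
    (fun i => ?_) (fun b r' hE _ => by cases hE; rfl)
    fun w _ hty _ => by rw [T.no_flag hflag w hty]
  simp only [pt, RE, T.Q_zero]; congr 1; ring

/-- A point that is a limit of points with other right halves has at most one marker. -/
lemma NI_form {b : Idx} (h : T.NI b) : (∃ U k, b = .per U k) ∨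
    ∃ U V k, (T.pt b = fun i => joinMk (T.P U) (T.P V) (i + k)) ∧ (U = true → b = .xa k) := by
  cases b with
  | per U k => exact Or.inl ⟨U, k, rfl⟩
  | nd v k =>
    rcases Nat.eq_zero_or_pos v with rfl | hv
    · exact Or.inr ⟨false, false, k, by simp only [pt, T.Q_zero], by simp⟩
    · exact absurd h (T.not_NI_nd hv k)
  | ax k => exact Or.inr ⟨false, true, k, rfl, by simp⟩
  | xa k => exact Or.inr ⟨true, false, k, rfl, fun _ => rfl⟩

lemma rigid {a : Idx} {U : Bool} {r : Option ℕ} {j : ℤ}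
    (hj : ∀ i, T.pt a (j - 2 + i) = joinMk (T.P U) (T.RE r) i) :
    ∃ N, ∀ b, Agree N (T.pt b) (T.pt a) → T.NI b → T.pt b = T.pt a := by
  have hD : (0 : ℤ) < T.D := by exact_mod_cast T.D_pos
  obtain ⟨M, hM, hM'⟩ : ∃ M : ℤ, T.D ≤ M ∧ ∀ v, r = some v → T.bl v + 4 ≤ M := by
    cases r with
    | none => exact ⟨T.D, le_rfl, by simp⟩
    | some v =>
      refine ⟨T.D + T.bl v + 4, by have := T.bl_nonneg v; omega, ?_⟩
      intro u hu; rw [Option.some_inj] at hu; subst hu; omega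
  refine ⟨|j| + M + 10, fun b hb hNI => ?_⟩
  have hj1 := le_abs_self j
  have hj2 := neg_abs_le j
  have hma : Mk (T.pt a) j := by
    have hm0 : Mk (joinMk (T.P U) (T.RE r)) 2 := (mk_joinMk (T.P_mk _) _).2 (Or.inl rfl)
    refine hm0.congr ?_ ?_ ?_
    · rw [← hj]; congr 1; ring
    · rw [← hj]; congr 1; ring
    · rw [← hj]; congr 1; ring
  have hmb : Mk (T.pt b) j := hma.congr (hb _ (by omega) (by omega)).symm
    (hb _ (by omega) (by omega)).symm (hb _ (by omega) (by omega)).symm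
  rcases T.NI_form hNI with ⟨V, k, rfl⟩ | ⟨U', V, k, hpt, -⟩
  · exact absurd ((mk_shift _ _ _).1 hmb) (T.P_mk _ _)
  have hk : j + k = 2 := by
    rw [hpt] at hmb
    rcases (mk_joinMk (T.P_mk _) _).1 ((mk_shift _ _ _).1 hmb) with h | h
    · exact h
    · exact absurd h.2 (T.P_mk _ _)
  have hb' : ∀ i, -M ≤ i → i < M + 5 →
      joinMk (T.P U') (T.P V) i = joinMk (T.P U) (T.RE r) i := fun i h1 h2 => by
    rw [← hj, ← hb _ (by omega) (by omega), hpt]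
    simp only; congr 1; omega
  have hU : U' = U := T.P_window0 (a := -T.D) fun i h1 h2 => by
    have := hb' i (by omega) (by omega)
    rwa [joinMk_left (by omega), joinMk_left (by omega)] at this
  have hr : r = perRE V := by
    rcases T.RE_of_agree (r := r) (U := V) hM fun i h1 h2 => by
      have := hb' (i + 5) (by omega) (by omega)
      rw [joinMk_right (by omega), joinMk_right (by omega), show i + 5 - 5 = i by ring] at this
      exact this.symm with h | ⟨w, -, h, -, hlen⟩
    · exact h
    · have := hM' w h; omega
  rw [hr, T.RE_perRE, ← hU] at hj
  funext i
  have := hj (i - j + 2)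
  rw [show j - 2 + (i - j + 2) = i by ring] at this
  rw [this, hpt]
  simp only; congr 1; omega

/-- Only the surviving periodic points are limits of limits. -/
lemma mem_orb_of_limit {a : Idx} (h : ∀ N, ∃ b, T.NI b ∧ Agree N (T.pt b) (T.pt a) ∧
    rightHalf (T.pt b) ≠ rightHalf (T.pt a)) : T.pt a ∈ T.orb T.flag := by
  have hD : (0 : ℤ) < T.D := by exact_mod_cast T.D_pos
  rcases T.per_or_ends a with ⟨U, k, rfl⟩ | ⟨U, r, j, -, hj⟩
  swap
  · obtain ⟨N, hN⟩ := T.rigid hj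
    obtain ⟨b, h1, h2, h3⟩ := h N
    exact absurd (congrArg rightHalf (hN b h2 h1)) h3
  refine ⟨U, k, fun hU => ?_, rfl⟩
  subst hU
  by_contra hflag
  obtain ⟨b, hNI, hb, hne⟩ := h (T.D + 10)
  rcases T.NI_form hNI with ⟨V, l, rfl⟩ | ⟨U', V, l, hpt, hxa⟩
  · have := (T.P_window (U := V) (V := true) (k := l) (l := k) (a := 0) fun i h3 h4 =>
      hb i (by omega) (by omega))
    obtain ⟨rfl, h⟩ := this
    exact hne (congrArg rightHalf (funext h))
  have hm : Mk (T.pt b) (2 - l) := by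
    rw [hpt, mk_shift, mk_joinMk (T.P_mk _)]
    exact Or.inl (by ring)
  rcases lt_or_ge (T.D + 5 : ℤ) (2 - l) with hl | hl
  · have : U' = true := (T.P_window (U := U') (V := true) (k := l) (l := k) (a := 0)
      fun i h3 h4 => by
        have := hb i (by omega) (by omega)
        rw [hpt] at this
        simp only at this
        rwa [joinMk_left (by omega)] at this).1
    rw [hxa this] at hNI
    exact T.not_NI_xa hflag _ hNI
  rcases lt_or_ge (2 - l) (-T.D - 5 : ℤ) with hl' | hl'
  · have := (T.P_window (U := V) (V := true) (k := l - 5) (l := k) (a := 0)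
      fun i h3 h4 => by
        have := hb i (by omega) (by omega)
        rw [hpt] at this
        simp only at this
        rw [joinMk_right (by omega)] at this
        rw [← add_sub_assoc]
        exact this).2
    refine hne (funext fun n => ?_)
    change T.pt b n = T.P true (n + k)
    rw [hpt, ← this n]
    simp only
    rw [joinMk_right (by omega), add_sub_assoc]
  · exact T.P_mk true (2 - l + k) ((mk_shift _ _ _).1 (hm.congr (hb _ (by omega) (by omega))
        (hb _ (by omega) (by omega)) (hb _ (by omega) (by omega))))

/-- By compactness, a limit of right halves is the right half of a limit. -/
lemma bridge {Z : Set (ℤ → Bool)} {y : ℕ → Bool}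
    (h : ∀ s : Finset ℕ, ∃ z ∈ Z, ∀ i ∈ s, rightHalf z i = y i) :
    ∃ x ∈ closure Z, rightHalf x = y := by
  have hc : IsClosed (rightHalf '' closure Z) :=
    (isClosed_closure.isCompact.image continuous_rightHalf).isClosed
  have hy : y ∈ closure (rightHalf '' closure Z) := by
    rw [mem_closure_iff_nhds]
    intro V hV
    obtain ⟨s, hs⟩ := exists_agree_subset y hV
    obtain ⟨z, hz, hzs⟩ := h s
    exact ⟨_, hs _ hzs, z, subset_closure hz, rfl⟩
  rwa [hc.closure_eq] at hy

lemma exists_agree_of_mem_closure {Z : Set (ℤ → Bool)} {x : ℤ → Bool} (hx : x ∈ closure Z) (N : ℤ) :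
    ∃ z ∈ Z, Agree N z x := by
  obtain ⟨z, h1, h2⟩ := mem_closure_iff_nhds.1 hx _ (eventually_agree x (Finset.Icc (-N) N))
  exact ⟨z, h2, agree_Icc h1⟩

lemma exists_NI {y : ℕ → Bool}
    (h : ∀ s : Finset ℕ, ∃ z ∈ rightHalf '' T.J, (∀ i ∈ s, z i = y i) ∧ z ≠ y) :
    ∃ a, rightHalf (T.pt a) = y ∧ T.NI a := by
  obtain ⟨x, hx, hxy⟩ := bridge (Z := {z ∈ T.J | rightHalf z ≠ y}) (y := y) fun s => by
    obtain ⟨_, ⟨z, hz, rfl⟩, h1, h2⟩ := h s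
    exact ⟨z, ⟨hz, h2⟩, h1⟩
  obtain ⟨a, rfl⟩ : x ∈ T.J :=
    closure_minimal (fun z hz => hz.1) T.J_closed hx
  refine ⟨a, hxy, fun N => ?_⟩
  obtain ⟨_, ⟨⟨b, rfl⟩, h1⟩, h2⟩ := exists_agree_of_mem_closure hx N
  exact ⟨b, h2, hxy ▸ h1⟩

lemma le_sup_id (s : Finset ℕ) : ∀ i ∈ s, i ≤ s.sup id := fun _ hi => Finset.le_sup (f := id) hi

lemma limit_nd_zero (l : ℤ) (s : Finset ℕ) : ∃ z ∈ rightHalf '' T.J,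
    (∀ i ∈ s, z i = rightHalf (T.pt (.nd 0 l)) i) ∧ z ≠ rightHalf (T.pt (.nd 0 l)) := by
  have h0 : 0 < T.ρ 0 := by rw [T.ρ_zero]; exact T.κ_pos.trans_le T.κ_le
  obtain ⟨w, hw, hp, hty, -⟩ := T.child 0 0 h0 (s.sup id + l.natAbs)
  have hle := T.le_bl w
  have hl1 := le_abs_self l
  refine ⟨_, ⟨_, ⟨.nd w l, rfl⟩, rfl⟩, fun i hi => ?_, fun h => ?_⟩
  · have := le_sup_id s i hi
    refine joinMk_congr (fun _ => rfl) fun h => ?_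
    rw [T.Q_eq_P (by omega), T.Q_zero, hty]
  · have hm : Mk (T.pt (.nd w l)) (T.bl w + 7 - l) := by
      refine (mk_shift _ _ _).2 ((mk_joinMk (T.P_mk _) _).2 (Or.inr ⟨by omega, ?_⟩))
      exact (T.mk_Q (by omega) _).2 (Or.inl (by ring))
    have hm' := mk_of_rightHalf h (by omega) hm
    rcases (mk_joinMk (T.P_mk _) _).1 ((mk_shift _ _ _).1 hm') with h | h
    · omega
    · rw [T.Q_zero] at h; exact T.P_mk _ _ h.2

lemma limit_xa (hflag : T.flag) (l : ℤ) (s : Finset ℕ) : ∃ z ∈ rightHalf '' T.J,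
    (∀ i ∈ s, z i = rightHalf (T.pt (.xa l)) i) ∧ z ≠ rightHalf (T.pt (.xa l)) := by
  obtain ⟨w, hw, hty, -, hp, -⟩ := T.x_node 0 T.κ_pos (s.sup id + l.natAbs)
  have hp := hp hflag
  have hw0 := T.ty_pos hty
  have hle := T.le_bl (T.par w)
  have hlew := T.le_bl w
  have hl1 := le_abs_self l
  have hl2 := neg_abs_le l
  have hag := T.agree_xa hty l (s.sup id : ℕ) (by omega) (Or.inr (by omega))
  refine ⟨_, ⟨_, ⟨.nd w (l + T.bl w + 5), rfl⟩, rfl⟩, fun i hi => ?_, fun h => ?_⟩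
  · have := le_sup_id s i hi
    exact hag i (by omega) (by exact_mod_cast this)
  · have hform : ∀ i, -T.bl w ≤ i + l → T.pt (.nd w (l + T.bl w + 5)) i =
        joinMk (T.P true) (T.Q (T.par w)) (i + l) := fun i hi => by
      simp only [pt]
      rw [show i + (l + T.bl w + 5) = i + l + T.bl w + 5 by ring, T.nd_shift hw0 hi, hty]
    have hm : Mk (T.pt (.nd w (l + T.bl w + 5))) (T.bl (T.par w) + 7 - l) := by
      have : Mk (joinMk (T.P true) (T.Q (T.par w))) (T.bl (T.par w) + 7) := by
        refine (mk_joinMk (T.P_mk _) _).2 (Or.inr ⟨by omega, ?_⟩)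
        exact (T.mk_Q (by omega) _).2 (Or.inl (by ring))
      refine this.congr ?_ ?_ ?_
      · rw [hform _ (by omega)]; congr 1; ring
      · rw [hform _ (by omega)]; congr 1; ring
      · rw [hform _ (by omega)]; congr 1; ring
    have hm' := mk_of_rightHalf h (by omega) hm
    rcases (mk_joinMk (T.P_mk _) _).1 ((mk_shift _ _ _).1 hm') with h | h
    · omega
    · exact T.P_mk _ _ h.2

lemma rightHalf_injOn_orb (c : Prop) : InjOn rightHalf (T.orb c) := by
  rintro _ ⟨U, k, -, rfl⟩ _ ⟨V, l, -, rfl⟩ h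
  refine funext (T.P_window (U := U) (V := V) (k := k) (l := l) (a := 0) fun i h1 h2 => ?_).2
  obtain ⟨n, rfl⟩ := Int.eq_ofNat_of_zero_le h1
  exact congrFun h n

/-- The space of right halves has second derived set consisting of the surviving periodic
sequences. -/
lemma homeo_rightHalf : HomeoOrd (rightHalf '' T.J : Set (ℕ → Bool))
    (Ordinal.omega0 ^ (2 : Ordinal) * ((T.orb T.flag).ncard : Ordinal)) := by
  rw [← (T.rightHalf_injOn_orb T.flag).ncard_image]
  refine homeoOrd_two ?_ ?_ ((T.orb_finite _).image _) ((T.orb_nonempty _).image _) ?_ ?_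
  · exact (T.J_closed.isCompact.image continuous_rightHalf).isClosed
  · refine image_mono ?_
    rintro _ ⟨U, k, -, rfl⟩
    exact ⟨_, rfl⟩
  · intro x hx hxF
    by_contra! hcon
    obtain ⟨x', hx', hxx⟩ := bridge (Z := {z | ∃ b, T.pt b = z ∧ T.NI b ∧ rightHalf z ≠ x}) (y := x)
      fun s => by
        obtain ⟨y, hy, hys, hne, hlim⟩ := hcon s
        obtain ⟨b, hb, hNI⟩ := T.exists_NI hlim
        exact ⟨_, ⟨b, rfl, hNI, by rwa [hb]⟩, by rwa [hb]⟩
    obtain ⟨a, rfl⟩ : x' ∈ T.J :=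
      closure_minimal (by rintro _ ⟨b, rfl, -⟩; exact ⟨b, rfl⟩) T.J_closed hx'
    refine hxF ⟨_, T.mem_orb_of_limit fun N => ?_, hxx⟩
    obtain ⟨_, ⟨b, rfl, h1, h2⟩, h3⟩ := exists_agree_of_mem_closure hx' N
    exact ⟨b, h1, h3, hxx ▸ h2⟩
  · rintro _ ⟨_, ⟨U, k, hU, rfl⟩, rfl⟩ s
    -- a single marker far to the right
    obtain ⟨a, R, hpt, hlim⟩ : ∃ (a : ℤ → Idx) (R : ℤ → Bool),
        (∀ l, T.pt (a l) = fun i => joinMk (T.P U) R (i + l)) ∧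
        ∀ l, ∀ s : Finset ℕ, ∃ z ∈ rightHalf '' T.J,
          (∀ i ∈ s, z i = rightHalf (T.pt (a l)) i) ∧ z ≠ rightHalf (T.pt (a l)) := by
      cases U with
      | false => exact ⟨fun l => .nd 0 l, T.Q 0, fun l => rfl, T.limit_nd_zero⟩
      | true => exact ⟨fun l => .xa l, T.P false, fun l => rfl, T.limit_xa (hU rfl)⟩
    obtain ⟨l, hl⟩ := T.agree_far_right R U k ((s.sup id : ℕ) + 5)
    refine ⟨_, ⟨_, ⟨a l, rfl⟩, rfl⟩, fun i hi => ?_, fun h => ?_, hlim l⟩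
    · have := le_sup_id s i hi
      change T.pt (a l) i = _
      rw [hpt]
      exact hl i (by omega)
    · have hm : Mk (T.pt (a l)) (2 - l) := by
        rw [hpt, mk_shift, mk_joinMk (T.P_mk _)]; exact Or.inl (by ring)
      by_cases hl0 : 1 ≤ 2 - l
      · exact T.P_mk U _ ((mk_shift _ _ _).1 (mk_of_rightHalf h hl0 hm))
      · exfalso
        have e : ∀ i : ℤ, i ≤ 5 → T.pt (a l) i = T.P U (i + k) := fun i hi => by
          rw [hpt]; exact hl i (by omega)
        exact T.P_mk U _ ((mk_shift _ _ _).1 (hm.congr (e _ (by omega)) (e _ (by omega))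
          (e _ (by omega))))

end Sys

/-! ### The kneading sequence -/

/-- Concatenation of words that begin and end with long overlapping pieces of the sequence `p`. -/
lemma exists_concat (x : ℕ → ℤ → Bool) (L a : ℕ → ℕ) (p : ℤ → Bool)
    (h1 : ∀ k i, 0 ≤ i → i < a k → x k i = p i) (h2 : ∀ k i, 0 ≤ i → x k (L k + i) = p i)
    (haL : ∀ k, a k ≤ L k) (ha : ∀ k, 0 < a k) :
    ∃ (e : ℕ → Bool) (s : ℕ → ℕ), s 0 = 0 ∧ (∀ k, k ≤ s k) ∧
      (∀ n k0, s k0 ≤ n → ∃ k ≥ k0, ∃ i < L k, n = s k + i) ∧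
      ∀ k i : ℕ, i < L k + a (k + 1) → e (s k + i) = x k i := by
  let s : ℕ → ℕ := fun k => ∑ j ∈ Finset.range k, L j
  have hs : ∀ k, s (k + 1) = s k + L k := fun k => Finset.sum_range_succ _ _
  have hL : ∀ k, 0 < L k := fun k => (ha k).trans_le (haL k)
  have hmono : StrictMono s := strictMono_nat_of_lt_succ fun k => by
    rw [hs]; have := hL k; omega
  have hle : ∀ k, k ≤ s k := fun k => hmono.le_apply
  let g : ℕ → ℕ := fun n => Nat.findGreatest (fun k => s k ≤ n) n
  have hg : ∀ k i, i < L k → g (s k + i) = k := fun k i hi => by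
    refine le_antisymm ?_ ?_
    · have h0 : s (g (s k + i)) ≤ s k + i :=
        Nat.findGreatest_spec (P := fun k' => s k' ≤ s k + i) (m := 0) (Nat.zero_le _) (by simp [s])
      by_contra hlt
      have := hmono.monotone (show k + 1 ≤ g (s k + i) by omega)
      rw [hs] at this
      omega
    · exact Nat.le_findGreatest ((hle k).trans (Nat.le_add_right _ _)) (Nat.le_add_right _ _)
  refine ⟨fun n => x (g n) ((n : ℤ) - s (g n)), s, by simp [s], hle, fun n k0 h => ?_, ?_⟩
  · induction n with
    | zero =>
      have := hle k0
      exact ⟨0, by omega, 0, hL 0, by simp [s]⟩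
    | succ n ih =>
      rcases Nat.lt_or_ge n (s k0) with h' | h'
      · exact ⟨k0, le_rfl, 0, hL k0, by omega⟩
      · obtain ⟨k, hk, i, hi, hn⟩ := ih h'
        rcases Nat.lt_or_ge (i + 1) (L k) with h3 | h3
        · exact ⟨k, hk, i + 1, h3, by omega⟩
        · exact ⟨k + 1, by omega, 0, hL _, by rw [hs]; omega⟩
  · have hbase : ∀ k i : ℕ, i < L k → x (g (s k + i)) (((s k + i : ℕ) : ℤ) - s (g (s k + i))) = x k i :=
      fun k i hi => by
        rw [hg k i hi]; congr 1; push_cast; ring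
    intro k i hi
    rcases Nat.lt_or_ge i (L k) with h | h
    · exact hbase k i h
    · obtain ⟨m, rfl⟩ := Nat.exists_eq_add_of_le h
      simp only
      rw [← add_assoc, ← hs, hbase (k + 1) m (by have := haL (k + 1); omega),
        h1 _ _ (by omega) (by omega), Nat.cast_add, h2 _ _ (by omega)]

namespace Sys

variable (T : Sys)

/-- Right ends of nodes are eventually periodic, in phase. -/
lemma exists_len (v : ℕ) : ∃ ℓ : ℕ, ∀ i : ℤ, 0 ≤ i → T.Q v (ℓ + i) = T.P false i := by
  induction v using Nat.strong_induction_on with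
  | _ v ih =>
  rcases Nat.eq_zero_or_pos v with rfl | hv
  · exact ⟨0, fun i _ => by simp [T.Q_zero]⟩
  · obtain ⟨ℓ, hℓ⟩ := ih _ (T.par_lt v hv)
    refine ⟨v * T.D + 5 + ℓ, fun i hi => ?_⟩
    have hb : T.bl v = ((v * T.D : ℕ) : ℤ) := by simp [bl]
    rw [T.Q_right hv (by push_cast at hb ⊢; omega), ← hℓ i hi]
    congr 1; rw [hb]; push_cast; ring

lemma no_adjacent_mk (a : Idx) (j : ℤ) (h : Mk (T.pt a) j) : ¬ Mk (T.pt a) (j + 1) := by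
  intro h'
  have h4 : T.pt a (j - 2 + 4) = true := by
    rcases T.marker_struct a j h with ⟨V, r', -, hf⟩ | ⟨w, hw, -, -, hl⟩
    · rw [hf]; simp [joinMk]
    · rw [hl _ (by have := T.bl_nonneg w; omega)]; simp [joinMk]
  have := h'.2.2
  rw [show j + 1 + 1 = j - 2 + 4 by ring, h4] at this
  cases this

/-- A one-sided sequence whose limit set is the set of right halves of the symbolic space. -/
lemma exists_seq : ∃ e : ℕ → Bool, FourPlus e ∧
    (∀ N, ∃ n0, ∀ n ≥ n0, ∃ x ∈ T.J, ∀ i : ℕ, i < N → e (n + i) = x i) ∧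
    ∀ x ∈ T.J, ∀ N n0, ∃ n ≥ n0, ∀ i : ℕ, i < N → e (n + i) = x i := by
  choose ℓ hℓ using T.exists_len
  let v : ℕ → ℕ := fun k => (Nat.unpair k).1
  let a : ℕ → ℕ := fun k => (k + 4) * T.D
  have hbl : ∀ k, T.bl (k + 4) = a k := fun k => by simp [bl, a]
  have hak : ∀ k, k + 4 ≤ a k := fun k => Nat.le_mul_of_pos_right _ T.D_pos
  let L : ℕ → ℕ := fun k => a k + 5 + ℓ (v k) + a k
  let x : ℕ → ℤ → Bool := fun k => T.pt (.nd (v k) (-a k))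
  obtain ⟨e, s, hs0, hs, hcov, he⟩ := exists_concat x L a (T.P false) (fun k i h0 hi => by
      simp only [x, pt]
      rw [joinMk_left (by omega), ← T.P_bl false (k + 4), hbl]
      congr 1; ring) (fun k i hi => by
      simp only [x, pt, L]
      have h1 := Int.natCast_nonneg (a k)
      rw [joinMk_right (by push_cast; omega), ← T.P_bl false (k + 4) i, hbl,
        ← hℓ (v k) _ (by omega)]
      congr 1; push_cast; ring) (fun k => by simp only [L]; omega)
      (fun k => by have := hak k; omega)
  have hE1 : ∀ N k0, N ≤ k0 + 4 → ∀ n ≥ s k0, ∃ x ∈ T.J, ∀ i : ℕ, i < N → e (n + i) = x i := by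
    intro N k0 hN n hn
    obtain ⟨k, hk, i, hi, rfl⟩ := hcov n k0 hn
    refine ⟨_, T.J_shift (x k) ⟨_, rfl⟩ i, fun m hm => ?_⟩
    rw [add_assoc, he k (i + m) (by have := hak (k + 1); omega)]
    congr 1; push_cast; ring
  refine ⟨e, fun n => ?_, fun N => ⟨s N, hE1 N N (by omega)⟩, ?_⟩
  · obtain ⟨_, ⟨b, rfl⟩, hb⟩ := hE1 4 0 (by omega) n (by omega)
    by_contra! hcon
    simp only [ne_eq, Bool.not_eq_true] at hcon
    have hz : ∀ i : ℕ, i < 4 → T.pt b i = false := fun i hi => by rw [← hb i hi]; exact hcon i hi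
    exact T.no_adjacent_mk b 1
      ⟨by simpa using hz 0 (by omega), by simpa using hz 1 (by omega), by simpa using hz 2 (by omega)⟩
      ⟨by simpa using hz 1 (by omega), by simpa using hz 2 (by omega), by simpa using hz 3 (by omega)⟩
  · rintro _ ⟨b, rfl⟩ N n0
    obtain ⟨u, l, hul⟩ := T.dense_nd b N
    let k := Nat.pair u (l.natAbs + N + n0)
    have hk : l.natAbs + N + n0 ≤ k := Nat.right_le_pair _ _
    have hvk : v k = u := by simp [v, k, Nat.unpair_pair]
    have hak' := hak k
    have hl1 := neg_abs_le l
    have hl2 := le_abs_self l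
    have hsk := hs k
    obtain ⟨i, hi⟩ := Int.eq_ofNat_of_zero_le (show 0 ≤ l + a k by omega)
    refine ⟨s k + i, by omega, fun m hm => ?_⟩
    rw [add_assoc, he k (i + m) (by simp only [L]; omega), ← hul m (by omega) (by omega)]
    simp only [x, pt, hvk]
    congr 1; push_cast; omega

/-- Realisation of a symbolic system by a unimodal map. -/
lemma realize : ∃ (f : unitI → unitI) (c : unitI), Unimodal f c ∧ LEO f ∧
    HomeoOrd (omegaLimitSet f c) (Ordinal.omega0 ^ (2 : Ordinal) * ((T.orb T.flag).ncard : Ordinal)) ∧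
    HomeoOrd (Inhom f c)
      (Ordinal.omega0 ^ (T.β + 1) * ((T.orb (T.κ = T.β)).ncard : Ordinal)) := by
  obtain ⟨e, he, h1, h2⟩ := T.exists_seq
  obtain ⟨f, c, hf, hleo, ⟨φ⟩, ⟨ψ⟩⟩ := realization e he T.J T.J_closed T.J_shift h1 h2
  obtain ⟨φ'⟩ := T.homeo_J
  obtain ⟨ψ'⟩ := T.homeo_rightHalf
  exact ⟨f, c, hf, hleo, ⟨ψ.symm.trans ψ'⟩, ⟨φ.symm.trans φ'⟩⟩

end Sys

/-! ### Periodic words without markers -/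

section Words

/-- The `p`-periodic sequence that is `-` exactly at the positions congruent to `0, …, s - 1`
modulo `p`; the constant sequence `+` if `p = 1`. -/
def word (p s : ℕ) (i : ℤ) : Bool := decide (p = 1 ∨ (s : ℤ) ≤ i % p)

/-- The parameters for which `word p s` has least period `p` and contains no `- - -`. -/
def GoodWord (p s : ℕ) : Prop := 0 < p ∧ (p = 1 ∨ (1 ≤ s ∧ s ≤ 2 ∧ s < p))

lemma word_eq_false {p s : ℕ} {i : ℤ} : word p s i = false ↔ p ≠ 1 ∧ i % p < s := by
  simp [word]

lemma word_per (p s : ℕ) (k i : ℤ) : word p s (i + k * p) = word p s i := by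
  simp [word]

lemma add_one_emod {p i : ℤ} (hp : 0 < p) :
    ((i + 1) % p = i % p + 1 ∧ i % p + 1 < p) ∨ ((i + 1) % p = 0 ∧ i % p + 1 = p) := by
  have h1 := Int.emod_nonneg i hp.ne'
  have h2 := Int.emod_lt_of_pos i hp
  have e := Int.emod_add_mul_ediv i p
  rcases eq_or_ne (i % p + 1) p with h | h
  · right
    refine ⟨?_, h⟩
    rw [show i + 1 = p * (i / p + 1) by rw [mul_add]; linarith]
    simp
  · left
    refine ⟨?_, by omega⟩
    rw [show i + 1 = (i % p + 1) + p * (i / p) by linarith, Int.add_mul_emod_self_left]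
    exact Int.emod_eq_of_lt (by omega) (by omega)

lemma word_mk {p s : ℕ} (h : GoodWord p s) (i : ℤ) : ¬ Mk (word p s) i := by
  rintro ⟨h1, h2, h3⟩
  rw [word_eq_false] at h1 h2 h3
  obtain ⟨hp, h | h⟩ := h
  · exact h1.1 h
  have hp' : (0 : ℤ) < p := by exact_mod_cast hp
  have e1 := add_one_emod (i := i - 1) hp'
  have e2 := add_one_emod (i := i) hp'
  rw [sub_add_cancel] at e1
  have a1 := Int.emod_nonneg (i - 1) hp'.ne'
  have a2 := Int.emod_nonneg i hp'.ne'
  omega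

lemma word_dvd {p s : ℕ} (h : GoodWord p s) {k : ℤ} (hk : ∀ i, word p s (i + k) = word p s i) :
    (p : ℤ) ∣ k := by
  obtain ⟨hp, rfl | h⟩ := h
  · simp
  have hp' : (0 : ℤ) < p := by exact_mod_cast hp
  have hp1 : p ≠ 1 := by omega
  have h0 : word p s k = false := by
    rw [← zero_add k, hk, word_eq_false]
    exact ⟨hp1, by simp; omega⟩
  rw [word_eq_false] at h0
  have a0 := Int.emod_nonneg k hp'.ne'
  apply Int.dvd_of_emod_eq_zero
  by_contra hne
  -- here `s = 2`, and position `1` distinguishes the shift by a number congruent to `1`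
  have h1 : word p s (k + 1) = false := by
    rw [add_comm, hk, word_eq_false]
    refine ⟨hp1, ?_⟩
    rw [Int.emod_eq_of_lt (by omega) (by omega)]; omega
  rw [word_eq_false] at h1
  have e1 := add_one_emod (i := k) hp'
  omega

/-- Words with distinct parameters lie on distinct shift orbits. -/
lemma word_ne {p s q t : ℕ} (h : GoodWord p s) (h' : GoodWord q t)
    (hne : p ≠ q ∨ (2 < p ∧ s = 1 ∧ t = 2)) (k : ℤ) :
    ∃ i, word p s (i + k) ≠ word q t i := by
  by_contra! hcon
  have d1 : (p : ℤ) ∣ q := word_dvd h fun i => by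
    have e1 := hcon (i - k + 1 * q)
    have e2 := hcon (i - k)
    rw [word_per] at e1
    rw [show i - k + 1 * (q : ℤ) + k = i + q by ring] at e1
    rw [sub_add_cancel] at e2
    rw [e1, e2]
  have d2 : (q : ℤ) ∣ p := word_dvd h' fun i => by
    rw [← hcon, ← hcon, show i + p + k = i + k + 1 * (p : ℤ) by ring, word_per]
  have hpq : p = q := Nat.dvd_antisymm (by exact_mod_cast d1) (by exact_mod_cast d2)
  subst hpq
  obtain hne | ⟨h3, rfl, rfl⟩ := hne
  · exact hne rfl
  have hp' : (0 : ℤ) < p := by omega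
  have b0 : word p 1 (0 + k) = false := by
    rw [hcon, word_eq_false]; exact ⟨by omega, by simp⟩
  have b1 : word p 1 (1 + k) = false := by
    rw [hcon, word_eq_false]
    exact ⟨by omega, by rw [Int.emod_eq_of_lt (by omega) (by omega)]; norm_num⟩
  rw [word_eq_false] at b0 b1
  rw [zero_add] at b0
  rw [add_comm] at b1
  have e1 := add_one_emod (i := k) hp'
  have a0 := Int.emod_nonneg k hp'.ne'
  have a1 := Int.emod_nonneg (k + 1) hp'.ne'
  omega

lemma ncard_word_orbit {p s : ℕ} (h : GoodWord p s) :
    {x : ℤ → Bool | ∃ k, (fun i => word p s (i + k)) = x}.ncard = p := by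
  have hp' : (0 : ℤ) < p := by exact_mod_cast h.1
  have e : {x : ℤ → Bool | ∃ k, (fun i => word p s (i + k)) = x}
      = (fun k : ℕ => fun i : ℤ => word p s (i + k)) '' (Finset.range p : Set ℕ) := by
    ext x
    constructor
    · rintro ⟨k, rfl⟩
      have a1 := Int.emod_nonneg k hp'.ne'
      have a2 := Int.emod_lt_of_pos k hp'
      refine ⟨(k % p).toNat, by simp; omega, ?_⟩
      funext i
      dsimp only
      rw [Int.toNat_of_nonneg a1, ← word_per p s (k / p)]
      congr 1
      have := Int.emod_add_mul_ediv k p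
      linarith
    · rintro ⟨k, -, rfl⟩
      exact ⟨k, rfl⟩
  rw [e, Set.InjOn.ncard_image, Set.ncard_coe_finset, Finset.card_range]
  intro k hk l hl hkl
  simp only [Finset.coe_range, Set.mem_Iio] at hk hl
  have hd : (p : ℤ) ∣ (k - l : ℤ) := word_dvd h fun i => by
    have := congrFun hkl (i - l)
    simp only [sub_add_cancel] at this
    rw [← this]; congr 1; ring
  obtain ⟨r, hr⟩ := hd
  have : r = 0 := by
    rcases lt_trichotomy r 0 with h | h | h
    · nlinarith
    · exact h
    · nlinarith
  subst this
  omega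

lemma Sys.ncard_orb (T : Sys) (c : Prop) {p s q t : ℕ} (h : GoodWord p s) (h' : GoodWord q t)
    (hA : T.P false = word p s) (hX : T.P true = word q t) :
    (c → (T.orb c).ncard = p + q) ∧ (¬ c → (T.orb c).ncard = p) := by
  have e1 := ncard_word_orbit h
  have e2 := ncard_word_orbit h'
  constructor
  · intro hc
    have e : T.orb c = {x : ℤ → Bool | ∃ k, (fun i => word p s (i + k)) = x}
        ∪ {x : ℤ → Bool | ∃ k, (fun i => word q t (i + k)) = x} := by
      ext x
      simp only [Sys.orb, Sys.pt, Set.mem_ofPred_eq, Set.mem_union, Bool.exists_bool, hA, hX, hc]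
      simp
    have hd : Disjoint {x : ℤ → Bool | ∃ k, (fun i => word p s (i + k)) = x}
        {x : ℤ → Bool | ∃ k, (fun i => word q t (i + k)) = x} := by
      rw [Set.disjoint_left]
      rintro _ ⟨k, rfl⟩ ⟨l, hl⟩
      obtain ⟨i, hi⟩ := T.P_ne (k - l)
      rw [hA, hX] at hi
      have := congrFun hl (i - l)
      simp only [sub_add_cancel] at this
      rw [this] at hi
      exact hi (by congr 1; ring)
    rw [e, Set.ncard_union_eq hd (Set.finite_of_ncard_pos (by rw [e1]; exact h.1))
      (Set.finite_of_ncard_pos (by rw [e2]; exact h'.1)), e1, e2]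
  · intro hc
    have e : T.orb c = {x : ℤ → Bool | ∃ k, (fun i => word p s (i + k)) = x} := by
      ext x
      simp only [Sys.orb, Sys.pt, Set.mem_ofPred_eq, Bool.exists_bool, hA, hc]
      simp
    rw [e, e1]

end Words

/-! ### The tree -/

section Tree

universe u

open Classical in
/-- The parent, orbit and rank of the node `v > 0`, given the orbit and the rank of its candidate
parent `(unpair v).1`. Writing `v = ⟨w, j, t⟩`, odd `t` encodes a child of `w` carrying `A` with
rank `g j`; even `t` encodes a node carrying `X`: a child of the root with rank `g j` if `flag`
fails, and the single such child of `w`, a leaf, if it holds. Codes that are not admissible become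
leaves attached to the root. -/
def treeStep (κ : Ordinal.{u}) (flag : Prop) (g : ℕ → Ordinal.{u}) (v : ℕ) (d : Bool × Ordinal.{u}) :
    ℕ × Bool × Ordinal.{u} :=
  if Odd v.unpair.2.unpair.2 ∧ g v.unpair.2.unpair.1 < d.2 then
    (v.unpair.1, false, g v.unpair.2.unpair.1)
  else if ¬ flag ∧ v.unpair.1 = 0 ∧ Even v.unpair.2.unpair.2 ∧ g v.unpair.2.unpair.1 < κ then
    (0, true, g v.unpair.2.unpair.1)
  else if flag ∧ 0 < v.unpair.1 ∧ v.unpair.2 = 0 ∧ d.1 = false ∧ 0 < d.2 then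
    (v.unpair.1, true, 0)
  else (0, false, 0)

/-- The parent, orbit and rank of every node; the root `0` carries `A` and has rank `β`. -/
def treeNode (β κ : Ordinal.{u}) (flag : Prop) (g : ℕ → Ordinal.{u}) (v : ℕ) :
    ℕ × Bool × Ordinal.{u} :=
  if _h : 0 < v then treeStep κ flag g v (treeNode β κ flag g v.unpair.1).2 else (0, false, β)
termination_by v
decreasing_by exact Nat.unpair_lt _h

lemma exists_tree {β κ : Ordinal.{u}} {flag : Prop} (hκ : 0 < κ) (hκβ : κ ≤ β)
    (hβ : β.card ≤ Cardinal.aleph0) (hflag : flag → κ = 1 ∧ 1 < β) :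
    ∃ (par : ℕ → ℕ) (ty : ℕ → Bool) (ρ : ℕ → Ordinal.{u}),
      (∀ v, 0 < v → par v < v) ∧ (∀ v, 0 < v → ρ v < ρ (par v)) ∧ ρ 0 = β ∧ ty 0 = false ∧
      (∀ v α, α < ρ v → ∀ K, ∃ w > K, par w = v ∧ ty w = false ∧ ρ w = α) ∧
      (∀ v, ty v = true → ty (par v) = false) ∧
      (∀ v, 0 < v → ∃ K, ∀ w, par w = v → ty w = true → w ≤ K) ∧
      (∀ v, ty v = true → ρ v < κ) ∧
      (∀ α < κ, ∀ K, ∃ v > K, ty v = true ∧ ρ v = α ∧ (flag → K < par v) ∧ (¬ flag → par v = 0)) ∧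
      (¬ flag → ∀ v, ty v = true → par v = 0) := by
  have hβ0 : 0 < β := hκ.trans_le hκβ
  obtain ⟨g, hg, hgs⟩ : ∃ g : ℕ → Ordinal.{u}, (∀ j, g j < β) ∧ ∀ α < β, ∃ j, g j = α := by
    have hc : Countable (Set.Iio β) := by
      rw [← Cardinal.mk_le_aleph0_iff, Cardinal.mk_Iio_ordinal]
      exact Cardinal.lift_le_aleph0.2 hβ
    have : Nonempty (Set.Iio β) := ⟨⟨0, hβ0⟩⟩
    obtain ⟨g, hg⟩ := exists_surjective_nat (Set.Iio β)
    refine ⟨fun j => g j, fun j => (g j).2, fun α hα => ?_⟩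
    obtain ⟨j, hj⟩ := hg ⟨α, hα⟩
    exact ⟨j, congrArg Subtype.val hj⟩
  obtain ⟨par, ty, ρ, hN⟩ : ∃ (par : ℕ → ℕ) (ty : ℕ → Bool) (ρ : ℕ → Ordinal.{u}),
      ∀ v, treeNode β κ flag g v = (par v, ty v, ρ v) := ⟨_, _, _, fun _ => rfl⟩
  have h0 : (par 0, ty 0, ρ 0) = (0, false, β) := by rw [← hN, treeNode]; simp
  simp only [Prod.mk.injEq] at h0
  obtain ⟨-, ht0, hρ0⟩ := h0
  have hs : ∀ v, 0 < v → (par v, ty v, ρ v) =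
      treeStep κ flag g v (ty v.unpair.1, ρ v.unpair.1) := by
    intro v hv
    rw [← hN, treeNode, dif_pos hv, hN]
  -- the four kinds of nodes
  have hcase : ∀ v, 0 < v →
      (par v = v.unpair.1 ∧ ty v = false ∧ ρ v < ρ v.unpair.1) ∨
      (¬ flag ∧ par v = 0 ∧ ty v = true ∧ ρ v < κ) ∨
      (flag ∧ 0 < v.unpair.1 ∧ v.unpair.2 = 0 ∧ ty v.unpair.1 = false ∧
        0 < ρ v.unpair.1 ∧ par v = v.unpair.1 ∧ ty v = true ∧ ρ v = 0) ∨
      (par v = 0 ∧ ty v = false ∧ ρ v = 0) := by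
    intro v hv
    have h := hs v hv
    unfold treeStep at h
    split_ifs at h with h1 h2 h3 <;> simp only [Prod.mk.injEq] at h <;> obtain ⟨e1, e2, e3⟩ := h
    · exact Or.inl ⟨e1, e2, e3 ▸ h1.2⟩
    · exact Or.inr (Or.inl ⟨h2.1, e1, e2, e3 ▸ h2.2.2.2⟩)
    · exact Or.inr (Or.inr (Or.inl
        ⟨h3.1, h3.2.1, h3.2.2.1, h3.2.2.2.1, h3.2.2.2.2, e1, e2, e3⟩))
    · exact Or.inr (Or.inr (Or.inr ⟨e1, e2, e3⟩))
  have hplt : ∀ v, 0 < v → par v < v := by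
    intro v hv
    have := Nat.unpair_lt hv
    rcases hcase v hv with h | h | h | h <;> omega
  have hρlt : ∀ v, 0 < v → ρ v < ρ (par v) := by
    intro v hv
    rcases hcase v hv with ⟨e, -, h⟩ | ⟨-, e, -, h⟩ | ⟨-, -, -, -, h, e, -, h'⟩ | ⟨e, -, h⟩
    · rwa [e]
    · rw [e, hρ0]; exact h.trans_le hκβ
    · rwa [e, h']
    · rwa [e, h, hρ0]
  have hρle : ∀ v, ρ v ≤ β := by
    intro v
    induction v using Nat.strong_induction_on with
    | _ v ih =>
      rcases Nat.eq_zero_or_pos v with rfl | hv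
      · rw [hρ0]
      · exact (hρlt v hv).le.trans (ih _ (hplt v hv))
  have hX : ∀ v, ty v = true →
      (¬ flag ∧ par v = 0 ∧ ρ v < κ) ∨
      (flag ∧ v.unpair.2 = 0 ∧ ty v.unpair.1 = false ∧ par v = v.unpair.1 ∧ ρ v = 0) := by
    intro v ht
    rcases Nat.eq_zero_or_pos v with rfl | hv
    · simp [ht0] at ht
    rcases hcase v hv with h | h | h | h
    · simp [h.2.1] at ht
    · exact Or.inl ⟨h.1, h.2.1, h.2.2.2⟩
    · exact Or.inr ⟨h.1, h.2.2.1, h.2.2.2.1, h.2.2.2.2.2.1, h.2.2.2.2.2.2.2⟩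
    · simp [h.2.1] at ht
  have hchild : ∀ v α, α < ρ v → ∀ K, ∃ w > K, par w = v ∧ ty w = false ∧ ρ w = α := by
    intro v α hα K
    obtain ⟨j, rfl⟩ := hgs α (hα.trans_le (hρle v))
    have hw : 2 * K + 1 ≤ Nat.pair v (Nat.pair j (2 * K + 1)) :=
      (Nat.right_le_pair _ _).trans (Nat.right_le_pair _ _)
    have e := hs (Nat.pair v (Nat.pair j (2 * K + 1))) (by omega)
    unfold treeStep at e
    rw [if_pos (by simp only [Nat.unpair_pair]; exact ⟨⟨K, rfl⟩, hα⟩)] at e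
    simp only [Prod.mk.injEq, Nat.unpair_pair] at e
    exact ⟨_, show K < Nat.pair v (Nat.pair j (2 * K + 1)) by omega, e⟩
  refine ⟨par, ty, ρ, hplt, hρlt, hρ0, ht0, hchild, ?_, ?_, ?_, ?_, ?_⟩
  · intro v hv
    rcases hX v hv with ⟨-, e, -⟩ | ⟨-, -, h, e, -⟩
    · rw [e, ht0]
    · rw [e, h]
  · intro v hv
    refine ⟨Nat.pair v 0, fun w hpw hw => ?_⟩
    rcases hX w hw with ⟨-, e, -⟩ | ⟨-, h, -, e, -⟩
    · omega
    · rw [← Nat.pair_unpair w, h, ← e, hpw]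
  · intro v hv
    rcases hX v hv with ⟨-, -, h⟩ | ⟨-, -, -, -, h⟩
    · exact h
    · rwa [h]
  · intro α hα K
    by_cases hf : flag
    · obtain ⟨hκ1, h1⟩ := hflag hf
      obtain rfl : α = 0 := Order.lt_one_iff.1 (hκ1 ▸ hα)
      obtain ⟨v, hvK, -, hvt, hvρ⟩ := hchild 0 1 (by rwa [hρ0]) K
      have hw : v ≤ Nat.pair v 0 := Nat.left_le_pair _ _
      have e := hs (Nat.pair v 0) (by omega)
      have hz : Nat.unpair 0 = (0, 0) := by decide
      unfold treeStep at e
      rw [if_neg (by simp [Nat.unpair_pair, hz]), if_neg (by tauto), if_pos (by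
        simp only [Nat.unpair_pair]
        exact ⟨hf, by omega, trivial, hvt, by rw [hvρ]; exact one_pos⟩)] at e
      simp only [Prod.mk.injEq, Nat.unpair_pair] at e
      exact ⟨_, show K < Nat.pair v 0 by omega, e.2.1, e.2.2, fun _ => by rw [e.1]; exact hvK,
        fun h => absurd hf h⟩
    · obtain ⟨j, rfl⟩ := hgs α (hα.trans_le hκβ)
      have hw : 2 * K + 2 ≤ Nat.pair 0 (Nat.pair j (2 * K + 2)) :=
        (Nat.right_le_pair _ _).trans (Nat.right_le_pair _ _)
      have hev : Even (2 * K + 2) := ⟨K + 1, by ring⟩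
      have e := hs (Nat.pair 0 (Nat.pair j (2 * K + 2))) (by omega)
      unfold treeStep at e
      rw [if_neg (by
          simp only [Nat.unpair_pair]
          exact fun h => Nat.not_odd_iff_even.2 hev h.1), if_pos (by
        simp only [Nat.unpair_pair]
        exact ⟨hf, trivial, hev, hα⟩)] at e
      simp only [Prod.mk.injEq, Nat.unpair_pair] at e
      exact ⟨_, show K < Nat.pair 0 (Nat.pair j (2 * K + 2)) by omega, e.2.1, e.2.2,
        fun h => absurd h hf, fun _ => e.1⟩
  · intro hf v hv
    rcases hX v hv with h | h
    · exact h.2.1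
    · exact absurd h.1 hf

end Tree

/-! ### Choice of the orbits -/

/-- The map obtained from an orbit `A` of length `p`, an orbit `X` of length `q` and the tree with
parameters `β`, `κ`, `flag`: `A` counts in both spaces, `X` counts in `ω(c)` if `flag` holds and in
the set of inhomogeneities if `κ = β`. -/
lemma exists_map.{u, v} {β κ : Ordinal.{u}} {flag : Prop} (hκ : 0 < κ) (hκβ : κ ≤ β)
    (hβ : β.card ≤ Cardinal.aleph0) (hflag : flag → κ = 1 ∧ 1 < β) {p s q t n m : ℕ}
    (h : GoodWord p s) (h' : GoodWord q t) (hne : p ≠ q ∨ (2 < p ∧ s = 1 ∧ t = 2))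
    (hn : (flag → p + q = n) ∧ (¬ flag → p = n)) (hm : (κ = β → p + q = m) ∧ (κ ≠ β → p = m)) :
    ∃ (f : unitI → unitI) (c : unitI), Unimodal f c ∧ LEO f ∧
      HomeoOrd (omegaLimitSet f c) (Ordinal.omega0.{v} ^ (2 : Ordinal.{v}) * n) ∧
      HomeoOrd (Inhom f c) (Ordinal.omega0.{u} ^ (β + 1) * m) := by
  obtain ⟨par, ty, ρ, h1, h2, h3, h4, h5, h6, h7, h8, h9, h10⟩ := exists_tree hκ hκβ hβ hflag
  let T : Sys.{u} :=
    { D := p * q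
      D_pos := Nat.mul_pos h.1 h'.1
      P := fun U => if U then word q t else word p s
      P_per := fun U i => by
        cases U
        · have := word_per p s q i
          simp only [Bool.false_eq_true, if_false]
          rw [← this]; congr 1; push_cast; ring
        · have := word_per q t p i
          simp only [if_true]
          rw [← this]; congr 1
      P_mk := fun U i => by
        cases U
        · simpa using word_mk h i
        · simpa using word_mk h' i
      P_ne := fun k => by simpa using word_ne h h' hne k
      β := β
      κ := κ
      κ_le := hκβ
      κ_pos := hκ
      par := par
      ty := ty
      ρ := ρ
      par_lt := h1
      ρ_lt := h2
      ρ_zero := h3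
      ty_zero := h4
      child := h5
      ty_par := h6
      fin_child := h7
      ρ_ty := h8
      flag := flag
      x_node := h9
      no_flag := h10 }
  have hA : T.P false = word p s := by simp [T]
  have hX : T.P true = word q t := by simp [T]
  have e1 : (T.orb T.flag).ncard = n := by
    obtain ⟨a, b⟩ := T.ncard_orb flag h h' hA hX
    by_cases hf : flag
    · exact (a hf).trans (hn.1 hf)
    · exact (b hf).trans (hn.2 hf)
  have e2 : (T.orb (T.κ = T.β)).ncard = m := by
    obtain ⟨a, b⟩ := T.ncard_orb (κ = β) h h' hA hX
    by_cases hf : κ = β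
    · exact (a hf).trans (hm.1 hf)
    · exact (b hf).trans (hm.2 hf)
  have := T.realize
  rwa [e1, e2] at this

/-- Two distinct orbits of prescribed lengths exist, except for two fixed points or two orbits of
length two. -/
lemma exists_words {p q : ℕ} (hp : 0 < p) (hq : 0 < q) (h : p = q → 2 < p) :
    ∃ s t, GoodWord p s ∧ GoodWord q t ∧ (p ≠ q ∨ (2 < p ∧ s = 1 ∧ t = 2)) := by
  rcases eq_or_ne p q with rfl | hpq
  · have := h rfl
    exact ⟨1, 2, ⟨hp, Or.inr ⟨le_rfl, by norm_num, by omega⟩⟩,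
      ⟨hp, Or.inr ⟨by norm_num, le_rfl, by omega⟩⟩, Or.inr ⟨this, rfl, rfl⟩⟩
  · exact ⟨1, 1, ⟨hp, by omega⟩, ⟨hq, by omega⟩, Or.inl hpq⟩


theorem stmt5 (β : Ordinal) (hβ : 1 < β) (hβc : β.card ≤ Cardinal.aleph0)
    (n m : ℕ) (hn : 0 < n) (hm : 0 < m)
    (h : (n = 1 ∧ m ≠ 2) ∨ (n = 2 ∧ 2 ≤ m ∧ m ≠ 4) ∨ (n = 4 ∧ m ≠ 2) ∨
         (n = 3 ∨ 4 < n)) :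
    ∃ (f : unitI → unitI) (c : unitI),
      Unimodal f c ∧ LEO f ∧
      HomeoOrd (omegaLimitSet f c) (Ordinal.omega0 ^ (2 : Ordinal) * n) ∧
      HomeoOrd (Inhom f c) (Ordinal.omega0 ^ (β + 1) * m) := by
  have hβ0 : 0 < β := zero_lt_one.trans hβ
  rcases lt_trichotomy n m with hlt | rfl | hlt
  · -- `X` has rank `β` in the set of inhomogeneities only
    obtain ⟨s, t, h1, h2, h3⟩ := exists_words (p := n) (q := m - n) hn (by omega) (by omega)
    exact exists_map (flag := False) (κ := β) hβ0 le_rfl hβc (by simp) h1 h2 h3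
      ⟨by simp, by simp⟩ ⟨fun _ => by omega, fun hne => absurd rfl hne⟩
  · -- `X` counts in neither space
    obtain ⟨s, t, h1, h2, h3⟩ := exists_words (p := n) (q := n + 1) hn (by omega) (by omega)
    exact exists_map (flag := False) (κ := 1) one_pos hβ.le hβc (by simp) h1 h2 h3
      ⟨by simp, by simp⟩ ⟨fun he => absurd he hβ.ne, fun _ => rfl⟩
  · -- `X` counts in `ω(c)` only
    obtain ⟨s, t, h1, h2, h3⟩ := exists_words (p := m) (q := n - m) hm (by omega) (by omega)
    exact exists_map (flag := True) (κ := 1) one_pos hβ.le hβc (fun _ => ⟨rfl, hβ⟩) h1 h2 h3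
      ⟨fun _ => by omega, by simp⟩ ⟨fun he => absurd he hβ.ne, fun _ => rfl⟩

end
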